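/- Let h : ℝ → [0,∞] be 2π-periodic with h(z) = |z|^{−1/2} for z ∈ (−π,π] \ {0}, and let the input be a centered stationary Gaussian process {X_{j,k}} with absolutely continuous spectral measure of density f(x,y) := (2π)^{−1} h(x+y) on [−π,π]². Then μ_f = WSL(8√π), the Wigner semicircle law with variance 8√π. In particular, ∫_{[−π,π]²} f(x,y)² dx dy = ∞, showing that finiteness of ‖f‖_m is not necessary for finiteness of the (2m)-th moment of μ_f. -/

import Mathlib

open MeasureTheory ProbabilityTheory Filter Real

noncomputable section

/-- The square `(-π, π]²` on which the spectral measure lives. -/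
def specBox : Set (ℝ × ℝ) := Set.Ioc (-π) π ×ˢ Set.Ioc (-π) π

/-- `(1/N) ∑_j g(λ_j(A))`, the integral of `g` against the empirical spectral
distribution of a symmetric `N × N` real matrix `A` (junk value `0` if `A` is
not symmetric). -/
def esdEval {N : ℕ} (A : Matrix (Fin N) (Fin N) ℝ) (g : ℝ → ℝ) : ℝ :=
  if hA : A.IsHermitian then (N : ℝ)⁻¹ * ∑ j, g (hA.eigenvalues j) else 0

/-- The (random) empirical spectral distributions of `A N` converge weakly in
probability to the probability measure `μ`: for every bounded continuous `g`,
`∫ g d(ESD(A N)) → ∫ g dμ` in probability. -/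
def ESDTendstoInProb {Ω : Type*} [MeasurableSpace Ω] (P : Measure Ω)
    (A : (N : ℕ) → Ω → Matrix (Fin N) (Fin N) ℝ) (μ : Measure ℝ) : Prop :=
  ∀ g : ℝ → ℝ, Continuous g → (∃ C, ∀ x, |g x| ≤ C) →
    ∀ ε > 0, Tendsto (fun N => P {ω | ε ≤ |esdEval (A N ω) g - ∫ x, g x ∂μ|})
      atTop (nhds 0)

/-- The symmetric matrix `W_N/√N`, where `W_N(i,j) = X_{i,j} + X_{j,i}`,
`1 ≤ i,j ≤ N`. -/
def scaledW {Ω : Type*} (X : ℤ → ℤ → Ω → ℝ) (N : ℕ) (ω : Ω) :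
    Matrix (Fin N) (Fin N) ℝ :=
  fun i j => (Real.sqrt N)⁻¹ *
    (X ((i : ℕ) + 1) ((j : ℕ) + 1) ω + X ((j : ℕ) + 1) ((i : ℕ) + 1) ω)

/-- A centered stationary Gaussian process indexed by `ℤ²` with positive
variance: every finite real linear combination is a centered Gaussian random
variable, and second moments are shift invariant. -/
structure StatGauss {Ω : Type*} [MeasurableSpace Ω] (P : Measure Ω)
    (X : ℤ → ℤ → Ω → ℝ) : Prop where
  meas : ∀ j k, Measurable (X j k)
  gauss : ∀ c : (ℤ × ℤ) →₀ ℝ, ∃ v : NNReal,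
    P.map (fun ω => ∑ p ∈ c.support, c p * X p.1 p.2 ω) = gaussianReal 0 v
  var_pos : 0 < ∫ ω, (X 0 0 ω) ^ 2 ∂P
  stat : ∀ j k u v : ℤ,
    ∫ ω, X j k ω * X (j + u) (k + v) ω ∂P = ∫ ω, X 0 0 ω * X u v ω ∂P

/-- The process `X` has absolutely continuous spectral measure with density
`h` on `(-π,π]²`: `E[X_{0,0} X_{u,v}] = ∫∫ e^{i(ux+vy)} h(x,y) dx dy`. -/
def HasSpecDensity {Ω : Type*} [MeasurableSpace Ω] (P : Measure Ω)
    (X : ℤ → ℤ → Ω → ℝ) (h : ℝ × ℝ → ℝ) : Prop :=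
  ∀ u v : ℤ,
    (∫ q in specBox,
        Complex.exp (Complex.I * ((u * q.1 + v * q.2 : ℝ) : ℂ)) * ((h q : ℝ) : ℂ))
      = ((∫ ω, X 0 0 ω * X u v ω ∂P : ℝ) : ℂ)

/-- The Wigner semicircle law with variance `γ`: the measure on `ℝ` with
density `(2π√γ)⁻¹ √(4 - x²/γ) 1(|x| ≤ 2√γ)`. -/
def WSL (γ : ℝ) : Measure ℝ :=
  volume.withDensity fun x => ENNReal.ofReal
    (if |x| ≤ 2 * Real.sqrt γ then
      (2 * π * Real.sqrt γ)⁻¹ * Real.sqrt (4 - x ^ 2 / γ) else 0)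


lemma gauss_ibp1 (v : NNReal) (f f' : ℝ → ℂ) (C : ℝ) (hf : ∀ x, HasDerivAt f (f' x) x)
    (hb : ∀ x, ‖f x‖ ≤ C) (hb' : ∀ x, ‖f' x‖ ≤ C) (hc' : Continuous f') :
    ∫ x, (x : ℂ) * f x ∂(gaussianReal 0 v) = v * ∫ x, f' x ∂(gaussianReal 0 v) := by
  by_cases hv : v = 0
  · subst hv
    simp [gaussianReal_zero_var]
  have hvr : (v : ℝ) ≠ 0 := by exact_mod_cast hv
  have hvp : (0 : ℝ) < v := lt_of_le_of_ne v.2 (Ne.symm hvr)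
  rw [integral_gaussianReal_eq_integral_smul hv, integral_gaussianReal_eq_integral_smul hv]
  have hcf : Continuous f := continuous_iff_continuousAt.2 fun x => (hf x).continuousAt
  set p : ℝ → ℝ := gaussianPDFReal 0 v with hp
  have hpd : ∀ x, HasDerivAt p (-(x / v) * p x) x := by
    intro x
    have h1 : HasDerivAt (fun x : ℝ => -(x - 0) ^ 2 / (2 * (v : ℝ))) (-(x / v)) x := by
      have := ((((hasDerivAt_id x).sub_const 0).pow 2).neg).div_const (2 * (v : ℝ))
      refine this.congr_deriv ?_
      simp
      field_simp
    have h2 := (h1.exp).const_mul (√(2 * π * v))⁻¹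
    refine (h2.congr_deriv ?_)
    simp only [hp, gaussianPDFReal]
    ring
  have hpdc : ∀ x, HasDerivAt (fun x => (p x : ℂ)) ((-(x / v) * p x : ℝ) : ℂ) x :=
    fun x => (hpd x).ofReal_comp
  have hpi : Integrable p := integrable_gaussianPDFReal 0 v
  have hxp : Integrable (fun x => x * p x) := by
    have h3 := (integrable_mul_exp_neg_mul_sq (b := (2 * (v : ℝ))⁻¹) (by positivity)).const_mul
      (√(2 * π * v))⁻¹
    refine h3.congr (Eventually.of_forall fun x => ?_)
    simp only [hp, gaussianPDFReal]
    have : -(x - 0) ^ 2 / (2 * (v : ℝ)) = -(2 * (v : ℝ))⁻¹ * x ^ 2 := by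
      rw [sub_zero]; field_simp
    rw [this]; ring
  have hpic : Integrable (fun x => (p x : ℂ)) := hpi.ofReal
  have hi1 : Integrable (f * fun x => ((-(x / v) * p x : ℝ) : ℂ)) := by
    have : Integrable (fun x => ((-(x / v) * p x : ℝ) : ℂ)) := by
      have := (hxp.const_mul (-(v : ℝ)⁻¹)).ofReal (𝕜 := ℂ)
      refine this.congr (Eventually.of_forall fun x => ?_)
      change ((-(v : ℝ)⁻¹ * (x * p x) : ℝ) : ℂ) = _
      congr 1
      rw [div_eq_mul_inv]
      ring
    exact this.bdd_mul hcf.aestronglyMeasurable (Eventually.of_forall hb)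
  have hi2 : Integrable (f' * fun x => (p x : ℂ)) :=
    hpic.bdd_mul hc'.aestronglyMeasurable (Eventually.of_forall hb')
  have hi3 : Integrable (f * fun x => (p x : ℂ)) :=
    hpic.bdd_mul hcf.aestronglyMeasurable (Eventually.of_forall hb)
  have key := integral_mul_deriv_eq_deriv_mul_of_integrable (fun x _ => hf x)
    (fun x _ => hpdc x) hi1 hi2 hi3
  have e1 : ∫ x, p x • ((x : ℂ) * f x) = -(v : ℂ) * ∫ x, f x * ((-(x / v) * p x : ℝ) : ℂ) := by
    rw [← integral_const_mul]
    congr 1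
    ext x
    have : (v : ℂ) ≠ 0 := by exact_mod_cast hvr
    simp only [Complex.real_smul]
    push_cast
    field_simp
  rw [e1, key]
  rw [neg_mul_neg]
  congr 1
  congr 1
  ext x
  simp [Complex.real_smul, mul_comm]

lemma gauss_ibp {Ω : Type} [MeasurableSpace Ω] (P : Measure Ω)
    [IsProbabilityMeasure P] {ι : Type} [Fintype ι] (Y : ι → Ω → ℝ)
    (hY : HasGaussianLaw (fun ω i => Y i ω) P) (hmean : ∀ i, ∫ ω, Y i ω ∂P = 0)
    (hmeas : ∀ i, Measurable (Y i))
    (a : ι) (F F' : (ι → ℝ) → ℂ) (C : ℝ)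
    (hFc : Continuous F) (hFc' : Continuous F') (hb : ∀ y, ‖F y‖ ≤ C) (hb' : ∀ y, ‖F' y‖ ≤ C)
    (hd : ∀ y, HasDerivAt (fun t : ℝ => F (y + t • fun b => ∫ ω, Y a ω * Y b ω ∂P)) (F' y) 0) :
    ∫ ω, (Y a ω : ℂ) * F (fun i => Y i ω) ∂P = ∫ ω, F' (fun i => Y i ω) ∂P := by
  set k : ι → ℝ := fun b => ∫ ω, Y a ω * Y b ω ∂P with hk
  have hL2 : ∀ i, MemLp (Y i) 2 P := fun i => (hY.eval i).memLp_two
  have hv0 : 0 ≤ k a := integral_nonneg fun ω => mul_self_nonneg _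
  rcases hv0.eq_or_lt with hv | hv
  · have hYa : Y a =ᵐ[P] 0 := by
      have := (integral_eq_zero_iff_of_nonneg (fun ω => mul_self_nonneg (Y a ω))
        ((hL2 a).integrable_mul (hL2 a))).1 hv.symm
      filter_upwards [this] with ω hω
      simpa using hω
    have hk0 : k = 0 := by
      ext b
      rw [hk]
      apply integral_eq_zero_of_ae
      filter_upwards [hYa] with ω hω
      simp [hω]
    have hF'0 : ∀ y, F' y = 0 := by
      intro y
      have := hd y
      rw [hk0] at this
      simp only [smul_zero, add_zero] at this
      exact this.unique (hasDerivAt_const _ _)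
    simp only [hF'0, integral_zero]
    apply integral_eq_zero_of_ae
    filter_upwards [hYa] with ω hω
    simp [hω]
  · set R : ι → Ω → ℝ := fun b ω => Y b ω - k b / k a * Y a ω with hR
    -- joint law
    let L : (ι → ℝ) →L[ℝ] (Unit → ℝ) × (ι → ℝ) :=
      (ContinuousLinearMap.pi fun _ => ContinuousLinearMap.proj a).prod
        (ContinuousLinearMap.pi fun b => ContinuousLinearMap.proj b -
          (k b / k a) • ContinuousLinearMap.proj a)
    have hLG : HasGaussianLaw (fun ω => ((fun _ : Unit => Y a ω), fun b => R b ω)) P := by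
      have := hY.map_fun L
      exact this
    have hind := HasGaussianLaw.indepFun_of_covariance_eval (X := fun _ : Unit => Y a) (Y := R)
      hLG (by
        intro _ b
        have hRL : MemLp (R b) 2 P := (hL2 b).sub ((hL2 a).const_mul _)
        rw [covariance_eq_sub (hL2 a) hRL, hmean, zero_mul, sub_zero]
        have : ∀ ω, (Y a * R b) ω = Y a ω * Y b ω - k b / k a * (Y a ω * Y a ω) := by
          intro ω; simp [hR]; ring
        simp_rw [this]
        have j1 : Integrable (fun ω => Y a ω * Y b ω) P := (hL2 a).integrable_mul (hL2 b)
        have j2 : Integrable (fun ω => Y a ω * Y a ω) P := (hL2 a).integrable_mul (hL2 a)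
        rw [integral_sub j1 (j2.const_mul _), integral_const_mul]
        change k b - k b / k a * k a = 0
        field_simp
        ring)
    have hind2 : IndepFun (Y a) (fun ω b => R b ω) P := by
      have hm1 : Measurable (fun f : Unit → ℝ => f ()) := measurable_pi_apply _
      have := hind.comp hm1 measurable_id
      exact this
    have hRm : Measurable (fun ω b => R b ω) := by
      refine measurable_pi_lambda _ fun b => ?_
      exact (hmeas b).sub ((hmeas a).const_mul _)
    have hmap := (indepFun_iff_map_prod_eq_prod_map_map (hmeas a).aemeasurable
      hRm.aemeasurable).1 hind2
    have hlaw : P.map (Y a) = gaussianReal 0 (k a).toNNReal := by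
      rw [(hY.eval a).map_eq_gaussianReal, hmean, variance_of_integral_eq_zero
        (hmeas a).aemeasurable (hmean a)]
      congr 2
      rw [hk]
      simp [sq]
    have hrec : ∀ ω, (fun i => Y i ω) = (fun b => R b ω) + (Y a ω) • ((k a)⁻¹ • k) := by
      intro ω
      ext b
      simp [hR]
      field_simp
      ring
    have hpm : Measurable (fun ω => (Y a ω, fun b => R b ω)) := (hmeas a).prodMk hRm
    have hPr : IsProbabilityMeasure (P.map (fun ω b => R b ω)) :=
      Measure.isProbabilityMeasure_map hRm.aemeasurable
    have c1 : Continuous fun q : ℝ × (ι → ℝ) => (q.1 : ℂ) * F (q.2 + q.1 • ((k a)⁻¹ • k)) := by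
      fun_prop
    have c2 : Continuous fun q : ℝ × (ι → ℝ) => F' (q.2 + q.1 • ((k a)⁻¹ • k)) := by
      fun_prop
    have eL : ∫ ω, (Y a ω : ℂ) * F (fun i => Y i ω) ∂P
        = ∫ q, (q.1 : ℂ) * F (q.2 + q.1 • ((k a)⁻¹ • k))
          ∂((gaussianReal 0 (k a).toNNReal).prod (P.map (fun ω b => R b ω))) := by
      rw [← hlaw, ← hmap, integral_map hpm.aemeasurable c1.aestronglyMeasurable]
      simp_rw [← hrec]
    have eR : ∫ ω, F' (fun i => Y i ω) ∂P
        = ∫ q, F' (q.2 + q.1 • ((k a)⁻¹ • k))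
          ∂((gaussianReal 0 (k a).toNNReal).prod (P.map (fun ω b => R b ω))) := by
      rw [← hlaw, ← hmap, integral_map hpm.aemeasurable c2.aestronglyMeasurable]
      simp_rw [← hrec]
    have i2 : Integrable (fun q : ℝ × (ι → ℝ) => F' (q.2 + q.1 • ((k a)⁻¹ • k)))
        ((gaussianReal 0 (k a).toNNReal).prod (P.map (fun ω b => R b ω))) :=
      Integrable.of_bound c2.aestronglyMeasurable C (Eventually.of_forall fun q => hb' _)
    have i1 : Integrable (fun q : ℝ × (ι → ℝ) => (q.1 : ℂ) * F (q.2 + q.1 • ((k a)⁻¹ • k)))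
        ((gaussianReal 0 (k a).toNNReal).prod (P.map (fun ω b => R b ω))) := by
      have h1 : Integrable (fun x : ℝ => (x : ℂ)) (gaussianReal 0 (k a).toNNReal) := by
        have : Integrable (fun x : ℝ => x) (gaussianReal 0 (k a).toNNReal) :=
          memLp_one_iff_integrable.1 (memLp_id_gaussianReal 1)
        exact this.ofReal
      have h2 := h1.comp_fst (P.map (fun ω b => R b ω))
      exact h2.mul_bdd (c := C) (by
        have : Continuous fun q : ℝ × (ι → ℝ) => F (q.2 + q.1 • ((k a)⁻¹ • k)) := by fun_prop
        exact this.aestronglyMeasurable) (Eventually.of_forall fun q => hb _)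
    rw [eL, eR, integral_prod_symm _ i1, integral_prod_symm _ i2]
    congr 1
    ext r
    have hder : ∀ x : ℝ, HasDerivAt (fun x : ℝ => F (r + x • ((k a)⁻¹ • k)))
        (((k a)⁻¹ : ℝ) • F' (r + x • ((k a)⁻¹ • k))) x := by
      intro x
      have h1 := hd (r + x • ((k a)⁻¹ • k))
      have h2 : HasDerivAt (fun s : ℝ => (s - x) * (k a)⁻¹) ((k a)⁻¹) x := by
        simpa using ((hasDerivAt_id x).sub_const x).mul_const ((k a)⁻¹)
      have h3 : HasDerivAt (fun t : ℝ => F (r + x • ((k a)⁻¹ • k) + t • k))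
        (F' (r + x • ((k a)⁻¹ • k))) ((fun s : ℝ => (s - x) * (k a)⁻¹) x) := by simpa using h1
      have h4 := h3.scomp x h2
      refine h4.congr_of_eventuallyEq (Eventually.of_forall fun s => ?_)
      simp only [Function.comp_apply]
      congr 1
      ext b
      simp
      ring
    have := gauss_ibp1 (k a).toNNReal _ _ (max C (|(k a)⁻¹| * C)) hder
      (fun x => (hb _).trans (le_max_left _ _)) (fun x => by
        refine le_trans ?_ (le_max_right _ _)
        rw [norm_smul, Real.norm_eq_abs]
        gcongr
        exact hb' _) (by fun_prop)
    simp only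
    rw [this, integral_smul, Complex.real_smul, ← mul_assoc]
    have hh : (((k a).toNNReal : ℝ) : ℂ) = (k a : ℂ) := by rw [Real.coe_toNNReal _ hv.le]
    rw [hh]
    have : (k a : ℂ) ≠ 0 := by exact_mod_cast hv.ne'
    push_cast
    rw [mul_inv_cancel₀ this, one_mul]

/-- complexification of a real matrix -/
def cmx {N : ℕ} (A : Matrix (Fin N) (Fin N) ℝ) : Matrix (Fin N) (Fin N) ℂ :=
  fun i j => (A i j : ℂ)

/-- the resolvent -/
def Res {N : ℕ} (z : ℂ) (A : Matrix (Fin N) (Fin N) ℝ) : Matrix (Fin N) (Fin N) ℂ :=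
  (cmx A - z • (1 : Matrix (Fin N) (Fin N) ℂ))⁻¹

lemma cmx_herm {N : ℕ} {A : Matrix (Fin N) (Fin N) ℝ} (hA : ∀ i j, A i j = A j i) :
    (cmx A).IsHermitian := by
  ext i j
  simp [cmx, Matrix.conjTranspose_apply, hA i j]

lemma res_lower {N : ℕ} {A : Matrix (Fin N) (Fin N) ℝ} (hA : ∀ i j, A i j = A j i)
    {z : ℂ} (hz : 0 < z.im) (x : Fin N → ℂ) :
    z.im * ∑ i, ‖x i‖ ^ 2 ≤
      ∑ i, ‖x i‖ * ‖((cmx A - z • (1 : Matrix (Fin N) (Fin N) ℂ)).mulVec x) i‖ := by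
  set y := (cmx A - z • (1 : Matrix (Fin N) (Fin N) ℂ)).mulVec x with hy
  have h1 : (star x ⬝ᵥ y).im = - (z.im * ∑ i, ‖x i‖ ^ 2) := by
    rw [hy, Matrix.sub_mulVec, dotProduct_sub, Complex.sub_im]
    have := (cmx_herm hA).im_star_dotProduct_mulVec_self x
    simp only [RCLike.im_to_complex] at this
    rw [this, Matrix.smul_mulVec, Matrix.one_mulVec, dotProduct_smul]
    have h2 : star x ⬝ᵥ x = ((∑ i, ‖x i‖ ^ 2 : ℝ) : ℂ) := by
      simp only [dotProduct, Pi.star_apply]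
      push_cast
      refine Finset.sum_congr rfl fun i _ => ?_
      simpa using Complex.conj_mul' (x i)
    rw [h2, smul_eq_mul, Complex.mul_im, Complex.ofReal_re, Complex.ofReal_im]
    ring
  have h3 : z.im * ∑ i, ‖x i‖ ^ 2 ≤ ‖star x ⬝ᵥ y‖ := by
    have := Complex.abs_im_le_norm (star x ⬝ᵥ y)
    rw [h1, abs_neg] at this
    exact (le_abs_self _).trans this
  refine h3.trans ?_
  refine (norm_sum_le _ _).trans (Finset.sum_le_sum fun i _ => ?_)
  simp

lemma res_det {N : ℕ} {A : Matrix (Fin N) (Fin N) ℝ} (hA : ∀ i j, A i j = A j i)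
    {z : ℂ} (hz : 0 < z.im) : (cmx A - z • (1 : Matrix (Fin N) (Fin N) ℂ)).det ≠ 0 := by
  intro h
  obtain ⟨x, hx, hx0⟩ := Matrix.exists_mulVec_eq_zero_iff.2 h
  have := res_lower hA hz x
  rw [hx0] at this
  simp only [Pi.zero_apply, norm_zero, mul_zero, Finset.sum_const_zero] at this
  apply hx
  have h2 : ∑ i, ‖x i‖ ^ 2 ≤ 0 := by
    by_contra hcon
    push Not at hcon
    nlinarith [mul_pos hz hcon]
  have h3 := (Finset.sum_eq_zero_iff_of_nonneg (fun i _ => sq_nonneg ‖x i‖)).1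
    (le_antisymm h2 (Finset.sum_nonneg fun i _ => sq_nonneg _))
  ext i
  simpa using h3 i (Finset.mem_univ i)

lemma res_mul {N : ℕ} {A : Matrix (Fin N) (Fin N) ℝ} (hA : ∀ i j, A i j = A j i)
    {z : ℂ} (hz : 0 < z.im) : (cmx A - z • (1 : Matrix (Fin N) (Fin N) ℂ)) * Res z A = 1 :=
  Matrix.mul_nonsing_inv _ (isUnit_iff_ne_zero.2 (res_det hA hz))

lemma res_mul' {N : ℕ} {A : Matrix (Fin N) (Fin N) ℝ} (hA : ∀ i j, A i j = A j i)
    {z : ℂ} (hz : 0 < z.im) : Res z A * (cmx A - z • (1 : Matrix (Fin N) (Fin N) ℂ)) = 1 :=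
  Matrix.nonsing_inv_mul _ (isUnit_iff_ne_zero.2 (res_det hA hz))

lemma res_symm {N : ℕ} {A : Matrix (Fin N) (Fin N) ℝ} (hA : ∀ i j, A i j = A j i)
    (z : ℂ) (i j : Fin N) : Res z A i j = Res z A j i := by
  have : (Res z A).transpose = Res z A := by
    rw [Res, Matrix.transpose_nonsing_inv]
    congr 1
    ext i j
    simp [cmx, hA i j, Matrix.one_apply, eq_comm]
  conv_rhs => rw [← this]
  rfl

lemma res_vec {N : ℕ} {A : Matrix (Fin N) (Fin N) ℝ} (hA : ∀ i j, A i j = A j i)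
    {z : ℂ} (hz : 0 < z.im) (b : Fin N → ℂ) :
    z.im * ∑ i, ‖(Res z A).mulVec b i‖ ^ 2 ≤ z.im⁻¹ * ∑ i, ‖b i‖ ^ 2 := by
  have h := res_lower hA hz ((Res z A).mulVec b)
  rw [Matrix.mulVec_mulVec, res_mul hA hz, Matrix.one_mulVec] at h
  have h2 : ∑ i, ‖(Res z A).mulVec b i‖ * ‖b i‖ ≤
      ∑ i, (1 / 2 * (z.im * ‖(Res z A).mulVec b i‖ ^ 2) + 1 / 2 * (z.im⁻¹ * ‖b i‖ ^ 2)) := by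
    refine Finset.sum_le_sum fun i _ => ?_
    set p := ‖(Res z A).mulVec b i‖
    have : z.im * z.im⁻¹ = 1 := mul_inv_cancel₀ hz.ne'
    have h4 : 0 ≤ z.im⁻¹ * (z.im * p - ‖b i‖) ^ 2 := by positivity
    have h5 : z.im⁻¹ * (z.im * p - ‖b i‖) ^ 2
      = z.im * z.im⁻¹ * z.im * p ^ 2 - 2 * (z.im * z.im⁻¹) * (p * ‖b i‖) + z.im⁻¹ * ‖b i‖ ^ 2 := by
      ring
    rw [h5, this] at h4
    linarith
  rw [Finset.sum_add_distrib, ← Finset.mul_sum, ← Finset.mul_sum, ← Finset.mul_sum,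
    ← Finset.mul_sum] at h2
  linarith

lemma res_bil {N : ℕ} {A : Matrix (Fin N) (Fin N) ℝ} (hA : ∀ i j, A i j = A j i)
    {z : ℂ} (hz : 0 < z.im) (a b : Fin N → ℂ) :
    ‖∑ i, ∑ j, a i * Res z A i j * b j‖ ≤
      z.im⁻¹ / 2 * (∑ i, ‖a i‖ ^ 2 + ∑ i, ‖b i‖ ^ 2) := by
  have h0 : ∑ i, ∑ j, a i * Res z A i j * b j = ∑ i, a i * (Res z A).mulVec b i := by
    refine Finset.sum_congr rfl fun i _ => ?_
    simp only [Matrix.mulVec, dotProduct, Finset.mul_sum, mul_assoc]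
  rw [h0]
  refine (norm_sum_le _ _).trans ?_
  have h2 : ∑ i, ‖a i * (Res z A).mulVec b i‖ ≤
      ∑ i, (1 / 2 * (z.im * ‖(Res z A).mulVec b i‖ ^ 2) + 1 / 2 * (z.im⁻¹ * ‖a i‖ ^ 2)) := by
    refine Finset.sum_le_sum fun i _ => ?_
    rw [norm_mul]
    set p := ‖(Res z A).mulVec b i‖
    have : z.im * z.im⁻¹ = 1 := mul_inv_cancel₀ hz.ne'
    have h4 : 0 ≤ z.im⁻¹ * (z.im * p - ‖a i‖) ^ 2 := by positivity
    have h5 : z.im⁻¹ * (z.im * p - ‖a i‖) ^ 2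
      = z.im * z.im⁻¹ * z.im * p ^ 2 - 2 * (z.im * z.im⁻¹) * (p * ‖a i‖) + z.im⁻¹ * ‖a i‖ ^ 2 := by
      ring
    rw [h5, this] at h4
    linarith
  rw [Finset.sum_add_distrib, ← Finset.mul_sum, ← Finset.mul_sum, ← Finset.mul_sum,
    ← Finset.mul_sum] at h2
  have := res_vec hA hz b
  linarith

lemma res_col {N : ℕ} {A : Matrix (Fin N) (Fin N) ℝ} (hA : ∀ i j, A i j = A j i)
    {z : ℂ} (hz : 0 < z.im) (j : Fin N) :
    ∑ i, ‖Res z A i j‖ ^ 2 ≤ (z.im⁻¹) ^ 2 := by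
  have h := res_vec hA hz (Pi.single j 1)
  have h1 : ∑ i, ‖(Pi.single j 1 : Fin N → ℂ) i‖ ^ 2 = 1 := by
    rw [Finset.sum_eq_single j] <;> simp +contextual [Pi.single_apply]
  rw [h1] at h
  simp only [Matrix.mulVec_single_one, Matrix.col_apply, mul_one] at h
  have h2 := mul_le_mul_of_nonneg_left h (inv_nonneg.2 hz.le)
  rw [← mul_assoc, inv_mul_cancel₀ hz.ne', one_mul] at h2
  linarith [h2, sq (z.im⁻¹)]

lemma res_entry {N : ℕ} {A : Matrix (Fin N) (Fin N) ℝ} (hA : ∀ i j, A i j = A j i)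
    {z : ℂ} (hz : 0 < z.im) (i j : Fin N) : ‖Res z A i j‖ ≤ z.im⁻¹ := by
  have h := res_col hA hz j
  have h1 := Finset.single_le_sum (f := fun i => ‖Res z A i j‖ ^ 2)
    (fun i _ => sq_nonneg _) (Finset.mem_univ i)
  exact le_of_sq_le_sq (h1.trans h) (inv_nonneg.2 hz.le)

lemma res_frob {N : ℕ} {A : Matrix (Fin N) (Fin N) ℝ} (hA : ∀ i j, A i j = A j i)
    {z : ℂ} (hz : 0 < z.im) :
    ∑ i, ∑ j, ‖Res z A i j‖ ^ 2 ≤ N * (z.im⁻¹) ^ 2 := by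
  rw [Finset.sum_comm]
  refine (Finset.sum_le_sum fun j _ => res_col hA hz j).trans ?_
  simp

lemma res_cont {N : ℕ} {S : Type} [TopologicalSpace S] (A : S → Matrix (Fin N) (Fin N) ℝ)
    (hA : ∀ s i j, A s i j = A s j i) (hc : ∀ i j, Continuous fun s => A s i j)
    {z : ℂ} (hz : 0 < z.im) (i j : Fin N) : Continuous fun s => Res z (A s) i j := by
  have h1 : Continuous fun s => (cmx (A s) - z • (1 : Matrix (Fin N) (Fin N) ℂ)) := by
    refine Continuous.sub ?_ continuous_const
    refine continuous_matrix fun i j => ?_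
    exact Complex.continuous_ofReal.comp (hc i j)
  have h2 : ∀ s, Res z (A s) i j = ((cmx (A s) - z • (1 : Matrix (Fin N) (Fin N) ℂ)).det)⁻¹ *
      (cmx (A s) - z • (1 : Matrix (Fin N) (Fin N) ℂ)).adjugate i j := by
    intro s
    rw [Res, Matrix.inv_def, Ring.inverse_eq_inv', Matrix.smul_apply, smul_eq_mul]
  simp_rw [h2]
  refine Continuous.mul (h1.matrix_det.inv₀ fun s => res_det (hA s) hz) ?_
  exact (h1.matrix_adjugate).matrix_elem i j

lemma res_deriv {N : ℕ} {A K : Matrix (Fin N) (Fin N) ℝ} (hA : ∀ i j, A i j = A j i)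
    (hK : ∀ i j, K i j = K j i) {z : ℂ} (hz : 0 < z.im) (i j : Fin N) :
    HasDerivAt (fun t : ℝ => Res z (A + t • K) i j) (-(Res z A * cmx K * Res z A) i j) 0 := by
  have hS : ∀ t : ℝ, ∀ i j, (A + t • K) i j = (A + t • K) j i := by
    intro t i j; simp [hA i j, hK i j]
  have hdiff : ∀ t : ℝ, Res z (A + t • K) - Res z A
      = -(t : ℂ) • (Res z (A + t • K) * cmx K * Res z A) := by
    intro t
    have e : cmx (A + t • K) - z • (1 : Matrix (Fin N) (Fin N) ℂ)
        = (cmx A - z • (1 : Matrix (Fin N) (Fin N) ℂ)) + (t : ℂ) • cmx K := by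
      ext i j; simp [cmx]; ring
    have e1 := res_mul' (hS t) hz
    have e2 := res_mul hA hz
    rw [e] at e1
    calc Res z (A + t • K) - Res z A
        = Res z (A + t • K) * ((cmx A - z • (1 : Matrix (Fin N) (Fin N) ℂ)) * Res z A)
          - (Res z (A + t • K) * ((cmx A - z • (1 : Matrix (Fin N) (Fin N) ℂ)) + (t : ℂ) • cmx K))
            * Res z A := by rw [e1, e2]; simp
      _ = _ := by
        rw [Matrix.mul_add, Matrix.add_mul, Matrix.mul_smul, Matrix.smul_mul, ← Matrix.mul_assoc]
        simp
  have hcont : ∀ a b, Continuous fun t : ℝ => Res z (A + t • K) a b := fun a b =>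
    res_cont (fun t : ℝ => A + t • K) hS (fun i j => by simp; fun_prop) hz a b
  rw [hasDerivAt_iff_tendsto_slope_zero]
  have hlim : Tendsto (fun t : ℝ => -(Res z (A + t • K) * cmx K * Res z A) i j) (nhds 0)
      (nhds (-(Res z A * cmx K * Res z A) i j)) := by
    have hc : Continuous fun t : ℝ => -(Res z (A + t • K) * cmx K * Res z A) i j := by
      simp only [Matrix.mul_apply]
      fun_prop
    have := hc.tendsto 0
    simpa using this
  refine (hlim.mono_left nhdsWithin_le_nhds).congr' ?_
  filter_upwards [self_mem_nhdsWithin] with t ht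
  have ht' : (t : ℂ) ≠ 0 := by exact_mod_cast ht
  have := congrFun (congrFun (hdiff t) i) j
  simp only [zero_add, zero_smul, add_zero]
  rw [Matrix.sub_apply] at this
  rw [this, Complex.real_smul, Matrix.smul_apply, smul_eq_mul]
  push_cast
  field_simp

lemma res_trace {N : ℕ} {A : Matrix (Fin N) (Fin N) ℝ} (hA : A.IsHermitian)
    {z : ℂ} (hz : 0 < z.im) :
    ∑ i, Res z A i i = ∑ j, ((hA.eigenvalues j : ℂ) - z)⁻¹ := by
  set U : Matrix (Fin N) (Fin N) ℝ := (hA.eigenvectorUnitary : Matrix (Fin N) (Fin N) ℝ) with hU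
  have hspec : A = U * Matrix.diagonal hA.eigenvalues * star U := by
    have := hA.spectral_theorem
    rw [Unitary.conjStarAlgAut_apply] at this
    exact this
  have hUU : U * star U = 1 := Unitary.coe_mul_star_self hA.eigenvectorUnitary
  have hUU' : star U * U = 1 := Unitary.coe_star_mul_self hA.eigenvectorUnitary
  have hmul : ∀ B C : Matrix (Fin N) (Fin N) ℝ, cmx (B * C) = cmx B * cmx C := by
    intro B C; ext i j; simp [cmx, Matrix.mul_apply]
  have hone : cmx (1 : Matrix (Fin N) (Fin N) ℝ) = 1 := by
    ext i j; simp [cmx, Matrix.one_apply]; split <;> simp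
  have hdiag : cmx (Matrix.diagonal hA.eigenvalues)
      = Matrix.diagonal (fun i => (hA.eigenvalues i : ℂ)) := by
    ext i j; simp [cmx, Matrix.diagonal_apply]; split <;> simp
  have h1 : cmx U * cmx (star U) = 1 := by rw [← hmul, hUU, hone]
  have h2 : cmx (star U) * cmx U = 1 := by rw [← hmul, hUU', hone]
  have hne : ∀ i, (hA.eigenvalues i : ℂ) - z ≠ 0 := by
    intro i h
    have := congrArg Complex.im h
    simp at this
    exact hz.ne' this
  have hR : Res z A = cmx U * Matrix.diagonal (fun i => ((hA.eigenvalues i : ℂ) - z)⁻¹)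
      * cmx (star U) := by
    apply Matrix.inv_eq_right_inv
    have e : cmx A - z • (1 : Matrix (Fin N) (Fin N) ℂ)
        = cmx U * Matrix.diagonal (fun i => (hA.eigenvalues i : ℂ) - z) * cmx (star U) := by
      have e3 : Matrix.diagonal (fun i => (hA.eigenvalues i : ℂ) - z)
          = Matrix.diagonal (fun i => (hA.eigenvalues i : ℂ)) - z • 1 := by
        ext i j; simp [Matrix.diagonal_apply, Matrix.one_apply]; split <;> simp
      conv_lhs => rw [hspec]
      rw [hmul, hmul, hdiag, e3, Matrix.mul_sub, Matrix.sub_mul]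
      simp [h1]
    rw [e]
    calc _ = cmx U * Matrix.diagonal (fun i => (hA.eigenvalues i : ℂ) - z) * (cmx (star U)
          * cmx U) * Matrix.diagonal (fun i => ((hA.eigenvalues i : ℂ) - z)⁻¹)
          * cmx (star U) := by simp only [Matrix.mul_assoc]
      _ = 1 := by
        rw [h2, Matrix.mul_one, Matrix.mul_assoc (cmx U), Matrix.diagonal_mul_diagonal]
        simp [hne, h1]
  have : ∑ i, Res z A i i = (Res z A).trace := rfl
  rw [this, hR, Matrix.trace_mul_comm, ← Matrix.mul_assoc, h2, Matrix.one_mul,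
    Matrix.trace_diagonal]

lemma h_meas (h : ℝ → ℝ) (hper : ∀ z : ℝ, h (z + 2 * π) = h z)
    (hval : ∀ z ∈ Set.Ioc (-π) π, z ≠ 0 → h z = |z| ^ (-(1 / 2 : ℝ))) : Measurable h := by
  have hp : (0:ℝ) < 2 * π := by positivity
  have h1 : Measurable fun z : ℝ => toIocDiv hp (-π) z := by
    refine measurable_to_countable' fun n => ?_
    have : (fun z : ℝ => toIocDiv hp (-π) z) ⁻¹' {n} =
        (fun z : ℝ => z - n • (2 * π)) ⁻¹' (Set.Ioc (-π) (-π + 2 * π)) := by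
      ext z
      simp only [Set.mem_preimage, Set.mem_singleton_iff]
      exact toIocDiv_eq_iff hp
    rw [this]
    exact (measurable_id.sub_const _) measurableSet_Ioc
  have h2 : Measurable fun z : ℝ => toIocMod hp (-π) z := by
    have : (fun z : ℝ => toIocMod hp (-π) z) = fun z => z - (toIocDiv hp (-π) z : ℝ) * (2 * π) := by
      ext z
      rw [toIocMod, zsmul_eq_mul]
    rw [this]
    refine measurable_id.sub (Measurable.mul_const ?_ _)
    exact (measurable_from_top (f := fun n : ℤ => (n:ℝ))).comp h1
  have h3 : h = (fun x => if x = 0 then h 0 else |x| ^ (-(1 / 2 : ℝ))) ∘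
      (fun z : ℝ => toIocMod hp (-π) z) := by
    ext z
    have hP : Function.Periodic h (2 * π) := hper
    have e : h z = h (toIocMod hp (-π) z) := by
      rw [toIocMod, hP.sub_zsmul_eq]
    have hm := toIocMod_mem_Ioc hp (-π) z
    rw [show -π + 2 * π = π by ring] at hm
    simp only [Function.comp]
    split_ifs with h0
    · rw [e, h0]
    · rw [e, hval _ hm h0]
  rw [h3]
  refine Measurable.comp ?_ h2
  refine Measurable.ite (measurableSet_singleton _) measurable_const ?_
  fun_prop

lemma abs_rpow_int : IntervalIntegrable (fun z : ℝ => |z| ^ (-(1 / 2 : ℝ))) volume (-π) π := by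
  have h1 : IntervalIntegrable (fun z : ℝ => |z| ^ (-(1 / 2 : ℝ))) volume 0 π := by
    refine (intervalIntegral.intervalIntegrable_rpow' (r := -(1/2:ℝ)) (by norm_num) (a := 0) (b := π)).congr ?_
    intro x hx
    rw [Set.uIoc_of_le pi_pos.le] at hx
    simp [abs_of_pos hx.1]
  have h2 := (IntervalIntegrable.iff_comp_neg).1 h1
  simp only [abs_neg, neg_zero] at h2
  exact h2.symm.trans h1

lemma abs_rpow_val : ∫ z in (-π)..π, |z| ^ (-(1 / 2 : ℝ)) = 4 * √π := by
  have h1 : ∫ z in (0:ℝ)..π, |z| ^ (-(1 / 2 : ℝ)) = 2 * √π := by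
    have : ∫ z in (0:ℝ)..π, |z| ^ (-(1 / 2 : ℝ)) = ∫ z in (0:ℝ)..π, z ^ (-(1 / 2 : ℝ)) := by
      refine intervalIntegral.integral_congr fun x hx => ?_
      rw [Set.uIcc_of_le pi_pos.le] at hx
      simp [abs_of_nonneg hx.1]
    rw [this, integral_rpow (Or.inl (by norm_num)), Real.sqrt_eq_rpow]
    norm_num
    ring
  have h2 : ∫ z in (-π)..0, |z| ^ (-(1 / 2 : ℝ)) = 2 * √π := by
    have := intervalIntegral.integral_comp_neg (a := -π) (b := 0) (fun z : ℝ => |z| ^ (-(1 / 2 : ℝ)))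
    simp only [abs_neg, neg_zero, neg_neg] at this
    rw [this, h1]
  have hs : Set.uIcc (0:ℝ) π ⊆ Set.uIcc (-π) π := by
    rw [Set.uIcc_of_le pi_pos.le, Set.uIcc_of_le (by linarith [pi_pos])]
    exact Set.Icc_subset_Icc (by linarith [pi_pos]) le_rfl
  have hs' : Set.uIcc (-π) 0 ⊆ Set.uIcc (-π) π := by
    rw [Set.uIcc_of_le (by linarith [pi_pos]), Set.uIcc_of_le (by linarith [pi_pos])]
    exact Set.Icc_subset_Icc le_rfl pi_pos.le
  rw [← intervalIntegral.integral_add_adjacent_intervals (abs_rpow_int.mono_set hs')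
    (abs_rpow_int.mono_set hs), h1, h2]
  ring

lemma h_ae (h : ℝ → ℝ)
    (hval : ∀ z ∈ Set.Ioc (-π) π, z ≠ 0 → h z = |z| ^ (-(1 / 2 : ℝ))) :
    ∀ᵐ z : ℝ, z ∈ Set.Ioc (-π) π → h z = |z| ^ (-(1 / 2 : ℝ)) := by
  have : ∀ᵐ z : ℝ, z ≠ 0 := by simp [ae_iff]
  filter_upwards [this] with z hz hm using hval z hm hz

lemma spec_int (h : ℝ → ℝ) (hper : ∀ z : ℝ, h (z + 2 * π) = h z)
    (hval : ∀ z ∈ Set.Ioc (-π) π, z ≠ 0 → h z = |z| ^ (-(1 / 2 : ℝ)))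
    (u v : ℤ) :
    (∫ q in specBox,
        Complex.exp (Complex.I * ((u * q.1 + v * q.2 : ℝ) : ℂ)) * (((2 * π)⁻¹ * h (q.1 + q.2) : ℝ) : ℂ))
      = if u = v then ∫ z in (-π)..π, Complex.exp (Complex.I * ((u * z : ℝ) : ℂ)) * (((|z| ^ (-(1 / 2 : ℝ)) : ℝ)) : ℂ) else 0 := by
  have hmeas := h_meas h hper hval
  have hP : Function.Periodic h (2 * π) := hper
  have hle : -π ≤ π := by linarith [pi_pos]
  have hint : IntervalIntegrable h volume (-π) π := by
    refine abs_rpow_int.congr_ae ?_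
    rw [Set.uIoc_of_le hle]
    refine (ae_restrict_iff' measurableSet_Ioc).2 ?_
    filter_upwards [h_ae h hval] with z hz hm using (hz hm).symm
  have hintx : ∀ x, IntervalIntegrable (fun y => h (x + y)) volume (-π) π := by
    intro x
    have h1 : IntervalIntegrable h volume (x + -π) (x + π) := by
      have := (Function.Periodic.intervalIntegrable_iff hP (t₁ := -π) (t₂ := x + -π)).1
        (by rw [show -π + 2 * π = π by ring]; exact hint)
      rwa [show x + -π + 2 * π = x + π by ring] at this
    have := h1.comp_add_left x
    simpa using this
  have hF : Measurable (fun q : ℝ × ℝ => Complex.exp (Complex.I * ((u * q.1 + v * q.2 : ℝ) : ℂ)) * (((2 * π)⁻¹ * h (q.1 + q.2) : ℝ) : ℂ)) := by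
    have : Measurable fun q : ℝ × ℝ => h (q.1 + q.2) := hmeas.comp (by fun_prop)
    fun_prop
  have hnorm : ∀ q : ℝ × ℝ, ‖Complex.exp (Complex.I * ((u * q.1 + v * q.2 : ℝ) : ℂ)) * (((2 * π)⁻¹ * h (q.1 + q.2) : ℝ) : ℂ)‖ = (2*π)⁻¹ * |h (q.1 + q.2)| := by
    intro q
    rw [norm_mul, mul_comm Complex.I, Complex.norm_exp_ofReal_mul_I, one_mul, Complex.norm_real, Real.norm_eq_abs, abs_mul, abs_of_pos (by positivity)]
  rw [specBox, show (volume : Measure (ℝ × ℝ)) = (volume : Measure ℝ).prod volume from rfl, ← Measure.prod_restrict]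
  rw [integral_prod]
  · have inner : ∀ x : ℝ, ∫ y in Set.Ioc (-π) π, Complex.exp (Complex.I * ((u * x + v * y : ℝ) : ℂ)) * (((2 * π)⁻¹ * h (x + y) : ℝ) : ℂ)
       = Complex.exp (Complex.I * (((u - v : ℤ) * x : ℝ) : ℂ)) * (((2 * π)⁻¹ : ℝ) * ∫ z in (-π)..π, Complex.exp (Complex.I * ((v * z : ℝ) : ℂ)) * (((|z| ^ (-(1 / 2 : ℝ)) : ℝ)) : ℂ)) := by
      intro x
      rw [← intervalIntegral.integral_of_le hle]
      set φ : ℝ → ℂ := fun z => Complex.exp (Complex.I * ((v * z : ℝ) : ℂ)) * (h z : ℂ) with hφ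
      have hφP : Function.Periodic φ (2 * π) := by
        intro z
        simp only [hφ, hper]
        congr 1
        rw [Complex.exp_eq_exp_iff_exists_int]
        refine ⟨v, ?_⟩
        push_cast; ring
      have e1 : ∀ y : ℝ, Complex.exp (Complex.I * ((u * x + v * y : ℝ) : ℂ)) * (((2 * π)⁻¹ * h (x + y) : ℝ) : ℂ)
        = (Complex.exp (Complex.I * (((u - v : ℤ) * x : ℝ) : ℂ)) * ((2 * π)⁻¹ : ℝ)) * φ (x + y) := by
        intro y
        simp only [hφ]
        rw [show Complex.I * ((u * x + v * y : ℝ) : ℂ) = Complex.I * (((u - v : ℤ) * x : ℝ) : ℂ) + Complex.I * ((v * (x + y) : ℝ) : ℂ) by push_cast; ring, Complex.exp_add]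
        push_cast; ring
      simp only [e1]
      rw [intervalIntegral.integral_const_mul, mul_assoc]
      congr 2
      rw [intervalIntegral.integral_comp_add_left φ x]
      have := hφP.intervalIntegral_add_eq (x + -π) (-π)
      rw [show x + -π + 2 * π = x + π by ring, show -π + 2 * π = π by ring] at this
      rw [this]
      refine intervalIntegral.integral_congr_ae ?_
      rw [Set.uIoc_of_le hle]
      filter_upwards [h_ae h hval] with z hz hm
      simp only [hφ]
      rw [hz hm]
    simp only [inner]
    rw [integral_mul_const]
    split_ifs with huv
    · subst huv
      simp only [sub_self, Int.cast_zero, zero_mul, Complex.ofReal_zero, mul_zero, Complex.exp_zero]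
      rw [integral_const]
      simp only [MeasurableSet.univ, measureReal_restrict_apply, Set.univ_inter]
      rw [Real.volume_real_Ioc_of_le hle, ← mul_assoc]
      have : ((π - -π : ℝ) • (1:ℂ)) * (((2 * π)⁻¹ : ℝ) : ℂ) = 1 := by
        rw [Complex.real_smul, mul_one, ← Complex.ofReal_mul]
        rw [show (π - -π) * (2 * π)⁻¹ = 1 by field_simp; ring]
        simp
      rw [this, one_mul]
    · rw [← intervalIntegral.integral_of_le hle]
      have hne : (Complex.I * ((u - v : ℤ) : ℂ)) ≠ 0 := by
        refine mul_ne_zero Complex.I_ne_zero ?_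
        exact_mod_cast sub_ne_zero.2 huv
      have : ∫ x in (-π)..π, Complex.exp (Complex.I * (((u - v : ℤ) * x : ℝ) : ℂ)) = 0 := by
        have e : ∀ x : ℝ, Complex.exp (Complex.I * (((u - v : ℤ) * x : ℝ) : ℂ)) = Complex.exp ((Complex.I * ((u - v : ℤ) : ℂ)) * x) := by
          intro x; push_cast; ring_nf
        simp only [e]
        rw [integral_exp_mul_complex hne, div_eq_zero_iff]
        left
        rw [sub_eq_zero, Complex.exp_eq_exp_iff_exists_int]
        refine ⟨u - v, ?_⟩
        push_cast; ring
      rw [this, zero_mul]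
  · rw [integrable_prod_iff hF.aestronglyMeasurable]
    constructor
    · refine ae_of_all _ fun x => ?_
      have h1 := (intervalIntegrable_iff_integrableOn_Ioc_of_le hle).1 (hintx x)
      refine Integrable.mono' (h1.norm.const_mul (2*π)⁻¹) ((hF.comp measurable_prodMk_left).aestronglyMeasurable) ?_
      refine ae_of_all _ fun y => ?_
      rw [hnorm]; rfl
    · have : ∀ x, ∫ y in Set.Ioc (-π) π, (2 * π)⁻¹ * |h (x + y)| = ∫ y in (-π)..π, (2 * π)⁻¹ * |h y| := by
        intro x
        rw [← intervalIntegral.integral_of_le hle]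
        rw [intervalIntegral.integral_comp_add_left (fun y => (2 * π)⁻¹ * |h y|) x]
        have hP' : Function.Periodic (fun y => (2 * π)⁻¹ * |h y|) (2 * π) := fun y => by simp only [hper]
        have := hP'.intervalIntegral_add_eq (x + -π) (-π)
        rw [show x + -π + 2 * π = x + π by ring, show -π + 2 * π = π by ring] at this
        rw [this]
      refine (integrable_const (∫ y in (-π)..π, (2 * π)⁻¹ * |h y|)).congr (ae_of_all _ fun x => ?_)
      change _ = ∫ y in Set.Ioc (-π) π, _
      rw [← this x]
      refine integral_congr_ae (ae_of_all _ fun y => ?_)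
      exact (hnorm (x, y)).symm


/-- the covariance sequence: everything needed about the process. -/
lemma cov_main {Ω : Type} [MeasurableSpace Ω] (P : Measure Ω) (X : ℤ → ℤ → Ω → ℝ) (h : ℝ → ℝ)
    (hper : ∀ z : ℝ, h (z + 2 * π) = h z)
    (hval : ∀ z ∈ Set.Ioc (-π) π, z ≠ 0 → h z = |z| ^ (-(1 / 2 : ℝ)))
    (hX : StatGauss P X)
    (hXf : HasSpecDensity P X (fun q => (2 * π)⁻¹ * h (q.1 + q.2))) :
    ∃ c : ℤ → ℝ, c 0 = 4 * √π ∧ (∀ u, |c u| ≤ c 0) ∧ Tendsto c cofinite (nhds 0) ∧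
      ∀ j k l m : ℤ, ∫ ω, X j k ω * X l m ω ∂P = if l - j = m - k then c (l - j) else 0 := by
  have hle : -π ≤ π := by linarith [pi_pos]
  have key : ∀ u v : ℤ, ((∫ ω, X 0 0 ω * X u v ω ∂P : ℝ) : ℂ) = _ := fun u v =>
    (hXf u v).symm.trans (spec_int h hper hval u v)
  have hc : ∀ u : ℤ, ((∫ ω, X 0 0 ω * X u u ω ∂P : ℝ) : ℂ) = ∫ z in (-π)..π, Complex.exp (Complex.I * ((u * z : ℝ) : ℂ)) * (((|z| ^ (-(1 / 2 : ℝ)) : ℝ)) : ℂ) := by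
    intro u; rw [key u u, if_pos rfl]
  have h0 : ∫ ω, X 0 0 ω * X 0 0 ω ∂P = 4 * √π := by
    have := hc 0
    simp only [Int.cast_zero, zero_mul, Complex.ofReal_zero, mul_zero, Complex.exp_zero, one_mul] at this
    rw [intervalIntegral.integral_ofReal, abs_rpow_val] at this
    exact_mod_cast this
  refine ⟨fun u => ∫ ω, X 0 0 ω * X u u ω ∂P, h0, ?_, ?_, ?_⟩
  · intro u
    simp only
    rw [h0, ← Real.norm_eq_abs, ← Complex.norm_real, hc u, ← abs_rpow_val]
    refine (intervalIntegral.norm_integral_le_integral_norm hle).trans (le_of_eq ?_)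
    refine intervalIntegral.integral_congr fun z _ => ?_
    rw [norm_mul, mul_comm Complex.I, Complex.norm_exp_ofReal_mul_I, one_mul, Complex.norm_real, Real.norm_eq_abs, abs_of_nonneg (by positivity)]
  · have hRL := Real.tendsto_integral_exp_smul_cocompact
      (Set.indicator (Set.Ioc (-π) π) fun v : ℝ => (((|v| ^ (-(1 / 2 : ℝ)) : ℝ)) : ℂ))
    have ht : Tendsto (fun u : ℤ => (u : ℝ) * (-(2 * π)⁻¹)) cofinite (cocompact ℝ) := by
      have hne : -(2 * π)⁻¹ ≠ 0 := by
        have := pi_pos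
        simp [this.ne']
      exact ((Homeomorph.mulRight₀ (-(2 * π)⁻¹) hne).isClosedEmbedding.tendsto_cocompact).comp
        Int.tendsto_coe_cofinite
    have h3 := hRL.comp ht
    have h4 : Tendsto (fun u : ℤ => ((∫ ω, X 0 0 ω * X u u ω ∂P : ℝ) : ℂ)) cofinite (nhds 0) := by
      refine h3.congr fun u => ?_
      rw [hc u, intervalIntegral.integral_of_le hle, ← integral_indicator measurableSet_Ioc]
      simp only [Function.comp]
      refine integral_congr_ae (ae_of_all _ fun v => ?_)
      by_cases hv : v ∈ Set.Ioc (-π) π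
      · simp only [Set.indicator_of_mem hv, Circle.smul_def, Real.fourierChar_apply, smul_eq_mul]
        congr 2
        have := pi_pos.ne'
        push_cast
        field_simp
      · simp [Set.indicator_of_notMem hv]
    have h5 := (Complex.continuous_re.tendsto 0).comp h4
    exact h5
  · intro j k l m
    have := hX.stat j k (l - j) (m - k)
    rw [show j + (l - j) = l by ring, show k + (m - k) = m by ring] at this
    rw [this]
    split_ifs with hh
    · simp only [← hh]
    · have := key (l - j) (m - k)
      rw [if_neg hh] at this
      exact_mod_cast this

/-- the finite vector -/
lemma gauss_vec {Ω : Type} [MeasurableSpace Ω] (P : Measure Ω) [IsProbabilityMeasure P] (X : ℤ → ℤ → Ω → ℝ)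
    (hX : StatGauss P X) (N : ℕ) :
    HasGaussianLaw (fun ω (p : Fin N × Fin N) => X ((p.1 : ℕ) + 1) ((p.2 : ℕ) + 1) ω) P := by
  refine ⟨isGaussian_of_map_eq_gaussianReal fun L => ?_⟩
  have hm : Measurable (fun ω (p : Fin N × Fin N) => X ((p.1 : ℕ) + 1) ((p.2 : ℕ) + 1) ω) :=
    measurable_pi_lambda _ fun p => hX.meas _ _
  rw [Measure.map_map (by fun_prop) hm]
  classical
  let e : Fin N × Fin N → ℤ × ℤ := fun p => (((p.1 : ℕ) : ℤ) + 1, ((p.2 : ℕ) : ℤ) + 1)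
  have he : Function.Injective e := by
    rintro ⟨a, b⟩ ⟨a', b'⟩ hh
    simp only [e, Prod.mk.injEq, add_left_inj, Nat.cast_inj, Fin.val_inj] at hh
    simp [hh.1, hh.2]
  let c : (ℤ × ℤ) →₀ ℝ := ∑ p : Fin N × Fin N, Finsupp.single (e p) (L (Pi.single p 1))
  obtain ⟨v, hv⟩ := hX.gauss c
  refine ⟨0, v, ?_⟩
  rw [← hv]
  congr 1
  ext ω
  have h1 : ∑ p ∈ c.support, c p * X p.1 p.2 ω = c.sum fun p r => r * X p.1 p.2 ω := rfl
  rw [h1, ← Finsupp.sum_finsetSum_index]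
  · simp only [Function.comp]
    conv_lhs => rw [← Finset.univ_sum_single (fun (p : Fin N × Fin N) => X ((p.1 : ℕ) + 1) ((p.2 : ℕ) + 1) ω), map_sum]
    refine Finset.sum_congr rfl fun p _ => ?_
    rw [Finsupp.sum_single_index (by simp)]
    have : (Pi.single p (X ((p.1 : ℕ) + 1) ((p.2 : ℕ) + 1) ω) : Fin N × Fin N → ℝ) = X ((p.1 : ℕ) + 1) ((p.2 : ℕ) + 1) ω • Pi.single p (1:ℝ) := by
      rw [← Pi.single_smul]; simp
    rw [this, map_smul, smul_eq_mul, mul_comm]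
  · simp
  · intros; ring

lemma gauss_mean {Ω : Type} [MeasurableSpace Ω] (P : Measure Ω) (X : ℤ → ℤ → Ω → ℝ)
    (hX : StatGauss P X) (j k : ℤ) : ∫ ω, X j k ω ∂P = 0 := by
  obtain ⟨v, hv⟩ := hX.gauss (Finsupp.single (j, k) 1)
  have h1 : (fun ω => ∑ p ∈ (Finsupp.single (j, k) (1:ℝ)).support, (Finsupp.single (j, k) (1:ℝ)) p * X p.1 p.2 ω) = X j k := by
    ext ω
    rw [Finsupp.support_single_ne_zero _ one_ne_zero]
    simp
  rw [h1] at hv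
  have h2 : ∫ x, x ∂(P.map (X j k)) = ∫ ω, X j k ω ∂P :=
    integral_map (hX.meas j k).aemeasurable (by fun_prop)
  rw [← h2, hv]
  simp


/-- difference of indices -/
def df {N : ℕ} (a b : Fin N) : ℤ := ((b : ℕ) : ℤ) - ((a : ℕ) : ℤ)

/-- normalised diagonal sums -/
def Tu {N : ℕ} (G : Matrix (Fin N) (Fin N) ℂ) (u : ℤ) : ℂ :=
  (N : ℂ)⁻¹ * ∑ j, ∑ k, if df j k = u then G j k else 0

/-- sum of absolute covariances -/
def Gam (c : ℤ → ℝ) (N : ℕ) : ℝ := ∑ v ∈ Finset.Icc (-(N : ℤ)) N, |c v|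

/-- direction matrices -/
def K1 {N : ℕ} (c : ℤ → ℝ) (j k : Fin N) : Matrix (Fin N) (Fin N) ℝ := fun l m =>
  (if df j l = df k m then c (df j l) else 0) + (if df j m = df k l then c (df j m) else 0)

/-- self-convolution -/
def Cv {N : ℕ} (c : ℤ → ℝ) (G : Matrix (Fin N) (Fin N) ℂ) (u : ℤ) : ℂ :=
  (N : ℂ)⁻¹ * ∑ k, ∑ l, (c (df k l) : ℂ) * G k l * Tu G (u - df k l)

lemma df_inj_right {N : ℕ} {a b b' : Fin N} (h : df a b = df a b') : b = b' := by
  unfold df at h; apply Fin.ext; omega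

lemma df_inj_left {N : ℕ} {a a' b : Fin N} (h : df a b = df a' b) : a = a' := by
  unfold df at h; apply Fin.ext; omega

lemma sum_ind_le {N : ℕ} (f : Fin N → ℝ) {B : ℝ} (hB : 0 ≤ B) (Q : Fin N → Prop) [DecidablePred Q]
    (hf : ∀ p, Q p → f p ≤ B) (hu : ∀ p p', Q p → Q p' → p = p') :
    ∑ p, (if Q p then f p else 0) ≤ B := by
  by_cases h : ∃ p, Q p
  · obtain ⟨p, hp⟩ := h
    rw [Finset.sum_eq_single p]
    · rw [if_pos hp]; exact hf p hp
    · intro b _ hb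
      rw [if_neg]
      intro hQ; exact hb (hu _ _ hQ hp)
    · simp
  · push Not at h
    rw [Finset.sum_eq_zero]
    · exact hB
    · intro p _; rw [if_neg (h p)]

lemma gam_nonneg (c : ℤ → ℝ) (N : ℕ) : 0 ≤ Gam c N := Finset.sum_nonneg fun _ _ => abs_nonneg _

lemma gam_right {N : ℕ} (c : ℤ → ℝ) (j : Fin N) : ∑ l, |c (df j l)| ≤ Gam c N := by
  classical
  rw [← Finset.sum_image (s := Finset.univ) (g := fun l => df j l) (f := fun v => |c v|)
    (fun a _ b _ h => df_inj_right h)]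
  refine Finset.sum_le_sum_of_subset_of_nonneg ?_ fun _ _ _ => abs_nonneg _
  intro v hv
  simp only [Finset.mem_image, Finset.mem_univ, true_and] at hv
  obtain ⟨l, rfl⟩ := hv
  rw [Finset.mem_Icc]; unfold df
  have := l.2; have := j.2
  omega

/-- constraint on two variables, `ℓ²` bound. -/
lemma pair_le {N : ℕ} (f g : Fin N → ℝ) {B : ℝ} (Q : Fin N → Fin N → Prop)
    [∀ a b, Decidable (Q a b)]
    (hf : ∑ k, f k ^ 2 ≤ B) (hg : ∑ k, g k ^ 2 ≤ B)
    (h1 : ∀ a b b', Q a b → Q a b' → b = b') (h2 : ∀ a a' b, Q a b → Q a' b → a = a') :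
    ∑ k, ∑ m, (if Q k m then f k * g m else 0) ≤ B := by
  have e1 : ∑ k, ∑ m, (if Q k m then f k ^ 2 else 0) ≤ B := by
    refine le_trans (Finset.sum_le_sum fun k _ => ?_) hf
    exact sum_ind_le (fun _ => f k ^ 2) (sq_nonneg _) (Q k) (fun _ _ => le_rfl) (h1 k)
  have e2 : ∑ k, ∑ m, (if Q k m then g m ^ 2 else 0) ≤ B := by
    rw [Finset.sum_comm]
    refine le_trans (Finset.sum_le_sum fun m _ => ?_) hg
    exact sum_ind_le (fun _ => g m ^ 2) (sq_nonneg _) (fun k => Q k m) (fun _ _ => le_rfl)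
      (fun a a' => h2 a a' m)
  have e3 : ∑ k, ∑ m, (if Q k m then f k * g m else 0) ≤
      ∑ k, ∑ m, (1 / 2 * (if Q k m then f k ^ 2 else 0) + 1 / 2 * (if Q k m then g m ^ 2 else 0)) := by
    refine Finset.sum_le_sum fun k _ => Finset.sum_le_sum fun m _ => ?_
    split_ifs
    · nlinarith [sq_nonneg (f k - g m)]
    · simp
  refine e3.trans ?_
  simp only [Finset.sum_add_distrib, ← Finset.mul_sum]
  linarith

lemma card_miss {N : ℕ} (u : ℤ) :
    ((Finset.univ.filter fun p : Fin N => ¬ ∃ j, df j p = u).card : ℝ) ≤ |(u : ℝ)| := by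
  have h : (Finset.univ.filter fun p : Fin N => ¬ ∃ j, df j p = u).card ≤ (Finset.range u.natAbs).card := by
    refine Finset.card_le_card_of_injOn (fun p => if 0 ≤ u then (p : ℕ) else N - 1 - p) ?_ ?_
    · intro p hp
      simp only [Finset.coe_filter, Finset.mem_univ, true_and, Set.mem_ofPred_eq, not_exists] at hp
      simp only [Finset.coe_range, Set.mem_Iio]
      have hp2 := p.2
      by_contra hcon
      split_ifs at hcon with hu
      · refine hp ⟨(p : ℕ) - u.natAbs, by omega⟩ ?_
        unfold df; simp only; omega
      · refine hp ⟨(p : ℕ) + u.natAbs, by omega⟩ ?_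
        unfold df; simp only; omega
    · intro p _ p' _ hpp
      have hp2 := p.2
      have hp2' := p'.2
      simp only at hpp
      apply Fin.ext
      split_ifs at hpp <;> omega
  rw [Finset.card_range] at h
  calc _ ≤ ((u.natAbs : ℕ) : ℝ) := by exact_mod_cast h
    _ = _ := by rw [Nat.cast_natAbs]; simp

/-- hypotheses on the resolvent matrix used in the estimates. -/
structure GoodG {N : ℕ} (G : Matrix (Fin N) (Fin N) ℂ) (g : ℝ) : Prop where
  pos : 0 ≤ g
  symm : ∀ i j, G i j = G j i
  ent : ∀ i j, ‖G i j‖ ≤ g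
  col : ∀ j, ∑ i, ‖G i j‖ ^ 2 ≤ g ^ 2

lemma GoodG.row {N : ℕ} {G : Matrix (Fin N) (Fin N) ℂ} {g : ℝ} (h : GoodG G g) (i : Fin N) :
    ∑ j, ‖G i j‖ ^ 2 ≤ g ^ 2 := by
  simp only [h.symm i]; exact h.col i

lemma GoodG.tu {N : ℕ} {G : Matrix (Fin N) (Fin N) ℂ} {g : ℝ} (h : GoodG G g) (u : ℤ) :
    ‖Tu G u‖ ≤ g := by
  have : ‖∑ j, ∑ k, if df j k = u then G j k else 0‖ ≤ N * g := by
    refine (norm_sum_le _ _).trans ?_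
    refine (Finset.sum_le_sum (g := fun _ => g) fun j _ => ?_).trans (by simp)
    refine (norm_sum_le _ _).trans ?_
    simp only [apply_ite norm, norm_zero]
    exact sum_ind_le (fun k => ‖G j k‖) h.pos _ (fun p _ => h.ent _ _)
      (fun p p' hp hp' => df_inj_right (hp.trans hp'.symm))
  rw [Tu, norm_mul, norm_inv, Complex.norm_natCast]
  rcases Nat.eq_zero_or_pos N with h0 | h0
  · subst h0; simpa using h.pos
  · have : (0:ℝ) < N := by exact_mod_cast h0
    rw [inv_mul_le_iff₀ this]; assumption

/-- A-part -/
lemma partA {N : ℕ} {G : Matrix (Fin N) (Fin N) ℂ} {g : ℝ} (h : GoodG G g) (c : ℤ → ℝ) (u : ℤ) :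
    ‖∑ j, ∑ k, ∑ p, (if df j p = u then
      ∑ l, ∑ m, G k l * ((if df j l = df k m then c (df j l) else 0 : ℝ) : ℂ) * G m p else 0)‖ ≤
      N * Gam c N * g ^ 2 := by
  have hle : ‖∑ j, ∑ k, ∑ p, (if df j p = u then
      ∑ l, ∑ m, G k l * ((if df j l = df k m then c (df j l) else 0 : ℝ) : ℂ) * G m p else 0)‖ ≤
      ∑ j, ∑ k, ∑ p, (if df j p = u then
      ∑ l, ∑ m, |c (df j l)| * (if df j l = df k m then ‖G k l‖ * ‖G m p‖ else 0) else 0) := by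
    refine (norm_sum_le _ _).trans (Finset.sum_le_sum fun j _ => ?_)
    refine (norm_sum_le _ _).trans (Finset.sum_le_sum fun k _ => ?_)
    refine (norm_sum_le _ _).trans (Finset.sum_le_sum fun p _ => ?_)
    split_ifs
    · refine (norm_sum_le _ _).trans (Finset.sum_le_sum fun l _ => ?_)
      refine (norm_sum_le _ _).trans (Finset.sum_le_sum fun m _ => ?_)
      split_ifs
      · rw [norm_mul, norm_mul, Complex.norm_real, Real.norm_eq_abs]
        apply le_of_eq; ring
      · simp
    · simp
  refine hle.trans ?_
  have hj : ∀ j : Fin N, ∑ k, ∑ p, (if df j p = u then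
      ∑ l, ∑ m, |c (df j l)| * (if df j l = df k m then ‖G k l‖ * ‖G m p‖ else 0) else 0)
      ≤ Gam c N * g ^ 2 := by
    intro j
    rw [Finset.sum_comm]
    have hp : ∀ p, ∑ k, (if df j p = u then
      ∑ l, ∑ m, |c (df j l)| * (if df j l = df k m then ‖G k l‖ * ‖G m p‖ else 0) else 0) =
      (if df j p = u then ∑ k,
      ∑ l, ∑ m, |c (df j l)| * (if df j l = df k m then ‖G k l‖ * ‖G m p‖ else 0) else 0) := by
      intro p; split_ifs <;> simp
    simp only [hp]
    refine sum_ind_le _ (mul_nonneg (gam_nonneg c N) (sq_nonneg g)) _ (fun p _ => ?_)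
      (fun p p' hp hp' => df_inj_right (hp.trans hp'.symm))
    rw [Finset.sum_comm]
    refine (Finset.sum_le_sum (g := fun l => |c (df j l)| * g ^ 2) fun l _ => ?_).trans ?_
    · simp only [← Finset.mul_sum]
      refine mul_le_mul_of_nonneg_left ?_ (abs_nonneg _)
      refine pair_le (fun k => ‖G k l‖) (fun m => ‖G m p‖) (fun k m => df j l = df k m) (h.col l) (h.col p) ?_ ?_
      · intro a b b' h1 h2; exact df_inj_right (h1.symm.trans h2)
      · intro a b b' h1 h2; exact df_inj_left (h1.symm.trans h2)
    · rw [← Finset.sum_mul]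
      exact mul_le_mul_of_nonneg_right (gam_right c j) (sq_nonneg g)
  refine (Finset.sum_le_sum fun j _ => hj j).trans ?_
  simp [mul_assoc]

lemma miss_bound {N : ℕ} {G : Matrix (Fin N) (Fin N) ℂ} {g : ℝ} (h : GoodG G g) (u v : ℤ)
    (hN : 0 < N) :
    ‖(∑ j, ∑ p, if df j p = u then ∑ m, (if df j m = v then G m p else 0) else 0)
       - N * Tu G (u - v)‖ ≤ |(u : ℝ)| * g := by
  have hN' : (N : ℂ) ≠ 0 := by exact_mod_cast hN.ne'
  have e2 : (N : ℂ) * Tu G (u - v) = ∑ p, ∑ m, (if df m p = u - v then G m p else 0) := by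
    rw [Tu, mul_inv_cancel_left₀ hN', Finset.sum_comm]
  have e1 : (∑ j, ∑ p, if df j p = u then ∑ m, (if df j m = v then G m p else 0) else 0)
      = ∑ p, (if ∃ j, df j p = u then ∑ m, (if df m p = u - v then G m p else 0) else 0) := by
    rw [Finset.sum_comm]
    refine Finset.sum_congr rfl fun p _ => ?_
    split_ifs with hp
    · obtain ⟨j, hj⟩ := hp
      rw [Finset.sum_eq_single j]
      · rw [if_pos hj]
        refine Finset.sum_congr rfl fun m _ => ?_
        refine if_congr ?_ rfl rfl
        unfold df at *; omega
      · intro b _ hb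
        rw [if_neg]
        intro hQ; exact hb (df_inj_left (hQ.trans hj.symm))
      · simp
    · push Not at hp
      refine Finset.sum_eq_zero fun j _ => ?_
      rw [if_neg (hp j)]
  rw [e1, e2, ← Finset.sum_sub_distrib]
  have e3 : ∀ p, ‖(if ∃ j, df j p = u then ∑ m, (if df m p = u - v then G m p else 0) else 0) -
      ∑ m, (if df m p = u - v then G m p else 0)‖ ≤ if ¬ ∃ j, df j p = u then g else 0 := by
    intro p
    by_cases hp : ∃ j, df j p = u
    · simp [hp]
    · rw [if_neg hp, if_pos hp, zero_sub, norm_neg]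
      refine (norm_sum_le _ _).trans ?_
      simp only [apply_ite norm, norm_zero]
      exact sum_ind_le (fun m => ‖G m p‖) h.pos _ (fun m _ => h.ent _ _)
        (fun p p' hp hp' => df_inj_left (hp.trans hp'.symm))
  refine (norm_sum_le _ _).trans ((Finset.sum_le_sum fun p _ => e3 p).trans ?_)
  rw [← Finset.sum_filter, Finset.sum_const, nsmul_eq_mul]
  exact mul_le_mul_of_nonneg_right (card_miss u) h.pos

/-- B-part -/
lemma partB {N : ℕ} {G : Matrix (Fin N) (Fin N) ℂ} {g : ℝ} (h : GoodG G g) (c : ℤ → ℝ) (u : ℤ)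
    (hN : 0 < N) :
    ‖(∑ j, ∑ k, ∑ p, (if df j p = u then
      ∑ l, ∑ m, G k l * ((if df j m = df k l then c (df j m) else 0 : ℝ) : ℂ) * G m p else 0))
      - N ^ 2 * Cv c G u‖ ≤ N * Gam c N * (|(u : ℝ)| * g ^ 2) := by
  have hN' : (N : ℂ) ≠ 0 := by exact_mod_cast hN.ne'
  have e1 : (∑ j, ∑ k, ∑ p, (if df j p = u then
      ∑ l, ∑ m, G k l * ((if df j m = df k l then c (df j m) else 0 : ℝ) : ℂ) * G m p else 0))
      = ∑ k, ∑ l, (c (df k l) : ℂ) * G k l *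
        (∑ j, ∑ p, if df j p = u then ∑ m, (if df j m = df k l then G m p else 0) else 0) := by
    rw [Finset.sum_comm]
    refine Finset.sum_congr rfl fun k _ => ?_
    simp only [Finset.mul_sum]
    conv_rhs => rw [Finset.sum_comm]
    refine Finset.sum_congr rfl fun j _ => ?_
    conv_rhs => rw [Finset.sum_comm]
    refine Finset.sum_congr rfl fun p _ => ?_
    split_ifs
    · refine Finset.sum_congr rfl fun l _ => ?_
      rw [Finset.mul_sum]
      refine Finset.sum_congr rfl fun m _ => ?_
      split_ifs with hq
      · rw [hq]; ring
      · simp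
    · simp
  have e2 : (N : ℂ) ^ 2 * Cv c G u = ∑ k, ∑ l, (c (df k l) : ℂ) * G k l * (N * Tu G (u - df k l)) := by
    rw [Cv, pow_two, mul_assoc, mul_inv_cancel_left₀ hN', Finset.mul_sum]
    refine Finset.sum_congr rfl fun k _ => ?_
    rw [Finset.mul_sum]
    refine Finset.sum_congr rfl fun l _ => ?_
    ring
  rw [e1, e2]
  simp only [← Finset.sum_sub_distrib, ← mul_sub]
  refine (norm_sum_le _ _).trans ?_
  refine (Finset.sum_le_sum (g := fun _ => Gam c N * (|(u : ℝ)| * g ^ 2)) fun k _ => ?_).trans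
    (by simp [mul_assoc])
  refine (norm_sum_le _ _).trans ?_
  refine le_trans ?_ (mul_le_mul_of_nonneg_right (gam_right c k) (by positivity))
  rw [Finset.sum_mul]
  refine Finset.sum_le_sum fun l _ => ?_
  rw [norm_mul, norm_mul, Complex.norm_real, Real.norm_eq_abs, mul_assoc]
  refine mul_le_mul_of_nonneg_left ?_ (abs_nonneg _)
  have := mul_le_mul (h.ent k l) (miss_bound h u (df k l) hN) (norm_nonneg _) h.pos
  refine this.trans (le_of_eq ?_)
  ring

lemma sum4_comm {N : ℕ} (F : Fin N → Fin N → Fin N → Fin N → ℂ) :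
    ∑ l, ∑ m, ∑ a, ∑ b, F l m a b = ∑ a, ∑ b, ∑ l, ∑ m, F l m a b := by
  calc ∑ l, ∑ m, ∑ a, ∑ b, F l m a b = ∑ l, ∑ a, ∑ m, ∑ b, F l m a b :=
        Finset.sum_congr rfl fun l _ => Finset.sum_comm
    _ = ∑ a, ∑ l, ∑ m, ∑ b, F l m a b := Finset.sum_comm
    _ = ∑ a, ∑ l, ∑ b, ∑ m, F l m a b :=
        Finset.sum_congr rfl fun a _ => Finset.sum_congr rfl fun l _ => Finset.sum_comm
    _ = _ := Finset.sum_congr rfl fun a _ => Finset.sum_comm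

/-- C-part -/
lemma partC {N : ℕ} {G : Matrix (Fin N) (Fin N) ℂ} {g : ℝ} (h : GoodG G g) (c : ℤ → ℝ) (u : ℤ)
    (j k : Fin N) :
    ‖Tu (G * cmx (K1 c j k) * G) u‖ ≤ (N : ℝ)⁻¹ * (2 * Gam c N * g ^ 2) := by
  have hK : ∑ l, ∑ m, |K1 c j k l m| ≤ 2 * Gam c N := by
    have e1 : ∑ l, ∑ m, (if df j l = df k m then |c (df j l)| else 0) ≤ Gam c N := by
      refine le_trans (Finset.sum_le_sum fun l _ => ?_) (gam_right c j)
      exact sum_ind_le (fun m => |c (df j l)|) (abs_nonneg _) (fun m => df j l = df k m) (fun _ _ => le_rfl)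
        (fun p p' hp hp' => df_inj_right (hp.symm.trans hp'))
    have e2 : ∑ l, ∑ m, (if df j m = df k l then |c (df j m)| else 0) ≤ Gam c N := by
      rw [Finset.sum_comm]
      refine le_trans (Finset.sum_le_sum fun l _ => ?_) (gam_right c j)
      exact sum_ind_le (fun m => |c (df j l)|) (abs_nonneg _) (fun m => df j l = df k m) (fun _ _ => le_rfl)
        (fun p p' hp hp' => df_inj_right (hp.symm.trans hp'))
    have e3 : ∑ l, ∑ m, |K1 c j k l m| ≤ ∑ l, ∑ m, ((if df j l = df k m then |c (df j l)| else 0) + (if df j m = df k l then |c (df j m)| else 0)) := by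
      refine Finset.sum_le_sum fun l _ => Finset.sum_le_sum fun m _ => ?_
      refine (abs_add_le _ _).trans (le_of_eq ?_)
      simp only [apply_ite abs, abs_zero]
    refine e3.trans ?_
    simp only [Finset.sum_add_distrib]
    linarith
  rw [Tu, norm_mul, norm_inv, Complex.norm_natCast]
  refine mul_le_mul_of_nonneg_left ?_ (by positivity)
  have e4 : ∑ a, ∑ b, (if df a b = u then (G * cmx (K1 c j k) * G) a b else 0)
      = ∑ l, ∑ m, (K1 c j k l m : ℂ) * ∑ a, ∑ b, (if df a b = u then G a l * G m b else 0) := by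
    simp only [Finset.mul_sum]
    rw [sum4_comm]
    refine Finset.sum_congr rfl fun a _ => Finset.sum_congr rfl fun b _ => ?_
    split_ifs
    · rw [Matrix.mul_apply]
      simp only [Matrix.mul_apply, Finset.sum_mul]
      rw [Finset.sum_comm]
      refine Finset.sum_congr rfl fun l _ => Finset.sum_congr rfl fun m _ => ?_
      simp only [cmx]; ring
    · simp
  rw [e4]
  refine (norm_sum_le _ _).trans ?_
  refine le_trans ?_ (mul_le_mul_of_nonneg_right hK (sq_nonneg g))
  rw [Finset.sum_mul]
  refine Finset.sum_le_sum fun l _ => ?_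
  refine (norm_sum_le _ _).trans ?_
  rw [Finset.sum_mul]
  refine Finset.sum_le_sum fun m _ => ?_
  rw [norm_mul, Complex.norm_real, Real.norm_eq_abs]
  refine mul_le_mul_of_nonneg_left ?_ (abs_nonneg _)
  have := pair_le (fun a => ‖G a l‖) (fun b => ‖G m b‖) (fun a b => df a b = u) (h.col l) (h.row m)
    (fun a b b' h1 h2 => df_inj_right (h1.trans h2.symm)) (fun a b b' h1 h2 => df_inj_left (h1.trans h2.symm))
  refine le_trans ?_ this
  refine (norm_sum_le _ _).trans (Finset.sum_le_sum fun a _ => ?_)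
  refine (norm_sum_le _ _).trans (Finset.sum_le_sum fun b _ => ?_)
  split_ifs <;> simp


/-- derivative of `G_kp conj T_u` in direction `K` -/
def DF {N : ℕ} (G : Matrix (Fin N) (Fin N) ℂ) (K : Matrix (Fin N) (Fin N) ℝ) (k p : Fin N) (u : ℤ) : ℂ :=
  -(G * cmx K * G) k p * star (Tu G u) - G k p * star (Tu (G * cmx K * G) u)

lemma path_bound {N : ℕ} {G : Matrix (Fin N) (Fin N) ℂ} {g : ℝ} (h : GoodG G g) (c : ℤ → ℝ) (u : ℤ)
    (hN : 0 < N) :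
    ‖(N : ℂ)⁻¹ * (∑ j, ∑ k, ∑ p, (if df j p = u then (2 * (N : ℂ)⁻¹) * DF G (K1 c j k) k p u else 0))
      + 2 * star (Tu G u) * Cv c G u‖ ≤ (2 * |(u : ℝ)| + 6) * g ^ 3 * (Gam c N / N) := by
  have hNr : (0:ℝ) < N := by exact_mod_cast hN
  have hN' : (N : ℂ) ≠ 0 := by exact_mod_cast hN.ne'
  set SA : ℂ := ∑ j, ∑ k, ∑ p, (if df j p = u then
      ∑ l, ∑ m, G k l * ((if df j l = df k m then c (df j l) else 0 : ℝ) : ℂ) * G m p else 0) with hSA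
  set SB : ℂ := ∑ j, ∑ k, ∑ p, (if df j p = u then
      ∑ l, ∑ m, G k l * ((if df j m = df k l then c (df j m) else 0 : ℝ) : ℂ) * G m p else 0) with hSB
  set SC : ℂ := ∑ j, ∑ k, ∑ p, (if df j p = u then G k p * star (Tu (G * cmx (K1 c j k) * G) u) else 0) with hSC
  have e1 : (∑ j, ∑ k, ∑ p, (if df j p = u then (2 * (N : ℂ)⁻¹) * DF G (K1 c j k) k p u else 0))
      = (2 * (N : ℂ)⁻¹) * (-(SA + SB) * star (Tu G u) - SC) := by
    rw [hSA, hSB, hSC]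
    simp only [← Finset.sum_add_distrib, ← Finset.sum_sub_distrib, Finset.mul_sum, Finset.sum_mul, ← Finset.sum_neg_distrib]
    refine Finset.sum_congr rfl fun j _ => Finset.sum_congr rfl fun k _ => Finset.sum_congr rfl fun p _ => ?_
    split_ifs
    · congr 1
      rw [DF]
      congr 3
      rw [Matrix.mul_apply]
      simp only [Matrix.mul_apply, Finset.sum_mul]
      rw [Finset.sum_comm]
      rw [← Finset.sum_add_distrib]
      refine Finset.sum_congr rfl fun l _ => ?_
      rw [← Finset.sum_add_distrib]
      refine Finset.sum_congr rfl fun m _ => ?_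
      simp only [cmx, K1]
      push_cast; ring
    · simp
  have bA := partA h c u
  have bB := partB h c u hN
  rw [← hSA] at bA
  rw [← hSB] at bB
  have bC : ‖SC‖ ≤ N * (g * (2 * Gam c N * g ^ 2)) := by
    rw [hSC]
    have : ∀ j k : Fin N, ‖∑ p, (if df j p = u then G k p * star (Tu (G * cmx (K1 c j k) * G) u) else 0)‖ ≤ (N:ℝ)⁻¹ * (g * (2 * Gam c N * g ^ 2)) := by
      intro j k
      refine (norm_sum_le _ _).trans ?_
      simp only [apply_ite norm, norm_zero]
      refine sum_ind_le _ (by have := h.pos; have := gam_nonneg c N; positivity) _ (fun p _ => ?_)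
        (fun p p' hp hp' => df_inj_right (hp.trans hp'.symm))
      rw [norm_mul, norm_star]
      refine (mul_le_mul (h.ent k p) (partC h c u j k) (norm_nonneg _) h.pos).trans (le_of_eq ?_)
      ring
    refine (norm_sum_le _ _).trans ?_
    refine (Finset.sum_le_sum fun j _ => (norm_sum_le _ _).trans (Finset.sum_le_sum fun k _ => this j k)).trans ?_
    simp only [Finset.sum_const, Finset.card_univ, Fintype.card_fin, nsmul_eq_mul]
    apply le_of_eq
    field_simp
  have e2 : (N : ℂ)⁻¹ * ((2 * (N : ℂ)⁻¹) * (-(SA + SB) * star (Tu G u) - SC)) + 2 * star (Tu G u) * Cv c G u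
      = -(2 * ((N : ℂ)⁻¹)^2) * ((SA + (SB - N ^ 2 * Cv c G u)) * star (Tu G u) + SC) := by
    field_simp
    ring
  rw [e1, e2, norm_mul, norm_neg, norm_mul, norm_pow, norm_inv, Complex.norm_natCast, Complex.norm_ofNat]
  have hT := h.tu u
  have e3 : ‖(SA + (SB - N ^ 2 * Cv c G u)) * star (Tu G u) + SC‖ ≤
      (N * Gam c N * g ^ 2 + N * Gam c N * (|(u : ℝ)| * g ^ 2)) * g + N * (g * (2 * Gam c N * g ^ 2)) := by
    refine (norm_add_le _ _).trans (add_le_add ?_ bC)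
    rw [norm_mul, norm_star]
    refine mul_le_mul ((norm_add_le _ _).trans (add_le_add bA bB)) hT (norm_nonneg _) ?_
    have := gam_nonneg c N
    positivity
  refine (mul_le_mul_of_nonneg_left e3 (by positivity)).trans (le_of_eq ?_)
  field_simp
  ring


lemma gauss_int {Ω : Type} [MeasurableSpace Ω] (P : Measure Ω) (X : ℤ → ℤ → Ω → ℝ)
    (hX : StatGauss P X) (j k : ℤ) : Integrable (X j k) P := by
  obtain ⟨v, hv⟩ := hX.gauss (Finsupp.single (j, k) 1)
  have h1 : (fun ω => ∑ p ∈ (Finsupp.single (j, k) (1:ℝ)).support, (Finsupp.single (j, k) (1:ℝ)) p * X p.1 p.2 ω) = X j k := by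
    ext ω
    rw [Finsupp.support_single_ne_zero _ one_ne_zero]
    simp
  rw [h1] at hv
  have h2 : Integrable (fun x : ℝ => x) (P.map (X j k)) := by
    rw [hv]
    exact (memLp_id_gaussianReal 1).integrable le_rfl
  exact h2.comp_measurable (hX.meas j k)

/-- matrix built from a vector -/
def Mx {N : ℕ} (y : Fin N × Fin N → ℝ) : Matrix (Fin N) (Fin N) ℝ :=
  fun i j => (√N)⁻¹ * (y (i, j) + y (j, i))

lemma Mx_symm {N : ℕ} (y : Fin N × Fin N → ℝ) (i j : Fin N) : Mx y i j = Mx y j i := by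
  simp [Mx, add_comm]

lemma scaledW_symm {Ω : Type} (X : ℤ → ℤ → Ω → ℝ) (N : ℕ) (ω : Ω) (i j : Fin N) :
    scaledW X N ω i j = scaledW X N ω j i := by
  simp only [scaledW]; rw [add_comm]

lemma goodG_res {N : ℕ} {A : Matrix (Fin N) (Fin N) ℝ} (hA : ∀ i j, A i j = A j i)
    {z : ℂ} (hz : 0 < z.im) : GoodG (Res z A) z.im⁻¹ :=
  ⟨by positivity, res_symm hA z, res_entry hA hz, res_col hA hz⟩

lemma Mx_res_cont {N : ℕ} {z : ℂ} (hz : 0 < z.im) (i j : Fin N) :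
    Continuous fun y : Fin N × Fin N → ℝ => Res z (Mx y) i j :=
  res_cont _ Mx_symm (fun i j => by unfold Mx; fun_prop) hz i j

lemma tu_cont {N : ℕ} {S : Type} [TopologicalSpace S] (G : S → Matrix (Fin N) (Fin N) ℂ)
    (hG : ∀ i j, Continuous fun s => G s i j) (u : ℤ) : Continuous fun s => Tu (G s) u := by
  unfold Tu
  refine continuous_const.mul (continuous_finsetSum _ fun j _ => continuous_finsetSum _ fun k _ => ?_)
  split_ifs
  · exact hG j k
  · exact continuous_const

lemma cv_cont {N : ℕ} {S : Type} [TopologicalSpace S] (G : S → Matrix (Fin N) (Fin N) ℂ)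
    (hG : ∀ i j, Continuous fun s => G s i j) (c : ℤ → ℝ) (u : ℤ) :
    Continuous fun s => Cv c (G s) u := by
  unfold Cv
  refine continuous_const.mul (continuous_finsetSum _ fun j _ => continuous_finsetSum _ fun k _ => ?_)
  exact (continuous_const.mul (hG j k)).mul (tu_cont G hG _)

lemma gkg_cont {N : ℕ} {S : Type} [TopologicalSpace S] (G : S → Matrix (Fin N) (Fin N) ℂ)
    (hG : ∀ i j, Continuous fun s => G s i j) (K : Matrix (Fin N) (Fin N) ℂ) (i j : Fin N) :
    Continuous fun s => (G s * K * G s) i j := by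
  simp only [Matrix.mul_apply]
  fun_prop

lemma df_cont {N : ℕ} {S : Type} [TopologicalSpace S] (G : S → Matrix (Fin N) (Fin N) ℂ)
    (hG : ∀ i j, Continuous fun s => G s i j) (K : Matrix (Fin N) (Fin N) ℝ) (k p : Fin N) (u : ℤ) :
    Continuous fun s => DF (G s) K k p u := by
  unfold DF
  have h1 := gkg_cont G hG (cmx K)
  have h2 := tu_cont G hG u
  have h3 := tu_cont (fun s => G s * cmx K * G s) h1 u
  exact ((h1 k p).neg.mul h2.star).sub ((hG k p).mul h3.star)

lemma gkg_bound {N : ℕ} {G : Matrix (Fin N) (Fin N) ℂ} {g : ℝ} (h : GoodG G g)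
    (K : Matrix (Fin N) (Fin N) ℂ) (i j : Fin N) :
    ‖(G * K * G) i j‖ ≤ ∑ m, (∑ l, g * ‖K l m‖) * g := by
  rw [Matrix.mul_apply]
  refine (norm_sum_le _ _).trans (Finset.sum_le_sum fun m _ => ?_)
  rw [norm_mul, Matrix.mul_apply]
  have := h.pos
  refine mul_le_mul ?_ (h.ent _ _) (norm_nonneg _) (by positivity)
  refine (norm_sum_le _ _).trans (Finset.sum_le_sum fun l _ => ?_)
  rw [norm_mul]
  exact mul_le_mul_of_nonneg_right (h.ent _ _) (norm_nonneg _)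

lemma tu_bound {N : ℕ} (H : Matrix (Fin N) (Fin N) ℂ) {B : ℝ} (hB : 0 ≤ B) (h : ∀ i j, ‖H i j‖ ≤ B)
    (u : ℤ) : ‖Tu H u‖ ≤ (N : ℝ)⁻¹ * (N * (N * B)) := by
  rw [Tu, norm_mul, norm_inv, Complex.norm_natCast]
  refine mul_le_mul_of_nonneg_left ?_ (by positivity)
  have : ∑ j : Fin N, ∑ k : Fin N, B = N * (N * B) := by simp
  rw [← this]
  refine (norm_sum_le _ _).trans (Finset.sum_le_sum fun a _ => ?_)
  refine (norm_sum_le _ _).trans (Finset.sum_le_sum fun b _ => ?_)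
  split_ifs
  · exact h _ _
  · simpa using hB

lemma DF_bound {N : ℕ} (g : ℝ) (hg : 0 ≤ g) (K : Matrix (Fin N) (Fin N) ℝ) (k p : Fin N) (u : ℤ) :
    ∃ C : ℝ, ∀ G : Matrix (Fin N) (Fin N) ℂ, GoodG G g → ‖DF G K k p u‖ ≤ C := by
  set B := ∑ m, (∑ l, g * ‖cmx K l m‖) * g
  have hB : 0 ≤ B := by positivity
  refine ⟨B * g + g * ((N : ℝ)⁻¹ * (N * (N * B))), fun G h => ?_⟩
  rw [DF]
  refine (norm_sub_le _ _).trans (add_le_add ?_ ?_)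
  · rw [norm_mul, norm_neg, norm_star]
    exact mul_le_mul (gkg_bound h _ _ _) (h.tu u) (norm_nonneg _) hB
  · rw [norm_mul, norm_star]
    exact mul_le_mul (h.ent _ _) (tu_bound _ hB (gkg_bound h _) u) (norm_nonneg _) h.pos

lemma DF_smul {N : ℕ} (G : Matrix (Fin N) (Fin N) ℂ) (K : Matrix (Fin N) (Fin N) ℝ) (r : ℝ) (k p : Fin N) (u : ℤ) :
    DF G (r • K) k p u = r * DF G K k p u := by
  have h1 : G * cmx (r • K) * G = (r : ℂ) • (G * cmx K * G) := by
    have : cmx (r • K) = (r : ℂ) • cmx K := by ext i j; simp [cmx]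
    rw [this, Matrix.mul_smul, Matrix.smul_mul]
  have h2 : Tu ((r : ℂ) • (G * cmx K * G)) u = r * Tu (G * cmx K * G) u := by
    simp only [Tu, Matrix.smul_apply, smul_eq_mul, Finset.mul_sum]
    refine Finset.sum_congr rfl fun a _ => Finset.sum_congr rfl fun b _ => ?_
    split_ifs
    · ring
    · simp
  simp only [DF, h1, h2, Matrix.smul_apply, smul_eq_mul, star_mul']
  have : star (r : ℂ) = r := Complex.conj_ofReal r
  rw [this]; ring

lemma K1_swap {N : ℕ} (c : ℤ → ℝ) (j k : Fin N) : K1 c k j = K1 c j k := by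
  ext l m
  simp only [K1]
  rw [add_comm]
  congr 1
  · by_cases h : df k m = df j l
    · rw [if_pos h, if_pos h.symm, h]
    · rw [if_neg h, if_neg (Ne.symm h)]
  · by_cases h : df k l = df j m
    · rw [if_pos h, if_pos h.symm, h]
    · rw [if_neg h, if_neg (Ne.symm h)]

lemma K1_symm {N : ℕ} (c : ℤ → ℝ) (j k l m : Fin N) : K1 c j k l m = K1 c j k m l := by
  simp only [K1]; rw [add_comm]

lemma F_deriv {N : ℕ} {A K : Matrix (Fin N) (Fin N) ℝ} (hA : ∀ i j, A i j = A j i)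
    (hK : ∀ i j, K i j = K j i) {z : ℂ} (hz : 0 < z.im) (k p : Fin N) (u : ℤ) :
    HasDerivAt (fun t : ℝ => Res z (A + t • K) k p * star (Tu (Res z (A + t • K)) u))
      (DF (Res z A) K k p u) 0 := by
  have h1 := fun i j => res_deriv hA hK hz i j
  have h2 : HasDerivAt (fun t : ℝ => Tu (Res z (A + t • K)) u)
      (- Tu (Res z A * cmx K * Res z A) u) 0 := by
    unfold Tu
    rw [← mul_neg, ← Finset.sum_neg_distrib]
    refine HasDerivAt.const_mul _ (HasDerivAt.fun_sum fun i _ => ?_)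
    rw [← Finset.sum_neg_distrib]
    refine HasDerivAt.fun_sum fun j _ => ?_
    split_ifs
    · exact h1 i j
    · simpa using hasDerivAt_const (0:ℝ) (0:ℂ)
  have h3 := (h1 k p).mul h2.star
  refine h3.congr_deriv ?_
  simp only [zero_smul, add_zero, DF, star_neg]
  ring

/-- one entry IBP -/
lemma ibp_entry {Ω : Type} [MeasurableSpace Ω] (P : Measure Ω) [IsProbabilityMeasure P]
    (X : ℤ → ℤ → Ω → ℝ) (hX : StatGauss P X) (c : ℤ → ℝ)
    (hcov : ∀ j k l m : ℤ, ∫ ω, X j k ω * X l m ω ∂P = if l - j = m - k then c (l - j) else 0)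
    (N : ℕ) {z : ℂ} (hz : 0 < z.im) (u : ℤ) (a b k p : Fin N) :
    ∫ ω, (X ((a : ℕ) + 1) ((b : ℕ) + 1) ω : ℂ) * (Res z (scaledW X N ω) k p * star (Tu (Res z (scaledW X N ω)) u)) ∂P
      = ∫ ω, ((√N)⁻¹ : ℝ) * DF (Res z (scaledW X N ω)) (K1 c a b) k p u ∂P := by
  have hdir : ∀ (y : Fin N × Fin N → ℝ) (t : ℝ),
      Mx (y + t • fun q : Fin N × Fin N => ∫ ω, X ((a : ℕ) + 1) ((b : ℕ) + 1) ω * X ((q.1 : ℕ) + 1) ((q.2 : ℕ) + 1) ω ∂P)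
      = Mx y + t • ((√N)⁻¹ • K1 c a b) := by
    intro y t
    ext l m
    simp only [Mx, hcov, Pi.add_apply, Pi.smul_apply, smul_eq_mul, Matrix.add_apply, Matrix.smul_apply, K1]
    have e : ∀ i j : Fin N, (((i : ℕ) : ℤ) + 1 - (((j : ℕ) : ℤ) + 1)) = df j i := by
      intro i j; unfold df; ring
    simp only [e]
    ring
  obtain ⟨C, hC⟩ := DF_bound (N := N) z.im⁻¹ (by positivity) (K1 c a b) k p u
  have hg : ∀ y : Fin N × Fin N → ℝ, GoodG (Res z (Mx y)) z.im⁻¹ := fun y => goodG_res (Mx_symm y) hz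
  have := gauss_ibp P (fun (q : Fin N × Fin N) ω => X ((q.1 : ℕ) + 1) ((q.2 : ℕ) + 1) ω)
    (gauss_vec P X hX N) (fun q => gauss_mean P X hX _ _) (fun q => hX.meas _ _) (a, b)
    (fun y => Res z (Mx y) k p * star (Tu (Res z (Mx y)) u))
    (fun y => ((√N)⁻¹ : ℝ) * DF (Res z (Mx y)) (K1 c a b) k p u)
    (z.im⁻¹ * z.im⁻¹ + (√N)⁻¹ * C)
    ((Mx_res_cont hz k p).mul (tu_cont _ (Mx_res_cont hz) u).star)
    (continuous_const.mul (df_cont _ (Mx_res_cont hz) _ k p u)) ?_ ?_ ?_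
  · exact this
  · intro y
    have h0 : 0 ≤ C := (norm_nonneg _).trans (hC _ (hg y))
    have h1 : ‖Res z (Mx y) k p * star (Tu (Res z (Mx y)) u)‖ ≤ z.im⁻¹ * z.im⁻¹ := by
      rw [norm_mul, norm_star]
      exact mul_le_mul ((hg y).ent _ _) ((hg y).tu u) (norm_nonneg _) (hg y).pos
    have : 0 ≤ (√N)⁻¹ * C := by positivity
    linarith
  · intro y
    have h0 := hC _ (hg y)
    rw [norm_mul, Complex.norm_real, Real.norm_of_nonneg (by positivity)]
    have : (√N)⁻¹ * ‖DF (Res z (Mx y)) (K1 c a b) k p u‖ ≤ (√N)⁻¹ * C :=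
      mul_le_mul_of_nonneg_left h0 (by positivity)
    have : 0 ≤ z.im⁻¹ * z.im⁻¹ := by positivity
    linarith
  · intro y
    simp only [hdir]
    rw [← DF_smul]
    exact F_deriv (Mx_symm y) (fun i j => by simp [K1_symm c a b i j]) hz k p u


lemma res_ident {N : ℕ} {A : Matrix (Fin N) (Fin N) ℝ} (hA : ∀ i j, A i j = A j i)
    {z : ℂ} (hz : 0 < z.im) (hN : 0 < N) (u : ℤ) :
    (N : ℂ)⁻¹ * ∑ j, ∑ k, ∑ p, (if df j p = u then (A j k : ℂ) * Res z A k p else 0)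
      = (if u = 0 then 1 else 0) + z * Tu (Res z A) u := by
  have hN' : (N : ℂ) ≠ 0 := by exact_mod_cast hN.ne'
  have h1 : ∀ j p, ∑ k, (A j k : ℂ) * Res z A k p = (if j = p then 1 else 0) + z * Res z A j p := by
    intro j p
    have := congrFun (congrFun (res_mul hA hz) j) p
    rw [Matrix.sub_mul, Matrix.sub_apply, Matrix.smul_mul, Matrix.one_mul, Matrix.smul_apply, Matrix.mul_apply,
      Matrix.one_apply, smul_eq_mul, sub_eq_iff_eq_add] at this
    exact this
  have h2 : ∀ j : Fin N, ∑ k, ∑ p, (if df j p = u then (A j k : ℂ) * Res z A k p else 0)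
      = (if u = 0 then 1 else 0) + z * ∑ p, (if df j p = u then Res z A j p else 0) := by
    intro j
    rw [Finset.sum_comm]
    have : ∀ p, ∑ k, (if df j p = u then (A j k : ℂ) * Res z A k p else 0)
        = (if j = p then (if u = 0 then 1 else 0) else 0) + z * (if df j p = u then Res z A j p else 0) := by
      intro p
      by_cases hp : df j p = u
      · simp only [if_pos hp]
        rw [h1]
        congr 1
        by_cases hjp : j = p
        · subst hjp
          simp only [df, sub_self] at hp
          simp [← hp]
        · simp [hjp]
      · simp only [if_neg hp]
        by_cases hjp : j = p
        · subst hjp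
          simp only [df, sub_self] at hp
          simp [Ne.symm hp]
        · simp [hjp]
    simp only [this, Finset.sum_add_distrib, ← Finset.mul_sum]
    simp
  simp only [h2, Finset.sum_add_distrib, ← Finset.mul_sum]
  rw [Tu]
  simp only [Finset.sum_const, Finset.card_univ, Fintype.card_fin, nsmul_eq_mul]
  field_simp

lemma bdd_int {Ω : Type} [MeasurableSpace Ω] (P : Measure Ω) [IsProbabilityMeasure P]
    (X : ℤ → ℤ → Ω → ℝ) (hX : StatGauss P X) (N : ℕ) (Φ : (Fin N × Fin N → ℝ) → ℂ)
    (hΦ : Continuous Φ) (C : ℝ) (hC : ∀ y, ‖Φ y‖ ≤ C) :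
    Integrable (fun ω => Φ (fun q => X ((q.1 : ℕ) + 1) ((q.2 : ℕ) + 1) ω)) P := by
  have hm : Measurable (fun ω (p : Fin N × Fin N) => X ((p.1 : ℕ) + 1) ((p.2 : ℕ) + 1) ω) :=
    measurable_pi_lambda _ fun p => hX.meas _ _
  exact Integrable.of_bound (hΦ.measurable.comp hm).aestronglyMeasurable C (ae_of_all _ fun ω => hC _)

lemma bdd_int' {Ω : Type} [MeasurableSpace Ω] (P : Measure Ω) [IsProbabilityMeasure P]
    (X : ℤ → ℤ → Ω → ℝ) (hX : StatGauss P X) (N : ℕ) (a b : ℤ) (Φ : (Fin N × Fin N → ℝ) → ℂ)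
    (hΦ : Continuous Φ) (C : ℝ) (hC : ∀ y, ‖Φ y‖ ≤ C) :
    Integrable (fun ω => (X a b ω : ℂ) * Φ (fun q => X ((q.1 : ℕ) + 1) ((q.2 : ℕ) + 1) ω)) P := by
  have hm : Measurable (fun ω (p : Fin N × Fin N) => X ((p.1 : ℕ) + 1) ((p.2 : ℕ) + 1) ω) :=
    measurable_pi_lambda _ fun p => hX.meas _ _
  exact (gauss_int P X hX a b).ofReal.mul_bdd (c := C) (hΦ.measurable.comp hm).aestronglyMeasurable (ae_of_all _ fun ω => hC _)

lemma cv_bound {N : ℕ} (c : ℤ → ℝ) (u : ℤ) (g : ℝ) :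
    ∃ C : ℝ, ∀ G : Matrix (Fin N) (Fin N) ℂ, GoodG G g → ‖Cv c G u‖ ≤ C := by
  refine ⟨(N:ℝ)⁻¹ * ∑ k : Fin N, ∑ l : Fin N, |c (df k l)| * g * g, fun G h => ?_⟩
  rw [Cv, norm_mul, norm_inv, Complex.norm_natCast]
  refine mul_le_mul_of_nonneg_left ?_ (by positivity)
  refine (norm_sum_le _ _).trans (Finset.sum_le_sum fun a _ => ?_)
  refine (norm_sum_le _ _).trans (Finset.sum_le_sum fun b _ => ?_)
  rw [norm_mul, norm_mul, Complex.norm_real, Real.norm_eq_abs]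
  have := h.pos
  exact mul_le_mul (mul_le_mul_of_nonneg_left (h.ent _ _) (abs_nonneg _)) (h.tu _) (norm_nonneg _) (by positivity)

set_option maxHeartbeats 1000000 in
/-- the approximate equation -/
lemma ibp_main {Ω : Type} [MeasurableSpace Ω] (P : Measure Ω) [IsProbabilityMeasure P]
    (X : ℤ → ℤ → Ω → ℝ) (hX : StatGauss P X) (c : ℤ → ℝ)
    (hcov : ∀ j k l m : ℤ, ∫ ω, X j k ω * X l m ω ∂P = if l - j = m - k then c (l - j) else 0)
    (N : ℕ) (hN : 0 < N) {z : ℂ} (hz : 0 < z.im) (u : ℤ) :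
    ‖∫ ω, star (Tu (Res z (scaledW X N ω)) u) * ((if u = 0 then 1 else 0) +
      z * Tu (Res z (scaledW X N ω)) u + 2 * Cv c (Res z (scaledW X N ω)) u) ∂P‖
      ≤ (2 * |(u : ℝ)| + 6) * (z.im⁻¹) ^ 3 * (Gam c N / N) := by
  have hg : ∀ ω, GoodG (Res z (scaledW X N ω)) z.im⁻¹ := fun ω => goodG_res (scaledW_symm X N ω) hz
  have hg' : ∀ y : Fin N × Fin N → ℝ, GoodG (Res z (Mx y)) z.im⁻¹ := fun y => goodG_res (Mx_symm y) hz
  have hFc : ∀ k p, Continuous fun y : Fin N × Fin N → ℝ => Res z (Mx y) k p * star (Tu (Res z (Mx y)) u) :=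
    fun k p => (Mx_res_cont hz k p).mul (tu_cont _ (Mx_res_cont hz) u).star
  have hFb : ∀ k p, ∀ y : Fin N × Fin N → ℝ, ‖Res z (Mx y) k p * star (Tu (Res z (Mx y)) u)‖ ≤ z.im⁻¹ * z.im⁻¹ := by
    intro k p y
    rw [norm_mul, norm_star]
    exact mul_le_mul ((hg' y).ent _ _) ((hg' y).tu u) (norm_nonneg _) (hg' y).pos
  have hXF : ∀ (a b k p : Fin N), Integrable (fun ω => (X ((a : ℕ) + 1) ((b : ℕ) + 1) ω : ℂ) * (Res z (scaledW X N ω) k p * star (Tu (Res z (scaledW X N ω)) u))) P :=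
    fun a b k p => bdd_int' P X hX N _ _ _ (hFc k p) _ (hFb k p)
  have hDF : ∀ (j k p : Fin N), Integrable (fun ω => DF (Res z (scaledW X N ω)) (K1 c j k) k p u) P := by
    intro j k p
    obtain ⟨C, hC⟩ := DF_bound (N := N) z.im⁻¹ (by positivity) (K1 c j k) k p u
    exact bdd_int P X hX N (fun y => DF (Res z (Mx y)) (K1 c j k) k p u) (df_cont _ (Mx_res_cont hz) _ k p u) C (fun y => hC _ (hg' y))
  have hCv : Integrable (fun ω => 2 * star (Tu (Res z (scaledW X N ω)) u) * Cv c (Res z (scaledW X N ω)) u) P := by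
    obtain ⟨C, hC⟩ := cv_bound (N := N) c u z.im⁻¹
    refine bdd_int P X hX N (fun y => 2 * star (Tu (Res z (Mx y)) u) * Cv c (Res z (Mx y)) u)
      ((continuous_const.mul (tu_cont _ (Mx_res_cont hz) u).star).mul (cv_cont _ (Mx_res_cont hz) c u)) (2 * z.im⁻¹ * C) fun y => ?_
    rw [norm_mul, norm_mul, norm_star, Complex.norm_ofNat]
    have := hg' y
    exact mul_le_mul (mul_le_mul_of_nonneg_left (this.tu u) (by norm_num)) (hC _ this) (norm_nonneg _) (by positivity)
  have hMF : ∀ (j k p : Fin N), Integrable (fun ω => (scaledW X N ω j k : ℂ) * (Res z (scaledW X N ω) k p * star (Tu (Res z (scaledW X N ω)) u))) P := by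
    intro j k p
    refine (((hXF j k k p).add (hXF k j k p)).const_mul ((√N)⁻¹ : ℂ)).congr (ae_of_all _ fun ω => ?_)
    simp only [scaledW, Pi.add_apply]
    push_cast; ring
  have hE : ∀ (j k p : Fin N), ∫ ω, (scaledW X N ω j k : ℂ) * (Res z (scaledW X N ω) k p * star (Tu (Res z (scaledW X N ω)) u)) ∂P
      = ∫ ω, (2 * (N : ℂ)⁻¹) * DF (Res z (scaledW X N ω)) (K1 c j k) k p u ∂P := by
    intro j k p
    have e1 : ∫ ω, (scaledW X N ω j k : ℂ) * (Res z (scaledW X N ω) k p * star (Tu (Res z (scaledW X N ω)) u)) ∂P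
      = ((√N)⁻¹ : ℂ) * ∫ ω, ((X ((j : ℕ) + 1) ((k : ℕ) + 1) ω : ℂ) * (Res z (scaledW X N ω) k p * star (Tu (Res z (scaledW X N ω)) u)) + (X ((k : ℕ) + 1) ((j : ℕ) + 1) ω : ℂ) * (Res z (scaledW X N ω) k p * star (Tu (Res z (scaledW X N ω)) u))) ∂P := by
      rw [← integral_const_mul]
      refine integral_congr_ae (ae_of_all _ fun ω => ?_)
      simp only [scaledW]
      push_cast; ring
    rw [e1, integral_add (hXF j k k p) (hXF k j k p), ibp_entry P X hX c hcov N hz u, ibp_entry P X hX c hcov N hz u, K1_swap c j k,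
      integral_const_mul, integral_const_mul]
    have : ((√N : ℝ) : ℂ)⁻¹ * ((√N : ℝ) : ℂ)⁻¹ = (N : ℂ)⁻¹ := by
      rw [← mul_inv, ← Complex.ofReal_mul, Real.mul_self_sqrt (by positivity)]
      simp
    rw [← this]
    push_cast; ring
  have e2 : ∫ ω, star (Tu (Res z (scaledW X N ω)) u) * ((if u = 0 then 1 else 0) +
      z * Tu (Res z (scaledW X N ω)) u + 2 * Cv c (Res z (scaledW X N ω)) u) ∂P
      = ∫ ω, ((N : ℂ)⁻¹ * (∑ j, ∑ k, ∑ p, (if df j p = u then (scaledW X N ω j k : ℂ) * (Res z (scaledW X N ω) k p * star (Tu (Res z (scaledW X N ω)) u)) else 0))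
      + 2 * star (Tu (Res z (scaledW X N ω)) u) * Cv c (Res z (scaledW X N ω)) u) ∂P := by
    refine integral_congr_ae (ae_of_all _ fun ω => ?_)
    simp only
    rw [← res_ident (A := scaledW X N ω) (scaledW_symm X N ω) hz hN u]
    rw [mul_add, mul_left_comm]
    congr 1
    · congr 1
      simp only [Finset.mul_sum]
      refine Finset.sum_congr rfl fun j _ => Finset.sum_congr rfl fun k _ => Finset.sum_congr rfl fun p _ => ?_
      split_ifs
      · ring
      · simp
    · ring
  have hI1 : ∀ (F : Fin N → Fin N → Fin N → Ω → ℂ), (∀ j k p, Integrable (F j k p) P) →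
      Integrable (fun ω => ∑ j, ∑ k, ∑ p, (if df j p = u then F j k p ω else 0)) P ∧
      ∫ ω, ∑ j, ∑ k, ∑ p, (if df j p = u then F j k p ω else 0) ∂P
        = ∑ j, ∑ k, ∑ p, (if df j p = u then ∫ ω, F j k p ω ∂P else 0) := by
    intro F hF
    have i1 : ∀ j k p, Integrable (fun ω => (if df j p = u then F j k p ω else 0)) P := by
      intro j k p
      split_ifs
      · exact hF j k p
      · exact integrable_zero _ _ _
    have i2 : ∀ j k, Integrable (fun ω => ∑ p, (if df j p = u then F j k p ω else 0)) P := fun j k =>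
      integrable_finsetSum _ fun p _ => i1 j k p
    have i3 : ∀ j, Integrable (fun ω => ∑ k, ∑ p, (if df j p = u then F j k p ω else 0)) P := fun j =>
      integrable_finsetSum _ fun p _ => i2 j p
    refine ⟨integrable_finsetSum _ fun p _ => i3 p, ?_⟩
    rw [integral_finsetSum _ fun j _ => i3 j]
    refine Finset.sum_congr rfl fun j _ => ?_
    rw [integral_finsetSum _ fun k _ => i2 j k]
    refine Finset.sum_congr rfl fun k _ => ?_
    rw [integral_finsetSum _ fun p _ => i1 j k p]
    refine Finset.sum_congr rfl fun p _ => ?_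
    split_ifs <;> simp
  have hA := hI1 (fun j k p ω => (scaledW X N ω j k : ℂ) * (Res z (scaledW X N ω) k p * star (Tu (Res z (scaledW X N ω)) u))) hMF
  have hB := hI1 (fun j k p ω => (2 * (N : ℂ)⁻¹) * DF (Res z (scaledW X N ω)) (K1 c j k) k p u) (fun j k p => (hDF j k p).const_mul _)
  rw [e2, integral_add (hA.1.const_mul _) hCv, integral_const_mul, hA.2]
  simp only [hE]
  rw [← hB.2, ← integral_const_mul, ← integral_add (hB.1.const_mul _) hCv]
  refine (norm_integral_le_of_norm_le_const (ae_of_all _ fun ω => path_bound (hg ω) c u hN)).trans ?_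
  simp


lemma shift_sum {E : Type} [AddCommMonoid E] (F : ℤ → E) (I S : Finset ℤ) (t : ℤ) (h0 : ∀ v, v ∉ I → F v = 0)
    (hS : ∀ v ∈ I, v - t ∈ S) : ∑ s ∈ S, F (t + s) = ∑ v ∈ I, F v := by
  classical
  have h1 : ∑ s ∈ S, F (t + s) = ∑ v ∈ S.image (fun s => t + s), F v := by
    rw [Finset.sum_image]
    intro a _ b _ hab
    simpa using hab
  rw [h1]
  symm
  refine Finset.sum_subset ?_ fun x _ hx => h0 x hx
  intro v hv
  rw [Finset.mem_image]
  exact ⟨v - t, hS v hv, by ring⟩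

lemma conv_bound {N : ℕ} {G : Matrix (Fin N) (Fin N) ℂ} {g : ℝ}
    (hbil : ∀ a b : Fin N → ℂ, ‖∑ i, ∑ j, a i * G i j * b j‖ ≤ g / 2 * (∑ i, ‖a i‖ ^ 2 + ∑ i, ‖b i‖ ^ 2))
    (hg : 0 ≤ g) (I : Finset ℤ) (a b : ℤ → ℂ) :
    ‖∑ v ∈ I, ∑ u ∈ I, a v * Tu G (u - v) * b u‖ ≤ g / 2 * (∑ v ∈ I, ‖a v‖ ^ 2 + ∑ v ∈ I, ‖b v‖ ^ 2) := by
  classical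
  rcases Nat.eq_zero_or_pos N with h0 | hN
  · subst h0
    simp only [Tu, Finset.univ_eq_empty, Finset.sum_empty, mul_zero, zero_mul, Finset.sum_const_zero, norm_zero]
    positivity
  have hNr : (0:ℝ) < N := by exact_mod_cast hN
  have hN' : (N : ℂ) ≠ 0 := by exact_mod_cast hN.ne'
  set a' : ℤ → ℂ := fun v => if v ∈ I then a v else 0 with ha'
  set b' : ℤ → ℂ := fun v => if v ∈ I then b v else 0 with hb'
  set S : Finset ℤ := (I ×ˢ (Finset.univ : Finset (Fin N))).image (fun q => q.1 - ((q.2 : ℕ) : ℤ)) with hS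
  have hmem : ∀ v ∈ I, ∀ j : Fin N, v - ((j : ℕ) : ℤ) ∈ S := by
    intro v hv j
    rw [hS, Finset.mem_image]
    exact ⟨(v, j), by simp [hv], rfl⟩
  have e1 : ∀ j k : Fin N, ∑ s ∈ S, a' (((j : ℕ) : ℤ) + s) * b' (((k : ℕ) : ℤ) + s)
      = ∑ v ∈ I, ∑ u ∈ I, if df j k = u - v then a v * b u else 0 := by
    intro j k
    have := shift_sum (fun v => a' v * b' (v + df j k)) I S ((j : ℕ) : ℤ) (by intro v hv; simp [ha', hv]) (fun v hv => hmem v hv j)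
    have e : ∀ s : ℤ, ((j : ℕ) : ℤ) + s + df j k = ((k : ℕ) : ℤ) + s := by intro s; unfold df; ring
    simp only [e] at this
    rw [this]
    refine Finset.sum_congr rfl fun v hv => ?_
    have : ∀ u, (if df j k = u - v then a v * b u else 0) = if u = v + df j k then a v * b u else 0 := by
      intro u
      refine if_congr ?_ rfl rfl
      constructor <;> intro h <;> omega
    simp only [this, Finset.sum_ite_eq']
    simp only [ha', hb', if_pos hv]
    split_ifs <;> simp
  have e2 : ∑ v ∈ I, ∑ u ∈ I, a v * Tu G (u - v) * b u
      = (N : ℂ)⁻¹ * ∑ s ∈ S, ∑ j : Fin N, ∑ k : Fin N, a' (((j : ℕ) : ℤ) + s) * G j k * b' (((k : ℕ) : ℤ) + s) := by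
    have r1 : ∑ s ∈ S, ∑ j : Fin N, ∑ k : Fin N, a' (((j : ℕ) : ℤ) + s) * G j k * b' (((k : ℕ) : ℤ) + s)
        = ∑ j : Fin N, ∑ k : Fin N, G j k * ∑ s ∈ S, a' (((j : ℕ) : ℤ) + s) * b' (((k : ℕ) : ℤ) + s) := by
      rw [Finset.sum_comm]
      refine Finset.sum_congr rfl fun j _ => ?_
      rw [Finset.sum_comm]
      refine Finset.sum_congr rfl fun k _ => ?_
      rw [Finset.mul_sum]
      refine Finset.sum_congr rfl fun s _ => ?_
      ring
    have r2 : ∑ j : Fin N, ∑ k : Fin N, G j k * ∑ v ∈ I, ∑ u ∈ I, (if df j k = u - v then a v * b u else 0)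
        = ∑ v ∈ I, ∑ u ∈ I, ∑ j : Fin N, ∑ k : Fin N, G j k * (if df j k = u - v then a v * b u else 0) := by
      simp only [Finset.mul_sum]
      calc _ = ∑ j : Fin N, ∑ v ∈ I, ∑ k : Fin N, ∑ u ∈ I, G j k * (if df j k = u - v then a v * b u else 0) :=
            Finset.sum_congr rfl fun j _ => Finset.sum_comm
        _ = ∑ v ∈ I, ∑ j : Fin N, ∑ k : Fin N, ∑ u ∈ I, G j k * (if df j k = u - v then a v * b u else 0) := Finset.sum_comm
        _ = ∑ v ∈ I, ∑ j : Fin N, ∑ u ∈ I, ∑ k : Fin N, G j k * (if df j k = u - v then a v * b u else 0) :=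
            Finset.sum_congr rfl fun v _ => Finset.sum_congr rfl fun j _ => Finset.sum_comm
        _ = _ := Finset.sum_congr rfl fun v _ => Finset.sum_comm
    rw [r1]
    simp only [e1]
    rw [r2, Finset.mul_sum]
    refine Finset.sum_congr rfl fun v _ => ?_
    rw [Finset.mul_sum]
    refine Finset.sum_congr rfl fun u _ => ?_
    rw [Tu]
    simp only [Finset.mul_sum, Finset.sum_mul]
    refine Finset.sum_congr rfl fun j _ => Finset.sum_congr rfl fun k _ => ?_
    split_ifs
    · ring
    · simp
  have e3 : ∀ (x x' : ℤ → ℂ), x' = (fun v => if v ∈ I then x v else 0) →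
      ∑ s ∈ S, ∑ j : Fin N, ‖x' (((j : ℕ) : ℤ) + s)‖ ^ 2 = N * ∑ v ∈ I, ‖x v‖ ^ 2 := by
    intro x x' hx
    rw [Finset.sum_comm]
    have : ∀ j : Fin N, ∑ s ∈ S, ‖x' (((j : ℕ) : ℤ) + s)‖ ^ 2 = ∑ v ∈ I, ‖x v‖ ^ 2 := by
      intro j
      rw [shift_sum (fun v => ‖x' v‖ ^ 2) I S ((j : ℕ) : ℤ) (by intro v hv; simp [hx, hv]) (fun v hv => hmem v hv j)]
      refine Finset.sum_congr rfl fun v hv => ?_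
      simp [hx, hv]
    simp [this]
  rw [e2, norm_mul, norm_inv, Complex.norm_natCast, inv_mul_le_iff₀ hNr]
  refine (norm_sum_le _ _).trans ?_
  refine (Finset.sum_le_sum fun s _ => hbil (fun j => a' (((j : ℕ) : ℤ) + s)) (fun k => b' (((k : ℕ) : ℤ) + s))).trans ?_
  rw [← Finset.mul_sum, Finset.sum_add_distrib, e3 a a' rfl, e3 b b' rfl]
  apply le_of_eq; ring

lemma tu_l2 {N : ℕ} {G : Matrix (Fin N) (Fin N) ℂ} {g : ℝ} (h : GoodG G g) (I : Finset ℤ) :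
    ∑ v ∈ I, ‖Tu G v‖ ^ 2 ≤ g ^ 2 := by
  classical
  rcases Nat.eq_zero_or_pos N with h0 | hN
  · subst h0
    simp [Tu]
    positivity
  have hNr : (0:ℝ) < N := by exact_mod_cast hN
  have e1 : ∀ v, ‖Tu G v‖ ^ 2 ≤ (N : ℝ)⁻¹ * ∑ j, ∑ k, (if df j k = v then ‖G j k‖ ^ 2 else 0) := by
    intro v
    have f1 : ∀ j, ‖∑ k, (if df j k = v then G j k else 0)‖ ^ 2 ≤ ∑ k, (if df j k = v then ‖G j k‖ ^ 2 else 0) := by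
      intro j
      by_cases hk : ∃ k, df j k = v
      · obtain ⟨k, hk⟩ := hk
        have hne : ∀ b ∈ Finset.univ, b ≠ k → ¬ df j b = v := fun b _ hb hb' => hb (df_inj_right (hb'.trans hk.symm))
        rw [Finset.sum_eq_single k (fun b hb hbk => if_neg (hne b hb hbk)) (by simp),
          Finset.sum_eq_single k (fun b hb hbk => if_neg (hne b hb hbk)) (by simp), if_pos hk, if_pos hk]
      · push Not at hk
        simp [hk]
    rw [Tu, norm_mul, norm_inv, Complex.norm_natCast, mul_pow]
    have f2 : ‖∑ j, ∑ k, (if df j k = v then G j k else 0)‖ ^ 2 ≤ N * ∑ j, ∑ k, (if df j k = v then ‖G j k‖ ^ 2 else 0) := by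
      have := sq_sum_le_card_mul_sum_sq (s := (Finset.univ : Finset (Fin N))) (f := fun j => ‖∑ k, (if df j k = v then G j k else 0)‖)
      rw [Finset.card_univ, Fintype.card_fin] at this
      refine (pow_le_pow_left₀ (norm_nonneg _) (norm_sum_le _ _) 2).trans (this.trans ?_)
      exact mul_le_mul_of_nonneg_left (Finset.sum_le_sum fun j _ => f1 j) hNr.le
    refine (mul_le_mul_of_nonneg_left f2 (by positivity)).trans (le_of_eq ?_)
    field_simp
  refine (Finset.sum_le_sum fun v _ => e1 v).trans ?_
  rw [← Finset.mul_sum, inv_mul_le_iff₀ hNr]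
  calc ∑ v ∈ I, ∑ j, ∑ k, (if df j k = v then ‖G j k‖ ^ 2 else 0)
      = ∑ j, ∑ k, ∑ v ∈ I, (if df j k = v then ‖G j k‖ ^ 2 else 0) := by
        rw [Finset.sum_comm]
        exact Finset.sum_congr rfl fun j _ => Finset.sum_comm
    _ ≤ ∑ j, ∑ k, ‖G j k‖ ^ 2 := by
        refine Finset.sum_le_sum fun j _ => Finset.sum_le_sum fun k _ => ?_
        rw [Finset.sum_ite_eq]
        split_ifs
        · exact le_rfl
        · positivity
    _ ≤ ∑ j : Fin N, g ^ 2 := Finset.sum_le_sum fun j _ => h.row j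
    _ = N * g ^ 2 := by simp

lemma tu_neg {N : ℕ} {G : Matrix (Fin N) (Fin N) ℂ} {g : ℝ} (h : GoodG G g) (v : ℤ) :
    Tu G (-v) = Tu G v := by
  rw [Tu, Tu, Finset.sum_comm]
  congr 1
  refine Finset.sum_congr rfl fun j _ => Finset.sum_congr rfl fun k _ => ?_
  rw [h.symm k j]
  refine if_congr ?_ rfl rfl
  unfold df; omega

lemma cv_eq {N : ℕ} (c : ℤ → ℝ) (G : Matrix (Fin N) (Fin N) ℂ) (u : ℤ) (I : Finset ℤ)
    (hI : ∀ k l : Fin N, df k l ∈ I) : Cv c G u = ∑ v ∈ I, (c v : ℂ) * Tu G v * Tu G (u - v) := by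
  classical
  have : ∀ v, (c v : ℂ) * Tu G v * Tu G (u - v) = (N : ℂ)⁻¹ * ∑ k, ∑ l, if df k l = v then (c (df k l) : ℂ) * G k l * Tu G (u - df k l) else 0 := by
    intro v
    conv_lhs => rw [Tu]
    simp only [Finset.mul_sum, Finset.sum_mul]
    refine Finset.sum_congr rfl fun j _ => Finset.sum_congr rfl fun k _ => ?_
    split_ifs with hv
    · rw [hv]; ring
    · simp
  simp only [this]
  rw [← Finset.mul_sum, Cv]
  congr 1
  symm
  rw [Finset.sum_comm]
  refine Finset.sum_congr rfl fun j _ => ?_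
  rw [Finset.sum_comm]
  refine Finset.sum_congr rfl fun k _ => ?_
  rw [Finset.sum_ite_eq, if_pos (hI j k)]


/-- nonzero offsets of size at most K -/
def JK (K : ℕ) : Finset ℤ := (Finset.Icc (-(K:ℤ)) K).erase 0

lemma energy {N : ℕ} {G : Matrix (Fin N) (Fin N) ℂ} {g : ℝ} (hG : GoodG G g)
    (hbil : ∀ a b : Fin N → ℂ, ‖∑ i, ∑ j, a i * G i j * b j‖ ≤ g / 2 * (∑ i, ‖a i‖ ^ 2 + ∑ i, ‖b i‖ ^ 2))
    (c : ℤ → ℝ) (hc0 : 0 < c 0) (hcb : ∀ u, |c u| ≤ c 0) (K : ℕ) (δ : ℝ) (hδ : 0 ≤ δ)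
    (hδ' : ∀ v : ℤ, (K:ℤ) < |v| → (c v / c 0) ^ 2 ≤ δ) (z : ℂ) :
    (z.im - 4 * c 0 * g) * ∑ u ∈ JK K, ‖Tu G u‖ ^ 2
      ≤ (∑ u ∈ JK K, star (Tu G u) * (z * Tu G u + 2 * Cv c G u)).im + c 0 * g ^ 3 * δ := by
  classical
  have hg := hG.pos
  set L : Finset ℤ := Finset.Icc (-((N:ℤ) + K)) (N + K) with hL
  have hJL : JK K ⊆ L := by
    intro v hv
    simp only [JK, Finset.mem_erase, Finset.mem_Icc] at hv
    rw [hL, Finset.mem_Icc]; omega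
  have hLd : ∀ k l : Fin N, df k l ∈ L := by
    intro k l
    rw [hL, Finset.mem_Icc]; unfold df
    have := k.2; have := l.2; omega
  have h0L : (0:ℤ) ∈ L := by rw [hL, Finset.mem_Icc]; omega
  set Q := ∑ u ∈ JK K, ‖Tu G u‖ ^ 2 with hQ
  have hQ0 : 0 ≤ Q := Finset.sum_nonneg fun _ _ => by positivity
  set a : ℤ → ℂ := fun v => if v = 0 then 0 else ((c v / c 0 : ℝ) : ℂ) * Tu G v with ha
  set b : ℤ → ℂ := fun u => if u ∈ JK K then star (Tu G u) else 0 with hb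
  have hcc : (c 0 : ℂ) ≠ 0 := by exact_mod_cast hc0.ne'
  have hcv : ∀ u, Cv c G u = c 0 * Tu G 0 * Tu G u + c 0 * ∑ v ∈ L, a v * Tu G (u - v) := by
    intro u
    rw [cv_eq c G u L hLd, ← Finset.add_sum_erase _ _ h0L, sub_zero, ← Finset.add_sum_erase (a := (0:ℤ)) L (fun v => a v * Tu G (u - v)) h0L]
    simp only [ha, if_true, zero_mul, zero_add, Finset.mul_sum]
    congr 1
    refine Finset.sum_congr rfl fun v hv => ?_
    rw [if_neg (Finset.ne_of_mem_erase hv)]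
    push_cast
    field_simp
  have hS : ∑ u ∈ JK K, star (Tu G u) * ∑ v ∈ L, a v * Tu G (u - v)
      = ∑ v ∈ L, ∑ u ∈ L, a v * Tu G (u - v) * b u := by
    rw [Finset.sum_comm]
    rw [← Finset.sum_subset hJL]
    · refine Finset.sum_congr rfl fun u hu => ?_
      rw [Finset.mul_sum]
      refine Finset.sum_congr rfl fun v _ => ?_
      simp only [hb, if_pos hu]; ring
    · intro u _ hu
      simp [hb, hu]
  have hB : ∑ v ∈ L, ‖b v‖ ^ 2 = Q := by
    rw [hQ, ← Finset.sum_subset hJL]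
    · refine Finset.sum_congr rfl fun u hu => ?_
      simp [hb, hu]
    · intro u _ hu
      simp [hb, hu]
  have hA : ∑ v ∈ L, ‖a v‖ ^ 2 ≤ Q + δ * g ^ 2 := by
    rw [← Finset.sum_sdiff hJL, add_comm]
    refine add_le_add (Finset.sum_le_sum fun u hu => ?_) ?_
    · have hu0 : u ≠ 0 := Finset.ne_of_mem_erase hu
      simp only [ha, if_neg hu0, norm_mul, Complex.norm_real, Real.norm_eq_abs, abs_div, abs_of_pos hc0]
      have : |c u| / c 0 ≤ 1 := (div_le_one hc0).2 (hcb u)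
      refine pow_le_pow_left₀ (by positivity) ?_ 2
      exact mul_le_of_le_one_left (norm_nonneg _) this
    · refine le_trans ?_ (mul_le_mul_of_nonneg_left (tu_l2 hG (L \ JK K)) hδ)
      rw [Finset.mul_sum]
      refine Finset.sum_le_sum fun v hv => ?_
      by_cases hv0 : v = 0
      · have : a v = 0 := by simp only [ha, if_pos hv0]
        rw [this, norm_zero, zero_pow two_ne_zero]; positivity
      · have hvK : (K:ℤ) < |v| := by
          have := (Finset.mem_sdiff.1 hv).2
          simp only [JK, Finset.mem_erase, Finset.mem_Icc, not_and] at this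
          have := this hv0
          by_contra hcon
          push Not at hcon
          exact this (abs_le.1 hcon).1 (abs_le.1 hcon).2
        simp only [ha, if_neg hv0, norm_mul, Complex.norm_real, Real.norm_eq_abs, mul_pow, sq_abs]
        exact mul_le_mul_of_nonneg_right (hδ' v hvK) (by positivity)
  have hstar : ∀ u, star (Tu G u) * Tu G u = ((‖Tu G u‖ ^ 2 : ℝ) : ℂ) := by
    intro u
    have := Complex.conj_mul' (Tu G u)
    rw [Complex.star_def, this]; push_cast; rfl
  have hsum : ∑ u ∈ JK K, star (Tu G u) * (z * Tu G u + 2 * Cv c G u)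
      = z * Q + 2 * (c 0 * Tu G 0 * Q) + 2 * (c 0 * ∑ v ∈ L, ∑ u ∈ L, a v * Tu G (u - v) * b u) := by
    have hQc : (Q : ℂ) = ∑ u ∈ JK K, star (Tu G u) * Tu G u := by
      rw [hQ]; push_cast
      refine Finset.sum_congr rfl fun u _ => ?_
      rw [hstar]; push_cast; rfl
    rw [← hS, hQc]
    simp only [Finset.mul_sum, ← Finset.sum_add_distrib]
    refine Finset.sum_congr rfl fun u _ => ?_
    rw [hcv]
    simp only [Finset.mul_sum, mul_add]
    rw [← add_assoc]
    congr 1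
    · ring
    · refine Finset.sum_congr rfl fun v _ => ?_
      ring
  have hconv := conv_bound hbil hg L a b
  rw [hB] at hconv
  have h1 : ‖2 * ((c 0 : ℂ) * Tu G 0 * Q)‖ ≤ 2 * (c 0 * g * Q) := by
    simp only [norm_mul, Complex.norm_real, Real.norm_eq_abs, abs_of_pos hc0, abs_of_nonneg hQ0, Complex.norm_ofNat]
    have := hG.tu 0
    gcongr
  have h2 : ‖2 * ((c 0 : ℂ) * ∑ v ∈ L, ∑ u ∈ L, a v * Tu G (u - v) * b u)‖ ≤ 2 * (c 0 * (g / 2 * (Q + δ * g ^ 2 + Q))) := by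
    rw [norm_mul, norm_mul, Complex.norm_real, Real.norm_eq_abs, abs_of_pos hc0, Complex.norm_ofNat]
    have : g / 2 * (∑ v ∈ L, ‖a v‖ ^ 2 + Q) ≤ g / 2 * (Q + δ * g ^ 2 + Q) := by gcongr
    have := hconv.trans this
    gcongr
  rw [hsum, Complex.add_im, Complex.add_im]
  have e1 := (abs_le.1 ((Complex.abs_im_le_norm _).trans h1)).1
  have e2 := (abs_le.1 ((Complex.abs_im_le_norm _).trans h2)).1
  have e3 : (z * (Q : ℂ)).im = z.im * Q := by simp
  rw [e3]
  nlinarith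

/-- reduction of the self convolution at zero offset -/
lemma cv_zero {N : ℕ} {G : Matrix (Fin N) (Fin N) ℂ} {g : ℝ} (hG : GoodG G g)
    (c : ℤ → ℝ) (hcb : ∀ u, |c u| ≤ c 0) (K : ℕ) (δ : ℝ) (hδ : 0 ≤ δ)
    (hδ' : ∀ v : ℤ, (K:ℤ) < |v| → |c v| ≤ δ) :
    ‖Cv c G 0 - c 0 * Tu G 0 ^ 2‖ ≤ c 0 * (∑ u ∈ JK K, ‖Tu G u‖ ^ 2) + δ * g ^ 2 := by
  classical
  set L : Finset ℤ := Finset.Icc (-((N:ℤ) + K)) (N + K) with hL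
  have hJL : JK K ⊆ L.erase 0 := by
    intro v hv
    simp only [JK, Finset.mem_erase, Finset.mem_Icc] at hv
    rw [hL, Finset.mem_erase, Finset.mem_Icc]; omega
  have hLd : ∀ k l : Fin N, df k l ∈ L := by
    intro k l
    rw [hL, Finset.mem_Icc]; unfold df
    have := k.2; have := l.2; omega
  have h0L : (0:ℤ) ∈ L := by rw [hL, Finset.mem_Icc]; omega
  have e : Cv c G 0 - c 0 * Tu G 0 ^ 2 = ∑ v ∈ L.erase 0, (c v : ℂ) * Tu G v ^ 2 := by
    rw [cv_eq c G 0 L hLd, ← Finset.add_sum_erase _ _ h0L]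
    simp only [zero_sub, tu_neg hG]
    rw [show (c 0 : ℂ) * Tu G 0 * Tu G 0 = c 0 * Tu G 0 ^ 2 by ring, add_sub_cancel_left]
    exact Finset.sum_congr rfl fun v _ => by ring
  rw [e, ← Finset.sum_sdiff hJL, add_comm]
  refine (norm_add_le _ _).trans (add_le_add ?_ ?_)
  · refine (norm_sum_le _ _).trans ?_
    rw [Finset.mul_sum]
    refine Finset.sum_le_sum fun v _ => ?_
    rw [norm_mul, norm_pow, Complex.norm_real, Real.norm_eq_abs]
    exact mul_le_mul_of_nonneg_right (hcb v) (by positivity)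
  · refine (norm_sum_le _ _).trans ?_
    refine le_trans ?_ (mul_le_mul_of_nonneg_left (tu_l2 hG (L.erase 0 \ JK K)) hδ)
    rw [Finset.mul_sum]
    refine Finset.sum_le_sum fun v hv => ?_
    rw [norm_mul, norm_pow, Complex.norm_real, Real.norm_eq_abs]
    refine mul_le_mul_of_nonneg_right (hδ' v ?_) (by positivity)
    have h1 := (Finset.mem_sdiff.1 hv).2
    have hv0 := Finset.ne_of_mem_erase (Finset.mem_sdiff.1 hv).1
    simp only [JK, Finset.mem_erase, Finset.mem_Icc, not_and] at h1
    by_contra hcon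
    push Not at hcon
    exact h1 hv0 (abs_le.1 hcon).1 (abs_le.1 hcon).2

/-- Cesaro -/
lemma gam_lim (c : ℤ → ℝ) (hc : Tendsto c cofinite (nhds 0)) :
    Tendsto (fun N : ℕ => Gam c N / N) atTop (nhds 0) := by
  have hp : Tendsto (fun n : ℕ => |c n|) atTop (nhds 0) := by
    have h1 : Tendsto (fun n : ℕ => (n : ℤ)) atTop cofinite := by
      rw [← Nat.cofinite_eq_atTop]; exact Nat.cast_injective.tendsto_cofinite
    simpa using (hc.comp h1).abs
  have hn : Tendsto (fun n : ℕ => |c (-(n:ℤ))|) atTop (nhds 0) := by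
    have h1 : Tendsto (fun n : ℕ => -(n : ℤ)) atTop cofinite := by
      rw [← Nat.cofinite_eq_atTop]
      exact Function.Injective.tendsto_cofinite (fun a b h => by simpa using h)
    simpa using (hc.comp h1).abs
  have h1 := hp.cesaro
  have h2 := hn.cesaro
  have h3 : Tendsto (fun N : ℕ => (|c N| + |c (-(N:ℤ))|) * (N:ℝ)⁻¹) atTop (nhds 0) := by
    simpa using (hp.add hn).mul (tendsto_inv_atTop_nhds_zero_nat (𝕜 := ℝ))
  have h4 := (h1.add h2).add h3
  simp only [add_zero] at h4
  refine squeeze_zero (fun N => div_nonneg (gam_nonneg c N) (Nat.cast_nonneg _)) (fun N => ?_) h4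
  have : Gam c N ≤ ∑ i ∈ Finset.range (N+1), |c i| + ∑ i ∈ Finset.range (N+1), |c (-(i:ℤ))| := by
    classical
    rw [Gam, ← Finset.sum_image (s := Finset.range (N+1)) (g := fun i : ℕ => (i:ℤ)) (f := fun v => |c v|) (fun a _ b _ h => by simpa using h),
      ← Finset.sum_image (s := Finset.range (N+1)) (g := fun i : ℕ => -(i:ℤ)) (f := fun v => |c v|) (fun a _ b _ h => by simpa using h)]
    rw [← Finset.sum_union_inter]
    refine le_trans ?_ (le_add_of_nonneg_right (Finset.sum_nonneg fun _ _ => abs_nonneg _))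
    refine Finset.sum_le_sum_of_subset_of_nonneg ?_ fun _ _ _ => abs_nonneg _
    intro v hv
    rw [Finset.mem_Icc] at hv
    simp only [Finset.mem_union, Finset.mem_image, Finset.mem_range]
    rcases le_total 0 v with h | h
    · left; exact ⟨v.toNat, by omega, by omega⟩
    · right; exact ⟨(-v).toNat, by omega, by omega⟩
  rw [Finset.sum_range_succ, Finset.sum_range_succ] at this
  rw [div_eq_mul_inv]
  have := mul_le_mul_of_nonneg_right this (inv_nonneg.2 (Nat.cast_nonneg N : (0:ℝ) ≤ N))
  refine this.trans (le_of_eq ?_)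
  ring

lemma lim_aux (f : ℕ → ℝ) (hf : ∀ N, 0 ≤ f N) (M : ℝ) (hM : 0 ≤ M)
    (h : ∀ δ > 0, ∃ r : ℕ → ℝ, Tendsto r atTop (nhds 0) ∧ ∀ᶠ N in atTop, f N ≤ r N + M * δ) :
    Tendsto f atTop (nhds 0) := by
  rw [Metric.tendsto_nhds]
  intro ε hε
  obtain ⟨r, hr, hfr⟩ := h (ε / (2 * (M + 1))) (by positivity)
  have h2 : ∀ᶠ N in atTop, r N < ε / 2 := hr.eventually_lt_const (by positivity)
  filter_upwards [hfr, h2] with N h1 h2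
  rw [Real.dist_eq, sub_zero, abs_of_nonneg (hf N)]
  have : M * (ε / (2 * (M + 1))) ≤ ε / 2 := by
    rw [mul_div_assoc', div_le_div_iff₀ (by positivity) (by positivity)]
    nlinarith
  linarith

lemma cof_bound (c : ℤ → ℝ) (hc : Tendsto c cofinite (nhds 0)) (δ : ℝ) (hδ : 0 < δ) (K : ℕ) :
    ∃ K' : ℕ, K ≤ K' ∧ ∀ v : ℤ, (K':ℤ) < |v| → |c v| ≤ δ := by
  have h := hc.abs
  rw [abs_zero] at h
  have h1 : ∀ᶠ v in cofinite, |c v| ≤ δ := h.eventually_le_const hδ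
  rw [eventually_cofinite] at h1
  obtain ⟨B, hB⟩ := (h1.image (fun v => |v|)).bddAbove
  refine ⟨max K B.toNat, le_max_left _ _, fun v hv => ?_⟩
  by_contra hcon
  have := hB (Set.mem_image_of_mem (fun v => |v|) hcon)
  replace this : |v| ≤ B := this
  have h3 : ((max K B.toNat : ℕ) : ℤ) ≥ B := by
    push_cast
    exact le_trans (Int.self_le_toNat B) (le_max_right _ _)
  omega

lemma tu_int {Ω : Type} [MeasurableSpace Ω] (P : Measure Ω) [IsProbabilityMeasure P]
    (X : ℤ → ℤ → Ω → ℝ) (hX : StatGauss P X) (N : ℕ) {z : ℂ} (hz : 0 < z.im) (u : ℤ) :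
    Integrable (fun ω => ‖Tu (Res z (scaledW X N ω)) u‖ ^ 2) P := by
  have := bdd_int P X hX N (fun y => ((‖Tu (Res z (Mx y)) u‖ ^ 2 : ℝ) : ℂ))
    (Complex.continuous_ofReal.comp ((tu_cont _ (Mx_res_cont hz) u).norm.pow 2)) ((z.im⁻¹) ^ 2) (fun y => by
      rw [Complex.norm_real, Real.norm_eq_abs, abs_of_nonneg (by positivity)]
      exact pow_le_pow_left₀ (norm_nonneg _) ((goodG_res (Mx_symm y) hz).tu u) 2)
  exact this.re

lemma cvx_int {Ω : Type} [MeasurableSpace Ω] (P : Measure Ω) [IsProbabilityMeasure P]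
    (X : ℤ → ℤ → Ω → ℝ) (hX : StatGauss P X) (c : ℤ → ℝ) (N : ℕ) {z : ℂ} (hz : 0 < z.im) (u : ℤ) (k : ℂ) :
    Integrable (fun ω => star (Tu (Res z (scaledW X N ω)) u) * (k +
      z * Tu (Res z (scaledW X N ω)) u + 2 * Cv c (Res z (scaledW X N ω)) u)) P := by
  obtain ⟨C, hC⟩ := cv_bound (N := N) c u z.im⁻¹
  refine bdd_int P X hX N (fun y => star (Tu (Res z (Mx y)) u) * (k +
      z * Tu (Res z (Mx y)) u + 2 * Cv c (Res z (Mx y)) u))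
      ((tu_cont _ (Mx_res_cont hz) u).star.mul ((continuous_const.add (continuous_const.mul (tu_cont _ (Mx_res_cont hz) u))).add (continuous_const.mul (cv_cont _ (Mx_res_cont hz) c u)))) (z.im⁻¹ * (‖k‖ + ‖z‖ * z.im⁻¹ + 2 * C)) fun y => ?_
  have h := goodG_res (Mx_symm y) hz
  rw [norm_mul, norm_star]
  refine mul_le_mul (h.tu u) ?_ (norm_nonneg _) h.pos
  refine (norm_add₃_le).trans ?_
  rw [norm_mul, norm_mul, Complex.norm_ofNat]
  have := h.tu u
  have := hC _ h
  gcongr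

lemma tu_lim {Ω : Type} [MeasurableSpace Ω] (P : Measure Ω) [IsProbabilityMeasure P]
    (X : ℤ → ℤ → Ω → ℝ) (hX : StatGauss P X) (c : ℤ → ℝ)
    (hcov : ∀ j k l m : ℤ, ∫ ω, X j k ω * X l m ω ∂P = if l - j = m - k then c (l - j) else 0)
    (hc0 : 0 < c 0) (hcb : ∀ u, |c u| ≤ c 0) (hc : Tendsto c cofinite (nhds 0))
    {z : ℂ} (hz : 0 < z.im) (hz2 : 4 * c 0 * z.im⁻¹ < z.im) (K : ℕ) :
    Tendsto (fun N => ∫ ω, ∑ u ∈ JK K, ‖Tu (Res z (scaledW X N ω)) u‖ ^ 2 ∂P) atTop (nhds 0) := by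
  obtain ⟨κ, hκ⟩ : ∃ κ, κ = z.im - 4 * c 0 * z.im⁻¹ := ⟨_, rfl⟩
  have hκ0 : 0 < κ := by rw [hκ]; linarith
  refine lim_aux _ (fun N => integral_nonneg fun ω => Finset.sum_nonneg fun _ _ => by positivity)
    (κ⁻¹ * (c 0 * z.im⁻¹ ^ 3)) (by positivity) fun δ hδ => ?_
  obtain ⟨K', hK, hK'⟩ := cof_bound c hc (c 0 * √δ) (by positivity) K
  refine ⟨fun N => κ⁻¹ * ((∑ u ∈ JK K', (2 * |(u : ℝ)| + 6) * (z.im⁻¹) ^ 3) * (Gam c N / N)), ?_, ?_⟩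
  · have := ((gam_lim c hc).const_mul (∑ u ∈ JK K', (2 * |(u : ℝ)| + 6) * (z.im⁻¹) ^ 3)).const_mul κ⁻¹
    rw [mul_zero, mul_zero] at this
    exact this
  filter_upwards [eventually_gt_atTop 0] with N hN
  have hJ : JK K ⊆ JK K' := by
    intro v hv
    simp only [JK, Finset.mem_erase, Finset.mem_Icc] at hv ⊢
    omega
  have hδ' : ∀ v : ℤ, (K':ℤ) < |v| → (c v / c 0) ^ 2 ≤ δ := by
    intro v hv
    have h1 : |c v / c 0| ≤ √δ := by
      rw [abs_div, abs_of_pos hc0, div_le_iff₀ hc0, mul_comm]; exact hK' v hv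
    rw [← sq_abs, ← Real.sq_sqrt hδ.le]
    exact pow_le_pow_left₀ (abs_nonneg _) h1 2
  have hint : Integrable (fun ω => ∑ u ∈ JK K', star (Tu (Res z (scaledW X N ω)) u) *
      (z * Tu (Res z (scaledW X N ω)) u + 2 * Cv c (Res z (scaledW X N ω)) u)) P := by
    refine integrable_finsetSum _ fun u _ => ?_
    simpa using cvx_int P X hX c N hz u 0
  have e1 : κ * ∫ ω, ∑ u ∈ JK K', ‖Tu (Res z (scaledW X N ω)) u‖ ^ 2 ∂P ≤
      (∫ ω, ∑ u ∈ JK K', star (Tu (Res z (scaledW X N ω)) u) *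
      (z * Tu (Res z (scaledW X N ω)) u + 2 * Cv c (Res z (scaledW X N ω)) u) ∂P).im + c 0 * z.im⁻¹ ^ 3 * δ := by
    rw [← integral_const_mul]
    have : (∫ ω, ∑ u ∈ JK K', star (Tu (Res z (scaledW X N ω)) u) *
      (z * Tu (Res z (scaledW X N ω)) u + 2 * Cv c (Res z (scaledW X N ω)) u) ∂P).im
      = ∫ ω, (∑ u ∈ JK K', star (Tu (Res z (scaledW X N ω)) u) *
      (z * Tu (Res z (scaledW X N ω)) u + 2 * Cv c (Res z (scaledW X N ω)) u)).im ∂P := (integral_im hint).symm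
    rw [this]
    have h3 : c 0 * z.im⁻¹ ^ 3 * δ = ∫ ω, c 0 * z.im⁻¹ ^ 3 * δ ∂P := by simp
    have him : Integrable (fun ω => (∑ u ∈ JK K', star (Tu (Res z (scaledW X N ω)) u) *
      (z * Tu (Res z (scaledW X N ω)) u + 2 * Cv c (Res z (scaledW X N ω)) u)).im) P := hint.im
    rw [h3, ← integral_add him (integrable_const _)]
    refine integral_mono ((integrable_finsetSum _ fun u _ => tu_int P X hX N hz u).const_mul _) (him.add (integrable_const _)) fun ω => ?_
    rw [hκ]
    exact energy (goodG_res (scaledW_symm X N ω) hz) (res_bil (scaledW_symm X N ω) hz) c hc0 hcb K' δ hδ.le hδ' z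
  have e2 : (∫ ω, ∑ u ∈ JK K', star (Tu (Res z (scaledW X N ω)) u) *
      (z * Tu (Res z (scaledW X N ω)) u + 2 * Cv c (Res z (scaledW X N ω)) u) ∂P).im ≤
      (∑ u ∈ JK K', (2 * |(u : ℝ)| + 6) * (z.im⁻¹) ^ 3) * (Gam c N / N) := by
    refine (le_abs_self _).trans ((Complex.abs_im_le_norm _).trans ?_)
    rw [integral_finsetSum _ (fun u _ => by simpa using cvx_int P X hX c N hz u 0), Finset.sum_mul]
    refine (norm_sum_le _ _).trans (Finset.sum_le_sum fun u hu => ?_)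
    have := ibp_main P X hX c hcov N hN hz u
    simpa only [if_neg (Finset.ne_of_mem_erase hu), zero_add] using this
  have e3 : ∫ ω, ∑ u ∈ JK K, ‖Tu (Res z (scaledW X N ω)) u‖ ^ 2 ∂P ≤ ∫ ω, ∑ u ∈ JK K', ‖Tu (Res z (scaledW X N ω)) u‖ ^ 2 ∂P :=
    integral_mono (integrable_finsetSum _ fun u _ => tu_int P X hX N hz u) (integrable_finsetSum _ fun u _ => tu_int P X hX N hz u)
      fun ω => Finset.sum_le_sum_of_subset_of_nonneg hJ fun _ _ _ => by positivity
  refine e3.trans ?_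
  rw [mul_assoc κ⁻¹, ← mul_add, le_inv_mul_iff₀ hκ0]
  linarith

lemma s_lim {Ω : Type} [MeasurableSpace Ω] (P : Measure Ω) [IsProbabilityMeasure P]
    (X : ℤ → ℤ → Ω → ℝ) (hX : StatGauss P X) (c : ℤ → ℝ)
    (hcov : ∀ j k l m : ℤ, ∫ ω, X j k ω * X l m ω ∂P = if l - j = m - k then c (l - j) else 0)
    (hc0 : 0 < c 0) (hcb : ∀ u, |c u| ≤ c 0) (hc : Tendsto c cofinite (nhds 0))
    {z : ℂ} (hz : 0 < z.im) (hz2 : 4 * c 0 * z.im⁻¹ < z.im) :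
    Tendsto (fun N => ∫ ω, star (Tu (Res z (scaledW X N ω)) 0) * (1 + z * Tu (Res z (scaledW X N ω)) 0
      + 2 * c 0 * Tu (Res z (scaledW X N ω)) 0 ^ 2) ∂P) atTop (nhds 0) := by
  rw [tendsto_zero_iff_norm_tendsto_zero]
  have hg := fun N ω => goodG_res (scaledW_symm X N ω) hz
  refine lim_aux _ (fun N => norm_nonneg _) (2 * z.im⁻¹ * z.im⁻¹ ^ 2) (by positivity) fun δ hδ => ?_
  obtain ⟨K, -, hK⟩ := cof_bound c hc δ hδ 0
  refine ⟨fun N => (2 * |((0:ℤ) : ℝ)| + 6) * (z.im⁻¹) ^ 3 * (Gam c N / N) + 2 * z.im⁻¹ * c 0 * ∫ ω, ∑ u ∈ JK K, ‖Tu (Res z (scaledW X N ω)) u‖ ^ 2 ∂P, ?_, ?_⟩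
  · have := ((gam_lim c hc).const_mul ((2 * |((0:ℤ) : ℝ)| + 6) * (z.im⁻¹) ^ 3)).add
      ((tu_lim P X hX c hcov hc0 hcb hc hz hz2 K).const_mul (2 * z.im⁻¹ * c 0))
    rw [mul_zero, mul_zero, add_zero] at this
    exact this
  filter_upwards [eventually_gt_atTop 0] with N hN
  have h1 := ibp_main P X hX c hcov N hN hz 0
  simp only [if_true] at h1
  have i1 := cvx_int P X hX c N hz 0 1
  have i2 : Integrable (fun ω => star (Tu (Res z (scaledW X N ω)) 0) * (1 + z * Tu (Res z (scaledW X N ω)) 0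
      + 2 * c 0 * Tu (Res z (scaledW X N ω)) 0 ^ 2)) P := by
    refine bdd_int P X hX N (fun y => star (Tu (Res z (Mx y)) 0) * (1 + z * Tu (Res z (Mx y)) 0
      + 2 * c 0 * Tu (Res z (Mx y)) 0 ^ 2)) ?_ (z.im⁻¹ * (1 + ‖z‖ * z.im⁻¹ + 2 * c 0 * z.im⁻¹ ^ 2)) fun y => ?_
    · have := tu_cont _ (Mx_res_cont (N := N) hz) 0
      fun_prop
    · have h := goodG_res (Mx_symm y) hz
      have ht := h.tu 0
      rw [norm_mul, norm_star]
      refine mul_le_mul ht ?_ (norm_nonneg _) h.pos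
      refine (norm_add₃_le).trans ?_
      rw [norm_mul, norm_mul, norm_mul, Complex.norm_ofNat, norm_pow, Complex.norm_real, Real.norm_eq_abs, abs_of_pos hc0, norm_one]
      gcongr
  have e1 : ∫ ω, star (Tu (Res z (scaledW X N ω)) 0) * (1 + z * Tu (Res z (scaledW X N ω)) 0
      + 2 * c 0 * Tu (Res z (scaledW X N ω)) 0 ^ 2) ∂P
      = ∫ ω, star (Tu (Res z (scaledW X N ω)) 0) * (1 + z * Tu (Res z (scaledW X N ω)) 0
      + 2 * Cv c (Res z (scaledW X N ω)) 0) ∂P + ∫ ω, (star (Tu (Res z (scaledW X N ω)) 0) * (1 + z * Tu (Res z (scaledW X N ω)) 0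
      + 2 * c 0 * Tu (Res z (scaledW X N ω)) 0 ^ 2) - star (Tu (Res z (scaledW X N ω)) 0) * (1 + z * Tu (Res z (scaledW X N ω)) 0
      + 2 * Cv c (Res z (scaledW X N ω)) 0)) ∂P := by
    rw [integral_sub i2 i1]; ring
  rw [e1]
  refine (norm_add_le _ _).trans ?_
  have hQi : Integrable (fun ω => ∑ u ∈ JK K, ‖Tu (Res z (scaledW X N ω)) u‖ ^ 2) P := integrable_finsetSum _ fun u _ => tu_int P X hX N hz u
  have e2 : ‖∫ ω, (star (Tu (Res z (scaledW X N ω)) 0) * (1 + z * Tu (Res z (scaledW X N ω)) 0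
      + 2 * c 0 * Tu (Res z (scaledW X N ω)) 0 ^ 2) - star (Tu (Res z (scaledW X N ω)) 0) * (1 + z * Tu (Res z (scaledW X N ω)) 0
      + 2 * Cv c (Res z (scaledW X N ω)) 0)) ∂P‖ ≤ 2 * z.im⁻¹ * (c 0 * (∫ ω, ∑ u ∈ JK K, ‖Tu (Res z (scaledW X N ω)) u‖ ^ 2 ∂P) + δ * z.im⁻¹ ^ 2) := by
    refine (norm_integral_le_of_norm_le (((hQi.const_mul (c 0)).add (integrable_const (δ * z.im⁻¹ ^ 2))).const_mul (2 * z.im⁻¹)) (ae_of_all _ fun ω => ?_)).trans (le_of_eq ?_)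
    · have hcv := cv_zero (hg N ω) c hcb K δ hδ.le hK
      have : star (Tu (Res z (scaledW X N ω)) 0) * (1 + z * Tu (Res z (scaledW X N ω)) 0
        + 2 * c 0 * Tu (Res z (scaledW X N ω)) 0 ^ 2) - star (Tu (Res z (scaledW X N ω)) 0) * (1 + z * Tu (Res z (scaledW X N ω)) 0
        + 2 * Cv c (Res z (scaledW X N ω)) 0) = - (2 * star (Tu (Res z (scaledW X N ω)) 0) * (Cv c (Res z (scaledW X N ω)) 0 - c 0 * Tu (Res z (scaledW X N ω)) 0 ^ 2)) := by ring
      rw [this, norm_neg, norm_mul, norm_mul, norm_star, Complex.norm_ofNat]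
      exact mul_le_mul (mul_le_mul_of_nonneg_left ((hg N ω).tu 0) (by norm_num)) hcv (norm_nonneg _) (by positivity)
    · rw [integral_const_mul]
      congr 1
      simp only [Pi.add_apply]
      rw [integral_add (hQi.const_mul (c 0)) (integrable_const _), integral_const_mul]
      simp
  linarith

/-- semicircle density -/
def wd (γ x : ℝ) : ℝ := if |x| ≤ 2 * √γ then (2 * π * √γ)⁻¹ * √(4 - x ^ 2 / γ) else 0

lemma wd_nonneg (γ x : ℝ) : 0 ≤ wd γ x := by
  unfold wd; split_ifs
  · have := pi_pos; positivity
  · exact le_rfl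

lemma wd_eq (γ : ℝ) : wd γ = (Set.Icc (-(2 * √γ)) (2 * √γ)).indicator (fun x => (2 * π * √γ)⁻¹ * √(4 - x ^ 2 / γ)) := by
  funext x
  simp only [wd, Set.indicator, Set.mem_Icc, abs_le]

lemma wd_meas (γ : ℝ) : Measurable (wd γ) := by
  rw [wd_eq]
  exact Measurable.indicator (by fun_prop) measurableSet_Icc

lemma wd_integrable (γ : ℝ) : Integrable (wd γ) := by
  rw [wd_eq, integrable_indicator_iff measurableSet_Icc]
  exact (Continuous.continuousOn (by fun_prop)).integrableOn_compact isCompact_Icc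

lemma wsl_def (γ : ℝ) : WSL γ = volume.withDensity fun x => ENNReal.ofReal (wd γ x) := rfl

lemma wsl_finite (γ : ℝ) : IsFiniteMeasure (WSL γ) := by
  rw [wsl_def]
  exact isFiniteMeasure_withDensity_ofReal (wd_integrable γ).2

lemma wsl_int {γ : ℝ} (hγ : 0 < γ) (F : ℝ → ℂ) (hF : Continuous F) :
    ∫ x, F x ∂(WSL γ) = (2 / π : ℂ) * ∫ θ in (0:ℝ)..π, (Real.sin θ : ℂ) ^ 2 * F (2 * √γ * Real.cos θ) := by
  have hs : 0 < √γ := Real.sqrt_pos.2 hγ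
  rw [wsl_def, integral_withDensity_eq_integral_toReal_smul (wd_meas γ).ennreal_ofReal (by simp)]
  simp only [ENNReal.toReal_ofReal (wd_nonneg γ _)]
  have h1 : ∀ x, wd γ x • F x = (Set.Icc (-(2 * √γ)) (2 * √γ)).indicator (fun x => ((2 * π * √γ)⁻¹ * √(4 - x ^ 2 / γ)) • F x) x := by
    intro x
    rw [wd_eq]
    simp only [Set.indicator]
    split_ifs <;> simp
  simp only [h1]
  rw [integral_indicator measurableSet_Icc, integral_Icc_eq_integral_Ioc, ← intervalIntegral.integral_of_le (by linarith)]
  have hc := intervalIntegral.integral_deriv_smul_comp (a := 0) (b := π) (f := fun θ => 2 * √γ * Real.cos θ) (f' := fun θ => 2 * √γ * (-Real.sin θ))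
    (g := fun x => ((2 * π * √γ)⁻¹ * √(4 - x ^ 2 / γ)) • F x) (fun θ _ => (Real.hasDerivAt_cos θ).const_mul _) (by fun_prop)
    (by fun_prop)
  simp only [Real.cos_zero, Real.cos_pi, mul_one, mul_neg] at hc
  rw [intervalIntegral.integral_symm, ← hc, ← intervalIntegral.integral_neg, ← intervalIntegral.integral_const_mul]
  refine intervalIntegral.integral_congr fun θ hθ => ?_
  rw [Set.uIcc_of_le pi_pos.le] at hθ
  have hsin := Real.sin_nonneg_of_mem_Icc hθ
  have e : √(4 - (2 * √γ * Real.cos θ) ^ 2 / γ) = 2 * Real.sin θ := by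
    have : 4 - (2 * √γ * Real.cos θ) ^ 2 / γ = (2 * Real.sin θ) ^ 2 := by
      rw [mul_pow, mul_pow, Real.sq_sqrt hγ.le, mul_pow, Real.sin_sq]
      field_simp; ring
    rw [this, Real.sqrt_sq (by positivity)]
  simp only [Function.comp, e, Complex.real_smul, neg_smul, neg_neg, smul_eq_mul]
  have hp : (π : ℂ) ≠ 0 := by exact_mod_cast pi_ne_zero
  have hs' : ((√γ : ℝ) : ℂ) ≠ 0 := by exact_mod_cast hs.ne'
  push_cast
  field_simp

lemma wsl_mass {γ : ℝ} (hγ : 0 < γ) : ∫ x, (1:ℂ) ∂(WSL γ) = 1 := by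
  rw [wsl_int hγ (fun _ => 1) continuous_const]
  have : ∫ θ in (0:ℝ)..π, (Real.sin θ : ℂ) ^ 2 * 1 = ((∫ θ in (0:ℝ)..π, Real.sin θ ^ 2 : ℝ) : ℂ) := by
    rw [← intervalIntegral.integral_ofReal]
    refine intervalIntegral.integral_congr fun θ _ => ?_
    push_cast; ring
  rw [this, integral_sin_sq]
  have hp : (π : ℂ) ≠ 0 := by exact_mod_cast pi_ne_zero
  simp

lemma poisson_int {q : ℂ} (hq : ‖q‖ < 1) :
    ∫ θ in (0:ℝ)..2 * π, (1 - 2 * q * (Real.cos θ : ℂ) + q ^ 2)⁻¹ = 2 * (π : ℂ) * (1 - q ^ 2)⁻¹ := by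
  have hne : ∀ w : ℂ, ‖w‖ ≤ 1 → 1 - q * w ≠ 0 := by
    intro w hw h
    have : ‖q * w‖ = 1 := by rw [show q * w = 1 by linear_combination -h]; simp
    rw [norm_mul] at this
    nlinarith [norm_nonneg q, norm_nonneg w]
  have hd : DifferentiableOn ℂ (fun w => (1 - q * w)⁻¹) (Metric.closedBall 0 1) := by
    intro w hw
    refine DifferentiableAt.differentiableWithinAt (DifferentiableAt.inv (by fun_prop) (hne w ?_))
    simpa using hw
  have hC := DifferentiableOn.circleIntegral_sub_inv_smul hd (w := q) (by simpa using hq)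
  rw [circleIntegral] at hC
  have hq2 : 1 - q ^ 2 ≠ 0 := by
    have := hne q hq.le
    rwa [← pow_two] at this
  have e : ∀ θ : ℝ, deriv (circleMap 0 1) θ • (circleMap 0 1 θ - q)⁻¹ • (1 - q * circleMap 0 1 θ)⁻¹
      = Complex.I * (1 - 2 * q * (Real.cos θ : ℂ) + q ^ 2)⁻¹ := by
    intro θ
    rw [deriv_circleMap]
    set w := circleMap 0 1 θ with hw
    have hw' : w = Complex.exp (θ * Complex.I) := by rw [hw]; simp [circleMap]
    have hw0 : w ≠ 0 := by rw [hw']; exact Complex.exp_ne_zero _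
    have hwn : ‖w‖ = 1 := by rw [hw', Complex.norm_exp_ofReal_mul_I]
    have h1 := hne w hwn.le
    have h2 : w - q ≠ 0 := by
      intro h
      have : w = q := by linear_combination h
      rw [this] at hwn; linarith
    have hcos : 2 * (Real.cos θ : ℂ) = w + w⁻¹ := by
      rw [Complex.ofReal_cos, Complex.cos, hw', ← Complex.exp_neg, neg_mul]; ring
    have h3 : 1 - 2 * q * (Real.cos θ : ℂ) + q ^ 2 = (w - q) * (1 - q * w) * w⁻¹ := by
      rw [show 2 * q * (Real.cos θ : ℂ) = q * (2 * (Real.cos θ : ℂ)) by ring, hcos]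
      field_simp; ring
    rw [h3]
    have hcm : circleMap 0 1 θ = w := rfl
    simp only [smul_eq_mul, mul_inv, inv_inv]
    ring
  simp only [e] at hC
  rw [intervalIntegral.integral_const_mul] at hC
  have hI := Complex.I_ne_zero
  rw [← pow_two] at hC
  apply mul_left_cancel₀ hI
  rw [hC]
  simp only [smul_eq_mul]
  ring

lemma wsl_q {γ : ℝ} (hγ : 0 < γ) {q z : ℂ} (hq : ‖q‖ < 1) (hq0 : q ≠ 0) (hz : z = √γ * (q + q⁻¹)) (hzi : z.im ≠ 0) :
    ∫ x : ℝ, ((x : ℂ) - z)⁻¹ ∂(WSL γ) = - q / √γ := by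
  have hs : 0 < √γ := Real.sqrt_pos.2 hγ
  have hs' : ((√γ : ℝ) : ℂ) ≠ 0 := by exact_mod_cast hs.ne'
  have hp : (π : ℂ) ≠ 0 := by exact_mod_cast pi_ne_zero
  have hxz : ∀ x : ℝ, (x : ℂ) - z ≠ 0 := by
    intro x h
    have := congrArg Complex.im h
    simp at this
    exact hzi this
  rw [wsl_int hγ (fun x : ℝ => ((x : ℂ) - z)⁻¹) (Continuous.inv₀ (by fun_prop) hxz)]
  have hq2 : 1 - q ^ 2 ≠ 0 := by
    intro h
    have : ‖q ^ 2‖ = 1 := by rw [show q ^ 2 = 1 by linear_combination -h]; simp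
    rw [norm_pow] at this
    nlinarith [norm_nonneg q]
  set D : ℝ → ℂ := fun θ => 1 - 2 * q * (Real.cos θ : ℂ) + q ^ 2 with hD
  have hDz : ∀ θ, ((2 * √γ * Real.cos θ : ℝ) : ℂ) - z = - (√γ / q) * D θ := by
    intro θ
    rw [hz, hD]; push_cast; field_simp; ring
  have hD0 : ∀ θ, D θ ≠ 0 := by
    intro θ h
    have := hxz (2 * √γ * Real.cos θ)
    rw [hDz, h] at this
    simp at this
  have hDc : Continuous D := by rw [hD]; fun_prop
  have hDi : Continuous fun θ => (D θ)⁻¹ := hDc.inv₀ hD0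
  have hP : ∫ θ in (0:ℝ)..π, (D θ)⁻¹ = π * (1 - q ^ 2)⁻¹ := by
    have h2 := poisson_int hq
    have h3 : ∫ θ in (0:ℝ)..2 * π, (D θ)⁻¹ = (∫ θ in (0:ℝ)..π, (D θ)⁻¹) + ∫ θ in (0:ℝ)..π, (D θ)⁻¹ := by
      rw [← intervalIntegral.integral_add_adjacent_intervals (b := π) (hDi.intervalIntegrable _ _) (hDi.intervalIntegrable _ _)]
      congr 1
      have := intervalIntegral.integral_comp_sub_left (a := 0) (b := π) (fun θ => (D θ)⁻¹) (2 * π)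
      rw [show 2 * π - π = π by ring, sub_zero] at this
      rw [← this]
      refine intervalIntegral.integral_congr fun θ _ => ?_
      simp only [hD, Real.cos_two_pi_sub]
    have h4 : ∫ θ in (0:ℝ)..2 * π, (D θ)⁻¹ = 2 * π * (1 - q ^ 2)⁻¹ := h2
    rw [h3] at h4
    linear_combination h4 / 2
  have hcosI : ∫ θ in (0:ℝ)..π, (Real.cos θ : ℂ) = 0 := by
    rw [intervalIntegral.integral_ofReal, integral_cos]; simp
  have hDI : ∫ θ in (0:ℝ)..π, D θ = π * (1 + q ^ 2) := by
    have : ∀ θ, D θ = (1 + q ^ 2) - 2 * q * (Real.cos θ : ℂ) := fun θ => by rw [hD]; ring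
    simp only [this]
    rw [intervalIntegral.integral_sub (by simp) (Continuous.intervalIntegrable (by fun_prop) _ _), intervalIntegral.integral_const_mul, hcosI]
    simp; ring
  have hid : ∀ θ : ℝ, (Real.sin θ : ℂ) ^ 2 * (((2 * √γ * Real.cos θ : ℝ) : ℂ) - z)⁻¹
      = - (q / √γ) * (4 * q ^ 2)⁻¹ * (- (1 - q ^ 2) ^ 2 * (D θ)⁻¹ + (2 * (1 + q ^ 2) - D θ)) := by
    intro θ
    rw [hDz]
    have h1 : (Real.sin θ : ℂ) ^ 2 = 1 - (Real.cos θ : ℂ) ^ 2 := by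
      have := Real.sin_sq θ; exact_mod_cast this
    have h0 := hD0 θ
    have hc : (Real.cos θ : ℂ) = (1 + q ^ 2 - D θ) / (2 * q) := by
      rw [hD]; field_simp; ring
    rw [h1, hc]
    generalize D θ = d at h0 ⊢
    field_simp
    ring
  simp only [hid]
  have hsp : ∫ θ in (0:ℝ)..π, (- (1 - q ^ 2) ^ 2 * (D θ)⁻¹ + (2 * (1 + q ^ 2) - D θ))
      = (∫ θ in (0:ℝ)..π, - (1 - q ^ 2) ^ 2 * (D θ)⁻¹) + ((∫ θ in (0:ℝ)..π, (2 * (1 + q ^ 2))) - ∫ θ in (0:ℝ)..π, D θ) := by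
    rw [← intervalIntegral.integral_sub (by simp) (hDc.intervalIntegrable _ _)]
    exact intervalIntegral.integral_add ((continuous_const.mul hDi).intervalIntegrable _ _)
      ((continuous_const.sub hDc).intervalIntegrable _ _)
  rw [intervalIntegral.integral_const_mul, hsp, intervalIntegral.integral_const_mul, hP, hDI]
  simp only [intervalIntegral.integral_const, sub_zero, Complex.real_smul]
  field_simp
  ring

lemma exists_q (a : ℂ) (ha : a.im ≠ 0) : ∃ q : ℂ, ‖q‖ < 1 ∧ q ≠ 0 ∧ a = q + q⁻¹ := by
  obtain ⟨d, hd⟩ := IsAlgClosed.exists_pow_nat_eq (a ^ 2 - 4) (n := 2) (by norm_num)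
  have key : ∀ q q' : ℂ, q * q' = 1 → a = q + q' → ‖q‖ < 1 ∨ ‖q'‖ < 1 := by
    intro q q' h1 h2
    by_contra hcon
    push Not at hcon
    have hn : ‖q‖ * ‖q'‖ = 1 := by rw [← norm_mul, h1, norm_one]
    have hq1 : ‖q‖ = 1 := by nlinarith [hcon.1, hcon.2]
    have hc : q' = star q := by
      have h3 : q * star q = 1 := by
        rw [Complex.star_def, Complex.mul_conj']; simp [hq1]
      have hq0 : q ≠ 0 := by intro h; simp [h] at h1
      exact mul_left_cancel₀ hq0 (h1.trans h3.symm)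
    apply ha
    rw [h2, hc]; simp
  have hp : (a + d) / 2 * ((a - d) / 2) = 1 := by linear_combination -hd / 4
  have n1 : (a + d) / 2 ≠ 0 := left_ne_zero_of_mul_eq_one hp
  have n2 : (a - d) / 2 ≠ 0 := right_ne_zero_of_mul_eq_one hp
  rcases key _ _ hp (by ring) with h | h
  · exact ⟨_, h, n1, by rw [inv_eq_of_mul_eq_one_right hp]; ring⟩
  · refine ⟨_, h, n2, ?_⟩
    rw [← eq_inv_of_mul_eq_one_left hp]; ring

lemma st_unique {γ : ℝ} (hγ : 0 < γ) {z s : ℂ} (hz : √γ < z.im) (hs : γ * s ^ 2 + z * s + 1 = 0)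
    (hsb : ‖s‖ ≤ z.im⁻¹) : s = ∫ x : ℝ, ((x : ℂ) - z)⁻¹ ∂(WSL γ) := by
  have hg : 0 < √γ := Real.sqrt_pos.2 hγ
  have hg' : ((√γ : ℝ) : ℂ) ≠ 0 := by exact_mod_cast hg.ne'
  have hzi : z.im ≠ 0 := (hg.trans hz).ne'
  obtain ⟨q, hq, hq0, hqa⟩ := exists_q (z / √γ) (by rw [Complex.div_ofReal_im]; positivity)
  have hz' : z = √γ * (q + q⁻¹) := by rw [← hqa]; field_simp
  rw [wsl_q hγ hq hq0 hz' hzi]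
  have hγ' : (γ : ℂ) = (√γ : ℂ) ^ 2 := by
    rw [← Complex.ofReal_pow, Real.sq_sqrt hγ.le]
  have hfac : (√γ * s + q) * (√γ * s + q⁻¹) = 0 := by
    have : (√γ * s + q) * (√γ * s + q⁻¹) = (√γ : ℂ) ^ 2 * s ^ 2 + (√γ * (q + q⁻¹)) * s + q * q⁻¹ := by ring
    rw [this, ← hz', ← hγ', mul_inv_cancel₀ hq0, hs]
  rcases mul_eq_zero.1 hfac with h | h
  · rw [eq_div_iff hg']; linear_combination h
  · exfalso
    have h1 : ‖(√γ : ℂ) * s‖ = ‖q‖⁻¹ := by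
      rw [show (√γ : ℂ) * s = - q⁻¹ by linear_combination h, norm_neg, norm_inv]
    rw [norm_mul, Complex.norm_real, Real.norm_eq_abs, abs_of_pos hg] at h1
    have h2 : 1 < ‖q‖⁻¹ := (one_lt_inv₀ (norm_pos_iff.2 hq0)).2 hq
    have h3 : √γ * ‖s‖ ≤ √γ * z.im⁻¹ := mul_le_mul_of_nonneg_left hsb hg.le
    have h4 : √γ * z.im⁻¹ < 1 := by
      rw [← div_eq_mul_inv, div_lt_one (hg.trans hz)]; exact hz
    linarith

lemma inv_bd (x : ℝ) {z : ℂ} (hz : z.im ≠ 0) : ‖((x : ℂ) - z)⁻¹‖ ≤ |z.im|⁻¹ := by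
  rw [norm_inv]
  refine inv_anti₀ (abs_pos.2 hz) ?_
  have := Complex.abs_im_le_norm ((x : ℂ) - z)
  simpa using this

lemma sub_ne {z : ℂ} (hz : z.im ≠ 0) (x : ℝ) : (x : ℂ) - z ≠ 0 := by
  intro h
  have := congrArg Complex.im h
  simp at this
  exact hz this

/-- resolvent functions as bounded continuous functions -/
def rz (z : ℂ) (hz : z.im ≠ 0) : BoundedContinuousFunction ℝ ℂ :=
  BoundedContinuousFunction.ofNormedAddCommGroup (fun x : ℝ => ((x : ℂ) - z)⁻¹)
    (Continuous.inv₀ (by fun_prop) (sub_ne hz)) |z.im|⁻¹ (fun x => inv_bd x hz)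

lemma rz_apply (z : ℂ) (hz : z.im ≠ 0) (x : ℝ) : rz z hz x = ((x : ℂ) - z)⁻¹ := rfl

lemma rz_sub (z w : ℂ) (hz : z.im ≠ 0) (hw : w.im ≠ 0) : rz z hz - rz w hw = (z - w) • (rz z hz * rz w hw) := by
  ext x
  have h1 := sub_ne hz x
  have h2 := sub_ne hw x
  simp only [BoundedContinuousFunction.coe_sub, Pi.sub_apply, rz_apply, BoundedContinuousFunction.coe_smul, BoundedContinuousFunction.coe_mul, Pi.mul_apply, smul_eq_mul]
  field_simp
  ring

theorem stieltjes_unique (μ ν : Measure ℝ) [IsFiniteMeasure μ] [IsFiniteMeasure ν] (K : ℝ) (hK : 0 < K)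
    (h1 : ∫ x, (1:ℂ) ∂μ = ∫ x, (1:ℂ) ∂ν)
    (h : ∀ z : ℂ, K < z.im → ∫ x : ℝ, ((x : ℂ) - z)⁻¹ ∂μ = ∫ x : ℝ, ((x : ℂ) - z)⁻¹ ∂ν) : μ = ν := by
  have hS : ∀ {z : ℂ}, K < |z.im| → z.im ≠ 0 := fun hz h0 => by rw [h0, abs_zero] at hz; linarith
  have h' : ∀ z : ℂ, K < |z.im| → ∫ x : ℝ, ((x : ℂ) - z)⁻¹ ∂μ = ∫ x : ℝ, ((x : ℂ) - z)⁻¹ ∂ν := by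
    intro z hz
    rcases lt_abs.1 hz with hz | hz
    · exact h z hz
    · have h2 := congrArg (starRingEnd ℂ) (h (starRingEnd ℂ z) (by simpa using hz))
      rw [← integral_conj, ← integral_conj] at h2
      simpa using h2
  let V : Submodule ℂ (BoundedContinuousFunction ℝ ℂ) :=
    Submodule.span ℂ ({1} ∪ {f | ∃ z, ∃ hz : K < |z.im|, f = rz z (hS hz)})
  let W := V.topologicalClosure
  have hWc : IsClosed (W : Set (BoundedContinuousFunction ℝ ℂ)) := V.isClosed_topologicalClosure
  have h1W : (1 : BoundedContinuousFunction ℝ ℂ) ∈ W := V.le_topologicalClosure (Submodule.subset_span (Or.inl rfl))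
  have hrW : ∀ z (hz : K < |z.im|), rz z (hS hz) ∈ W := fun z hz => V.le_topologicalClosure (Submodule.subset_span (Or.inr ⟨z, hz, rfl⟩))
  have hind : ∀ (U : Submodule ℂ (BoundedContinuousFunction ℝ ℂ)), IsClosed (U : Set (BoundedContinuousFunction ℝ ℂ)) →
      1 ∈ U → (∀ z (hz : K < |z.im|), rz z (hS hz) ∈ U) → W ≤ U := by
    intro U hU hU1 hUr
    refine V.topologicalClosure_minimal (Submodule.span_le.2 ?_) hU
    rintro f (rfl | ⟨z, hz, rfl⟩)
    · exact hU1
    · exact hUr z hz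
  -- products of two generators
  have hne : ∀ z w (hz : K < |z.im|) (hw : K < |w.im|), z ≠ w → rz z (hS hz) * rz w (hS hw) ∈ W := by
    intro z w hz hw hzw
    have : rz z (hS hz) * rz w (hS hw) = (z - w)⁻¹ • (rz z (hS hz) - rz w (hS hw)) := by
      rw [rz_sub, smul_smul, inv_mul_cancel₀ (sub_ne_zero.2 hzw), one_smul]
    rw [this]
    exact W.smul_mem _ (W.sub_mem (hrW z hz) (hrW w hw))
  have hsq : ∀ w (hw : K < |w.im|), rz w (hS hw) * rz w (hS hw) ∈ W := by
    intro w hw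
    have hadd : ∀ n : ℕ, K < |(w + (((n:ℝ) + 1)⁻¹ : ℝ)).im| := by intro n; simpa using hw
    have hlim : Tendsto (fun n : ℕ => rz (w + (((n:ℝ) + 1)⁻¹ : ℝ)) (hS (hadd n))) atTop (nhds (rz w (hS hw))) := by
      rw [tendsto_iff_norm_sub_tendsto_zero]
      have h0 : Tendsto (fun n : ℕ => ((n:ℝ) + 1)⁻¹ * (K⁻¹ * K⁻¹)) atTop (nhds 0) := by
        have := (tendsto_one_div_add_atTop_nhds_zero_nat (𝕜 := ℝ)).mul_const (K⁻¹ * K⁻¹)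
        simpa using this
      refine squeeze_zero (fun _ => norm_nonneg _) (fun n => ?_) h0
      rw [rz_sub, add_sub_cancel_left, norm_smul, Complex.norm_real, Real.norm_eq_abs, abs_of_nonneg (by positivity)]
      have hb : ∀ z (hz : K < |z.im|), ‖rz z (hS hz)‖ ≤ K⁻¹ := by
        intro z hz
        refine (BoundedContinuousFunction.norm_le (by positivity)).2 fun x => ?_
        exact (inv_bd x (hS hz)).trans (inv_anti₀ hK hz.le)
      refine mul_le_mul_of_nonneg_left ((norm_mul_le _ _).trans ?_) (by positivity)
      exact mul_le_mul (hb _ (hadd n)) (hb _ hw) (norm_nonneg _) (by positivity)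
    refine hWc.mem_of_tendsto (hlim.mul_const (rz w (hS hw))) (Eventually.of_forall fun n => hne _ _ (hadd n) hw ?_)
    intro h
    have h2 : (((n:ℝ) + 1)⁻¹ : ℝ) = 0 := by
      have : ((((n:ℝ) + 1)⁻¹ : ℝ) : ℂ) = 0 := by linear_combination h
      exact_mod_cast this
    have : (0:ℝ) < ((n:ℝ) + 1)⁻¹ := by positivity
    linarith
  have hgen : ∀ z w (hz : K < |z.im|) (hw : K < |w.im|), rz z (hS hz) * rz w (hS hw) ∈ W := by
    intro z w hz hw
    by_cases hzw : z = w
    · subst hzw; exact hsq z hz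
    · exact hne z w hz hw hzw
  have hm1 : ∀ f ∈ W, ∀ w (hw : K < |w.im|), f * rz w (hS hw) ∈ W := by
    intro f hf w hw
    refine hind (W.comap (LinearMap.mulRight ℂ (rz w (hS hw)))) ?_ ?_ ?_ hf
    · exact hWc.preimage (continuous_id.mul continuous_const)
    · show 1 * rz w (hS hw) ∈ W
      rw [one_mul]; exact hrW w hw
    · intro z hz
      exact hgen z w hz hw
  have hm : ∀ f ∈ W, ∀ g ∈ W, f * g ∈ W := by
    intro f hf g hg
    refine hind (W.comap (LinearMap.mulLeft ℂ f)) ?_ ?_ ?_ hg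
    · exact hWc.preimage (continuous_const.mul continuous_id)
    · show f * 1 ∈ W
      rw [mul_one]; exact hf
    · intro z hz
      exact hm1 f hf z hz
  have hst : ∀ f ∈ W, star f ∈ W := by
    intro f hf
    let U : Submodule ℂ (BoundedContinuousFunction ℝ ℂ) :=
      { carrier := {f | star f ∈ W}
        add_mem' := fun {a b} ha hb => by
          show star (a + b) ∈ W
          rw [star_add]; exact W.add_mem ha hb
        zero_mem' := by
          show star 0 ∈ W
          rw [star_zero]; exact W.zero_mem
        smul_mem' := fun c a ha => by
          show star (c • a) ∈ W
          rw [star_smul]; exact W.smul_mem _ ha }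
    refine hind U ?_ ?_ ?_ hf
    · exact hWc.preimage continuous_star
    · show star 1 ∈ W
      rw [star_one]; exact h1W
    · intro z hz
      show star (rz z (hS hz)) ∈ W
      have hz' : K < |(star z).im| := by simpa using hz
      have : star (rz z (hS hz)) = rz (star z) (hS hz') := by
        ext x
        simp [rz_apply]
      rw [this]; exact hrW _ hz'
  let A : StarSubalgebra ℂ (BoundedContinuousFunction ℝ ℂ) :=
    { carrier := W
      mul_mem' := fun {a b} ha hb => hm a ha b hb
      add_mem' := fun {a b} ha hb => W.add_mem ha hb
      algebraMap_mem' := fun c => by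
        show algebraMap ℂ (BoundedContinuousFunction ℝ ℂ) c ∈ W
        rw [Algebra.algebraMap_eq_smul_one]; exact W.smul_mem _ h1W
      star_mem' := fun {a} ha => hst a ha }
  refine ext_of_forall_mem_subalgebra_integral_eq_of_pseudoEMetric_complete_countable (A := A) (𝕜 := ℂ) ?_ ?_
  · intro x y hxy
    have hz : K < |(((K + 1 : ℝ) : ℂ) * Complex.I).im| := by
      simp only [Complex.mul_I_im, Complex.ofReal_re]
      rw [abs_of_pos (by linarith)]; linarith
    refine ⟨_, ⟨_, ⟨rz _ (hS hz), hrW _ hz, rfl⟩, rfl⟩, ?_⟩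
    intro hcon
    have h2 : ((x:ℂ) - ((K + 1 : ℝ) : ℂ) * Complex.I)⁻¹ = ((y:ℂ) - ((K + 1 : ℝ) : ℂ) * Complex.I)⁻¹ := hcon
    rw [inv_inj, sub_left_inj] at h2
    exact hxy (by exact_mod_cast h2)
  · intro g hg
    have hi : ∀ (ρ : Measure ℝ) [IsFiniteMeasure ρ] (f : BoundedContinuousFunction ℝ ℂ), Integrable f ρ := fun ρ _ f => f.integrable ρ
    let U : Submodule ℂ (BoundedContinuousFunction ℝ ℂ) :=
      { carrier := {f | ∫ x, f x ∂μ = ∫ x, f x ∂ν}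
        add_mem' := fun {a b} ha hb => by
          show ∫ x, (a + b) x ∂μ = ∫ x, (a + b) x ∂ν
          simp only [BoundedContinuousFunction.coe_add, Pi.add_apply]
          rw [integral_add (hi μ a) (hi μ b), integral_add (hi ν a) (hi ν b), ha, hb]
        zero_mem' := by simp
        smul_mem' := fun c a ha => by
          show ∫ x, (c • a) x ∂μ = ∫ x, (c • a) x ∂ν
          simp only [BoundedContinuousFunction.coe_smul]
          rw [integral_smul, integral_smul, ha] }
    have hcont : ∀ (ρ : Measure ℝ) [IsFiniteMeasure ρ], Continuous fun f : BoundedContinuousFunction ℝ ℂ => ∫ x, f x ∂ρ := by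
      intro ρ _
      refine LipschitzWith.continuous (K := ⟨ρ.real Set.univ, measureReal_nonneg⟩) (LipschitzWith.of_dist_le_mul fun f f' => ?_)
      rw [dist_eq_norm, ← integral_sub (hi ρ f) (hi ρ f')]
      refine (norm_integral_le_of_norm_le_const (C := dist f f') (ae_of_all _ fun x => ?_)).trans (le_of_eq ?_)
      · rw [← dist_eq_norm]; exact BoundedContinuousFunction.dist_coe_le_dist x
      · rw [mul_comm]; rfl
    refine hind U ?_ ?_ ?_ hg
    · exact isClosed_eq (hcont μ) (hcont ν)
    · exact h1
    · intro z hz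
      exact h' z hz

lemma tu_zero {N : ℕ} {A : Matrix (Fin N) (Fin N) ℝ} (hA : A.IsHermitian) {z : ℂ} (hz : 0 < z.im) :
    Tu (Res z A) 0 = (N : ℂ)⁻¹ * ∑ j, ((hA.eigenvalues j : ℂ) - z)⁻¹ := by
  rw [Tu, ← res_trace hA hz]
  congr 1
  refine Finset.sum_congr rfl fun j _ => ?_
  rw [Finset.sum_eq_single j]
  · simp [df]
  · intro b _ hb
    rw [if_neg]
    intro h
    exact hb (df_inj_right (h.trans (by simp [df] : (0:ℤ) = df j j)))
  · simp

lemma tu_re {N : ℕ} {A : Matrix (Fin N) (Fin N) ℝ} (hA : A.IsHermitian) {z : ℂ} (hz : 0 < z.im) :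
    (Tu (Res z A) 0).re = esdEval A (fun x => (((x:ℂ) - z)⁻¹).re) := by
  rw [tu_zero hA hz, esdEval, dif_pos hA]
  rw [show (N:ℂ)⁻¹ = (((N:ℝ)⁻¹ : ℝ) : ℂ) by simp, Complex.re_ofReal_mul, Complex.re_sum]

lemma tu_im {N : ℕ} {A : Matrix (Fin N) (Fin N) ℝ} (hA : A.IsHermitian) {z : ℂ} (hz : 0 < z.im) :
    (Tu (Res z A) 0).im = esdEval A (fun x => (((x:ℂ) - z)⁻¹).im) := by
  rw [tu_zero hA hz, esdEval, dif_pos hA]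
  rw [show (N:ℂ)⁻¹ = (((N:ℝ)⁻¹ : ℝ) : ℂ) by simp, Complex.im_ofReal_mul, Complex.im_sum]

lemma scaledW_herm {Ω : Type} (X : ℤ → ℤ → Ω → ℝ) (N : ℕ) (ω : Ω) : (scaledW X N ω).IsHermitian := by
  ext i j
  simpa using scaledW_symm X N ω j i

lemma rz_int (μ : Measure ℝ) [IsFiniteMeasure μ] {z : ℂ} (hz : z.im ≠ 0) :
    Integrable (fun x : ℝ => ((x:ℂ) - z)⁻¹) μ :=
  (rz z hz).integrable μ

lemma tu_meas {Ω : Type} [MeasurableSpace Ω] (P : Measure Ω) [IsProbabilityMeasure P]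
    (X : ℤ → ℤ → Ω → ℝ) (hX : StatGauss P X) (μf : Measure ℝ) [IsProbabilityMeasure μf]
    (hconv : ESDTendstoInProb P (scaledW X) μf) {z : ℂ} (hz : 0 < z.im) :
    TendstoInMeasure P (fun N ω => Tu (Res z (scaledW X N ω)) 0) atTop
      (fun _ => ∫ x : ℝ, ((x:ℂ) - z)⁻¹ ∂μf) := by
  rw [tendstoInMeasure_iff_norm]
  intro ε hε
  have hint := rz_int μf hz.ne'
  have hcont : Continuous (fun x : ℝ => ((x:ℂ) - z)⁻¹) := (rz z hz.ne').continuous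
  have h1 := hconv (fun x => (((x:ℂ) - z)⁻¹).re) (Complex.continuous_re.comp hcont)
    ⟨|z.im|⁻¹, fun x => (Complex.abs_re_le_norm _).trans (inv_bd x hz.ne')⟩ (ε/2) (by positivity)
  have h2 := hconv (fun x => (((x:ℂ) - z)⁻¹).im) (Complex.continuous_im.comp hcont)
    ⟨|z.im|⁻¹, fun x => (Complex.abs_im_le_norm _).trans (inv_bd x hz.ne')⟩ (ε/2) (by positivity)
  have h3 := h1.add h2
  rw [add_zero] at h3
  refine tendsto_of_tendsto_of_tendsto_of_le_of_le tendsto_const_nhds h3 (fun _ => bot_le) fun N => ?_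
  refine (measure_mono ?_).trans (measure_union_le _ _)
  intro ω hω
  simp only [Set.mem_setOf_eq, Set.mem_union] at hω ⊢
  rw [← tu_re (scaledW_herm X N ω) hz, ← tu_im (scaledW_herm X N ω) hz]
  have e1 : ∫ x : ℝ, (((x:ℂ) - z)⁻¹).re ∂μf = (∫ x : ℝ, ((x:ℂ) - z)⁻¹ ∂μf).re := integral_re hint
  have e2 : ∫ x : ℝ, (((x:ℂ) - z)⁻¹).im ∂μf = (∫ x : ℝ, ((x:ℂ) - z)⁻¹ ∂μf).im := integral_im hint
  rw [e1, e2, ← Complex.sub_re, ← Complex.sub_im]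
  by_contra! hcon
  have := Complex.norm_le_abs_re_add_abs_im (Tu (Res z (scaledW X N ω)) 0 - ∫ x : ℝ, ((x:ℂ) - z)⁻¹ ∂μf)
  linarith [hcon.1, hcon.2]

lemma s_eq {Ω : Type} [MeasurableSpace Ω] (P : Measure Ω) [IsProbabilityMeasure P]
    (X : ℤ → ℤ → Ω → ℝ) (hX : StatGauss P X) (μf : Measure ℝ) [IsProbabilityMeasure μf]
    (hconv : ESDTendstoInProb P (scaledW X) μf) (c : ℤ → ℝ)
    (hcov : ∀ j k l m : ℤ, ∫ ω, X j k ω * X l m ω ∂P = if l - j = m - k then c (l - j) else 0)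
    (hc0 : 0 < c 0) (hcb : ∀ u, |c u| ≤ c 0) (hc : Tendsto c cofinite (nhds 0))
    {z : ℂ} (hz : 0 < z.im) (hz2 : 4 * c 0 * z.im⁻¹ < z.im) (s : ℂ) (hs : s = ∫ x : ℝ, ((x:ℂ) - z)⁻¹ ∂μf) :
    star s * (1 + z * s + 2 * c 0 * s ^ 2) = 0 := by
  obtain ⟨ns, hns, hae⟩ := (tu_meas P X hX μf hconv hz).exists_seq_tendsto_ae
  rw [← hs] at hae
  have h1 := (s_lim P X hX c hcov hc0 hcb hc hz hz2).comp hns.tendsto_atTop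
  have h2 : Tendsto (fun n => ∫ ω, star (Tu (Res z (scaledW X (ns n) ω)) 0) * (1 + z * Tu (Res z (scaledW X (ns n) ω)) 0
      + 2 * c 0 * Tu (Res z (scaledW X (ns n) ω)) 0 ^ 2) ∂P) atTop (nhds (∫ ω, star s * (1 + z * s + 2 * c 0 * s ^ 2) ∂P)) := by
    have hb : ∀ N (y : Fin N × Fin N → ℝ), ‖star (Tu (Res z (Mx y)) 0) * (1 + z * Tu (Res z (Mx y)) 0
      + 2 * c 0 * Tu (Res z (Mx y)) 0 ^ 2)‖ ≤ (z.im⁻¹ * (1 + ‖z‖ * z.im⁻¹ + 2 * c 0 * z.im⁻¹ ^ 2)) := by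
      intro N y
      have h := goodG_res (Mx_symm y) hz
      have ht := h.tu 0
      rw [norm_mul, norm_star]
      refine mul_le_mul ht ?_ (norm_nonneg _) h.pos
      refine (norm_add₃_le).trans ?_
      rw [norm_mul, norm_mul, norm_mul, Complex.norm_ofNat, norm_pow, Complex.norm_real, Real.norm_eq_abs, abs_of_pos hc0, norm_one]
      gcongr
    refine tendsto_integral_of_dominated_convergence (fun _ => z.im⁻¹ * (1 + ‖z‖ * z.im⁻¹ + 2 * c 0 * z.im⁻¹ ^ 2)) ?_ (integrable_const _) ?_ ?_
    · intro n
      refine (bdd_int P X hX (ns n) (fun y => star (Tu (Res z (Mx y)) 0) * (1 + z * Tu (Res z (Mx y)) 0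
      + 2 * c 0 * Tu (Res z (Mx y)) 0 ^ 2)) ?_ _ (hb (ns n))).aestronglyMeasurable
      have := tu_cont _ (Mx_res_cont (N := ns n) hz) 0
      fun_prop
    · intro n
      exact ae_of_all _ fun ω => hb (ns n) (fun q => X ((q.1 : ℕ) + 1) ((q.2 : ℕ) + 1) ω)
    · filter_upwards [hae] with ω hω
      have hcont : Continuous (fun t : ℂ => star t * (1 + z * t + 2 * c 0 * t ^ 2)) := by fun_prop
      exact (hcont.tendsto s).comp hω
  have := tendsto_nhds_unique h2 h1
  simpa using this

lemma s_pos (μf : Measure ℝ) [IsProbabilityMeasure μf] {z : ℂ} (hz : 0 < z.im) : ∫ x : ℝ, ((x:ℂ) - z)⁻¹ ∂μf ≠ 0 := by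
  intro h
  have hint := rz_int μf hz.ne'
  have e2 : ∫ x : ℝ, (((x:ℂ) - z)⁻¹).im ∂μf = (∫ x : ℝ, ((x:ℂ) - z)⁻¹ ∂μf).im := integral_im hint
  rw [h, Complex.zero_im] at e2
  have hp : ∀ x : ℝ, 0 < (((x:ℂ) - z)⁻¹).im := by
    intro x
    rw [Complex.inv_im]
    have := Complex.normSq_pos.2 (sub_ne hz.ne' x)
    have h3 : -((x:ℂ) - z).im = z.im := by simp
    rw [h3]; positivity
  have := (integral_pos_iff_support_of_nonneg (fun x => (hp x).le) hint.im).2 (by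
    have : Function.support (fun x : ℝ => (((x:ℂ) - z)⁻¹).im) = Set.univ := by
      ext x; simpa using (hp x).ne'
    change 0 < μf (Function.support (fun x : ℝ => (((x:ℂ) - z)⁻¹).im))
    rw [this]; simp)
  exact this.ne' e2

theorem mu_eq {Ω : Type} [MeasurableSpace Ω] (P : Measure Ω) [IsProbabilityMeasure P]
    (X : ℤ → ℤ → Ω → ℝ) (hX : StatGauss P X) (μf : Measure ℝ) [IsProbabilityMeasure μf]
    (hconv : ESDTendstoInProb P (scaledW X) μf) (c : ℤ → ℝ)
    (hcov : ∀ j k l m : ℤ, ∫ ω, X j k ω * X l m ω ∂P = if l - j = m - k then c (l - j) else 0)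
    (hc0 : 0 < c 0) (hcb : ∀ u, |c u| ≤ c 0) (hc : Tendsto c cofinite (nhds 0)) :
    μf = WSL (2 * c 0) := by
  haveI := wsl_finite (2 * c 0)
  have hγ : 0 < 2 * c 0 := by positivity
  refine stieltjes_unique _ _ (2 * √(c 0)) (by positivity) ?_ fun z hz => ?_
  · rw [wsl_mass hγ]; simp
  have hsq := Real.sq_sqrt hc0.le
  have hsp := Real.sqrt_pos.2 hc0
  have hzp : 0 < z.im := by linarith
  have hz2 : 4 * c 0 * z.im⁻¹ < z.im := by
    rw [← div_eq_mul_inv, div_lt_iff₀ hzp]; nlinarith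
  have hg : √(2 * c 0) < z.im := by
    rw [Real.sqrt_lt' hzp]; nlinarith
  have h := s_eq P X hX μf hconv c hcov hc0 hcb hc hzp hz2 _ rfl
  have hn := s_pos μf hzp
  refine st_unique hγ hg ?_ ?_
  · rcases mul_eq_zero.1 h with h | h
    · exact absurd (star_eq_zero.1 h) hn
    · push_cast; linear_combination h
  · refine (norm_integral_le_of_norm_le (integrable_const |z.im|⁻¹) (ae_of_all _ fun x => inv_bd x hzp.ne')).trans ?_
    simp [abs_of_pos hzp]

lemma inv_lint : ∫⁻ t in Set.Ioc (0:ℝ) 1, ENNReal.ofReal (t⁻¹) = ⊤ := by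
  by_contra hcon
  have hI : IntegrableOn (fun t : ℝ => t⁻¹) (Set.Ioc 0 1) := by
    refine ⟨measurable_inv.aestronglyMeasurable, ?_⟩
    rw [hasFiniteIntegral_iff_norm]
    refine lt_of_le_of_lt (le_of_eq ?_) (lt_top_iff_ne_top.2 hcon)
    refine setLIntegral_congr_fun measurableSet_Ioc fun t ht => ?_
    rw [Real.norm_eq_abs, abs_of_pos (inv_pos.2 ht.1)]
  have h2 : IntervalIntegrable (fun t : ℝ => t⁻¹) volume 0 1 := by
    rwa [intervalIntegrable_iff_integrableOn_Ioc_of_le zero_le_one]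
  rw [intervalIntegrable_inv_iff] at h2
  rcases h2 with h | h
  · norm_num at h
  · exact h (by simp)

lemma snd_part (h : ℝ → ℝ) (hper : ∀ z : ℝ, h (z + 2 * π) = h z)
    (hval : ∀ z ∈ Set.Ioc (-π) π, z ≠ 0 → h z = |z| ^ (-(1 / 2 : ℝ))) :
    ∫⁻ q in specBox, (ENNReal.ofReal ((2 * π)⁻¹ * h (q.1 + q.2))) ^ 2 = ⊤ := by
  have hm : Measurable h := h_meas h hper hval
  have hπ := Real.pi_gt_three
  have hf : Measurable (fun q : ℝ × ℝ => (ENNReal.ofReal ((2 * π)⁻¹ * h (q.1 + q.2))) ^ 2) := by fun_prop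
  rw [eq_top_iff]
  have hsub : Set.Ioc (0:ℝ) 1 ×ˢ Set.Ioc (-π) π ⊆ specBox := by
    refine Set.prod_mono (Set.Ioc_subset_Ioc (by linarith) (by linarith)) le_rfl
  refine le_trans ?_ (lintegral_mono_set hsub)
  rw [Measure.volume_eq_prod, ← Measure.prod_restrict, lintegral_prod _ hf.aemeasurable]
  have hin : ∀ x ∈ Set.Ioc (0:ℝ) 1, ∫⁻ y in Set.Ioc (-π) π, (ENNReal.ofReal ((2 * π)⁻¹ * h (x + y))) ^ 2 = ⊤ := by
    intro x hx
    rw [eq_top_iff]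
    have hs2 : Set.Ioc (0 - x) (1 - x) ⊆ Set.Ioc (-π) π := Set.Ioc_subset_Ioc (by linarith [hx.2]) (by linarith [hx.1])
    refine le_trans ?_ (lintegral_mono_set hs2)
    have e : ∫⁻ y in Set.Ioc (0 - x) (1 - x), (ENNReal.ofReal ((2 * π)⁻¹ * h (x + y))) ^ 2
        = ∫⁻ t in Set.Ioc (0:ℝ) 1, (ENNReal.ofReal ((2 * π)⁻¹ * h t)) ^ 2 := by
      have hmp := measurePreserving_add_left (volume : Measure ℝ) x
      have h3 := hmp.setLIntegral_comp_preimage (s := Set.Ioc (0:ℝ) 1) measurableSet_Ioc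
        (f := fun t => (ENNReal.ofReal ((2 * π)⁻¹ * h t)) ^ 2) (by fun_prop)
      rw [← h3]
      simp
    rw [e]
    have e2 : ∫⁻ t in Set.Ioc (0:ℝ) 1, (ENNReal.ofReal ((2 * π)⁻¹ * h t)) ^ 2
        = ∫⁻ t in Set.Ioc (0:ℝ) 1, ENNReal.ofReal (((2 * π)⁻¹) ^ 2) * ENNReal.ofReal (t⁻¹) := by
      refine setLIntegral_congr_fun measurableSet_Ioc fun t ht => ?_
      have ht0 := ht.1
      rw [hval t ⟨by linarith, by linarith [ht.2]⟩ ht0.ne', abs_of_pos ht0]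
      rw [← ENNReal.ofReal_pow (by positivity), ← ENNReal.ofReal_mul (by positivity), mul_pow,
        ← Real.rpow_natCast (t ^ _), ← Real.rpow_mul ht0.le]
      congr 2
      rw [← Real.rpow_neg_one]; norm_num
    rw [e2, lintegral_const_mul _ (by fun_prop), inv_lint, ENNReal.mul_top]
    rw [Ne, ENNReal.ofReal_eq_zero, not_le]; positivity
  rw [setLIntegral_congr_fun measurableSet_Ioc hin]
  simp
/-- **Example 4.3.** For the density `f(x,y) = (2π)⁻¹ h(x+y)` with `h`
`2π`-periodic and `h(z) = |z|^{-1/2}` on `(-π,π] \ {0}`, the limiting spectral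
distribution is `WSL(8√π)`, while `‖f‖₂ = ∞`. -/
theorem statement17 {Ω : Type} [MeasurableSpace Ω] (P : Measure Ω)
    [IsProbabilityMeasure P] (X : ℤ → ℤ → Ω → ℝ) (h : ℝ → ℝ)
    (hper : ∀ z : ℝ, h (z + 2 * π) = h z)
    (hval : ∀ z ∈ Set.Ioc (-π) π, z ≠ 0 → h z = |z| ^ (-(1 / 2 : ℝ)))
    (hh_nonneg : ∀ z, 0 ≤ h z)
    (hX : StatGauss P X)
    (hXf : HasSpecDensity P X (fun q => (2 * π)⁻¹ * h (q.1 + q.2)))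
    (μf : Measure ℝ) (hμf : IsProbabilityMeasure μf)
    (hconv : ESDTendstoInProb P (scaledW X) μf) :
    μf = WSL (8 * Real.sqrt π) ∧
    ∫⁻ q in specBox,
      (ENNReal.ofReal ((2 * π)⁻¹ * h (q.1 + q.2))) ^ 2 = ⊤ := by
  obtain ⟨c, hc0, hcb, hc, hcov⟩ := cov_main P X h hper hval hX hXf
  have hπ := Real.sqrt_pos.2 Real.pi_pos
  refine ⟨?_, snd_part h hper hval⟩
  have := mu_eq P X hX μf hconv c hcov (by rw [hc0]; positivity) hcb hc
  rw [this, hc0]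
  congr 1
  ring

end
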